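/- arXiv:1106.0722 — 5 statements merged into one kernel-verified Lean document; each statement's English description precedes it below -/
import Mathlib

section
/- There exists a constant c > 0, depending only on d, with the following property: let E, E* ⊆ ℝ^d be Lebesgue measurable sets of positive finite measure with 𝒯(E, E*) > 0, and set α = 𝒯(E, E*)/|E| and α* = 𝒯(E, E*)/|E*|. Then there exist a point x̄ ∈ E, a Lebesgue measurable set Ω₁ ⊆ ℝ^{d−1}, and a Lebesgue measurable set Ω ⊆ Ω₁ × ℝ^{d−1} such that: |Ω₁| = c α; x̄ − (s, |s|²) ∈ E* for each s ∈ Ω₁; |{t : (s, t) ∈ Ω}| = c α* for each s ∈ Ω₁; and x̄ − (s, |s|²) + (t, |t|²) ∈ E for each (s, t) ∈ Ω. -/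
open MeasureTheory ENNReal

noncomputable section

/-- `ℝ^{d-1}` -/
abbrev Vec (n : ℕ) : Type := EuclideanSpace ℝ (Fin n)

/-- `ℝ^d = ℝ^{d-1} × ℝ`, a point `x = (x', x_d)` -/
abbrev Pt (n : ℕ) : Type := Vec n × ℝ

/-- The Radon-like transform `Tf(x) = ∫_{ℝ^{d-1}} f(x' - t, x_d - |t|²) dt`. -/
def radonT (n : ℕ) (f : Pt n → ℝ≥0∞) (x : Pt n) : ℝ≥0∞ :=
  ∫⁻ t : Vec n, f (x.1 - t, x.2 - ‖t‖ ^ 2)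

/-- The incidence functional `𝒯(E, E*) = ∫_E T(χ_{E*})`. -/
def incT (n : ℕ) (E Estar : Set (Pt n)) : ℝ≥0∞ :=
  ∫⁻ x in E, radonT n (Estar.indicator 1) x

/-!
For `y ∈ ℝ^d` put `F_y = {t ∈ ℝ^{d-1} | y + (t, |t|²) ∈ E}`. By Fubini `𝒯(E, E*)` is the integral
of `|F_y|` over `E*`, and that of `|{s | x - (s, |s|²) ∈ E*}|` over `E`. Discarding the `y ∈ E*`
with `|F_y| ≤ α*/4`, and averaging over `E` what remains, gives a point `x̄` whose fibre into the
rich part of `E*` has measure more than `α/4`. Cutting off all fibres by balls around the origin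
yields the exact measures and keeps `Ω` measurable.

The averaging only makes sense if `𝒯(E, E*)` is finite, which is the substantial point when `E`
and `E*` are unbounded. Choosing, among `n + 1` points of a set `F ⊆ ℝ^n`, the `n` that span the
largest volume, Cramer's rule puts the last point in a parallelepiped of measure `2^n |det|`, so
`|F|^{n+1} ≲ ∫_{F^n} |det w| dw`. Applied to the translates of `F_y`, this bounds
`∫ |F_y|^{n+2} dy` by a multilinear expression in `χ_E` in which `|det w|` is the Jacobian of
the affine change of variables `s ↦ (2⟨w_k, s⟩ + |w_k|²)_k`; hence it is `≲ |E|^{n+1}`.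
-/

section Incidence

variable {G V : Type*} [AddGroup G] [MeasurableSpace G] [MeasurableSpace V]
  {μ : Measure G} {ν : Measure V} {γ : V → G} {E S : Set G}

/-- The parameters `t` at which the translate `y + γ` of the curve or surface `γ` meets `E`. -/
def addFiber (γ : V → G) (E : Set G) (y : G) : Set V := {t | y + γ t ∈ E}

/-- The parameters `t` at which the reflected translate `x - γ` meets `S`. If `γ` is the paraboloid,
the Radon-like transform of the indicator of `S` is the measure of this set as a function of `x`. -/
def subFiber (γ : V → G) (S : Set G) (x : G) : Set V := {t | x - γ t ∈ S}

theorem measurableSet_subFiber [MeasurableSub₂ G] (hγ : Measurable γ) (hS : MeasurableSet S)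
    (x : G) : MeasurableSet (subFiber γ S x) :=
  measurable_const.sub hγ hS

variable [MeasurableAdd₂ G]

theorem measurableSet_addFiber (hγ : Measurable γ) (hE : MeasurableSet E) (y : G) :
    MeasurableSet (addFiber γ E y) :=
  measurable_const.add hγ hE

theorem measurable_measure_addFiber [SFinite ν] (hγ : Measurable γ) (hE : MeasurableSet E) :
    Measurable fun y => ν (addFiber γ E y) :=
  measurable_measure_prodMk_left ((by fun_prop : Measurable fun p : G × V => p.1 + γ p.2) hE)

theorem lintegral_lintegral_add_comp [SFinite μ] [SFinite ν] [μ.IsAddRightInvariant]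
    (hγ : Measurable γ) {K : G × V → ℝ≥0∞} (hK : Measurable K) :
    ∫⁻ y, ∫⁻ t, K (y + γ t, t) ∂ν ∂μ = ∫⁻ x, ∫⁻ t, K (x, t) ∂ν ∂μ := by
  have hshear : Measurable fun p : G × V => K (p.1 + γ p.2, p.2) := hK.comp (by fun_prop)
  calc ∫⁻ y, ∫⁻ t, K (y + γ t, t) ∂ν ∂μ
      = ∫⁻ t, ∫⁻ y, K (y + γ t, t) ∂μ ∂ν := lintegral_lintegral_swap hshear.aemeasurable
    _ = ∫⁻ t, ∫⁻ x, K (x, t) ∂μ ∂ν := by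
        refine lintegral_congr fun t => ?_
        exact lintegral_add_right_eq_self (fun x => K (x, t)) (γ t)
    _ = ∫⁻ x, ∫⁻ t, K (x, t) ∂ν ∂μ :=
        (lintegral_lintegral_swap (f := fun x t => K (x, t)) hK.aemeasurable).symm

theorem setLIntegral_measure_subFiber [MeasurableSub₂ G] [SFinite μ] [SFinite ν]
    [μ.IsAddRightInvariant] (hγ : Measurable γ) (hE : MeasurableSet E) (hS : MeasurableSet S) :
    ∫⁻ x in E, ν (subFiber γ S x) ∂μ = ∫⁻ y in S, ν (addFiber γ E y) ∂μ := by
  have hI {A : Set G} (hA : MeasurableSet A) : Measurable (A.indicator (1 : G → ℝ≥0∞)) :=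
    measurable_one.indicator hA
  have hsub (x : G) : ν (subFiber γ S x) = ∫⁻ t, S.indicator 1 (x - γ t) ∂ν :=
    (lintegral_indicator_one (measurableSet_subFiber hγ hS x)).symm
  have hadd (y : G) : ν (addFiber γ E y) = ∫⁻ t, E.indicator 1 (y + γ t) ∂ν :=
    (lintegral_indicator_one (measurableSet_addFiber hγ hE y)).symm
  calc ∫⁻ x in E, ν (subFiber γ S x) ∂μ
      = ∫⁻ x, ∫⁻ t, E.indicator 1 x * S.indicator 1 (x - γ t) ∂ν ∂μ := by
        rw [← lintegral_indicator hE]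
        refine lintegral_congr fun x => ?_
        by_cases hx : x ∈ E <;> simp [hx, hsub]
    _ = ∫⁻ y, ∫⁻ t, E.indicator 1 (y + γ t) * S.indicator 1 (y + γ t - γ t) ∂ν ∂μ := by
        refine (lintegral_lintegral_add_comp hγ
          (K := fun p => E.indicator 1 p.1 * S.indicator 1 (p.1 - γ p.2)) ?_).symm
        exact ((hI hE).comp measurable_fst).mul ((hI hS).comp (by fun_prop))
    _ = ∫⁻ y in S, ν (addFiber γ E y) ∂μ := by
        rw [← lintegral_indicator hS]
        refine lintegral_congr fun y => ?_
        by_cases hy : y ∈ S <;> simp [hy, hadd]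

end Incidence

section RadialTruncation

variable {V : Type*} [NormedAddCommGroup V] [MeasurableSpace V] {ν : Measure V} {F : Set V}
  {v : ℝ≥0∞}

/-- The part of `F` closest to the origin, cut off where its mass reaches `v`. Unlike an arbitrary
subset of `F` of measure `v`, it depends measurably on `F`. -/
def radialTruncation (ν : Measure V) (F : Set V) (v : ℝ≥0∞) : Set V :=
  {t ∈ F | ν (F ∩ Metric.closedBall 0 ‖t‖) < v}

theorem monotone_measure_inter_closedBall (ν : Measure V) (F : Set V) :
    Monotone fun r : ℝ => ν (F ∩ Metric.closedBall 0 r) := fun _ _ hrs =>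
  measure_mono (Set.inter_subset_inter_right _ (Metric.closedBall_subset_closedBall hrs))

theorem exists_lt_measure_inter_closedBall (hv : v < ν F) :
    ∃ r : ℝ, v < ν (F ∩ Metric.closedBall 0 r) := by
  have hunion : ⋃ k : ℕ, F ∩ Metric.closedBall (0 : V) k = F := by
    rw [← Set.inter_iUnion, Metric.iUnion_closedBall_nat, Set.inter_univ]
  have hmono : Monotone fun k : ℕ => F ∩ Metric.closedBall (0 : V) k := fun j k hjk =>
    Set.inter_subset_inter_right _ (Metric.closedBall_subset_closedBall (by exact_mod_cast hjk))
  rw [← hunion, hmono.measure_iUnion, lt_iSup_iff] at hv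
  exact ⟨_, hv.choose_spec⟩

theorem measurableSet_prod_radialTruncation {X : Type*} [MeasurableSpace X] [OpensMeasurableSpace V]
    [SFinite ν] {W : Set (X × V)} (hW : MeasurableSet W) (v : ℝ≥0∞) :
    MeasurableSet {p : X × V | p.2 ∈ radialTruncation ν (Prod.mk p.1 ⁻¹' W) v} := by
  have hball : MeasurableSet {z : (X × V) × V | (z.1.1, z.2) ∈ W ∧ ‖z.2‖ ≤ ‖z.1.2‖} :=
    ((by fun_prop : Measurable fun z : (X × V) × V => (z.1.1, z.2)) hW).inter
      (measurableSet_le measurable_snd.norm measurable_fst.snd.norm)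
  have hmass : Measurable fun p : X × V =>
      ν (Prod.mk p.1 ⁻¹' W ∩ Metric.closedBall 0 ‖p.2‖) := by
    convert measurable_measure_prodMk_left (ν := ν) hball using 3 with p
    ext u
    simp
  exact hW.inter (measurableSet_lt hmass measurable_const)

variable [NormedSpace ℝ V] [FiniteDimensional ℝ V] [BorelSpace V] [Nontrivial V]
  [ν.IsAddHaarMeasure]

theorem continuous_measure_inter_closedBall (ν : Measure V) [ν.IsAddHaarMeasure] (F : Set V) :
    Continuous fun r : ℝ => ν (F ∩ Metric.closedBall 0 r) := by
  simp_rw [Set.inter_comm F, ← Measure.restrict_apply (μ := ν) (s := F) measurableSet_closedBall]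
  refine continuous_iff_continuousAt.2 fun r => ?_
  refine tendsto_measure_of_ae_tendsto_indicator _ measurableSet_closedBall
    (fun _ => measurableSet_closedBall) (measurableSet_closedBall (x := (0 : V)) (ε := r + 1))
    ?_ ?_ ?_
  · exact ((Measure.restrict_apply_le _ _).trans_lt measure_closedBall_lt_top).ne
  · filter_upwards [eventually_lt_nhds (lt_add_one r)] with a ha
    exact Metric.closedBall_subset_closedBall ha.le
  · have hsphere : ∀ᵐ x ∂ν, x ∉ Metric.sphere (0 : V) r :=
      measure_eq_zero_iff_ae_notMem.1 (Measure.addHaar_sphere ν 0 r)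
    filter_upwards [ae_restrict_of_ae hsphere] with x hx
    simp only [mem_closedBall_zero_iff, mem_sphere_zero_iff_norm] at hx ⊢
    rcases lt_or_gt_of_ne hx with h | h
    · filter_upwards [eventually_gt_nhds h] with a ha using iff_of_true ha.le h.le
    · filter_upwards [eventually_lt_nhds h] with a ha using iff_of_false ha.not_ge h.not_ge

theorem measure_radialTruncation (hv : v < ν F) : ν (radialTruncation ν F v) = v := by
  set g : ℝ → ℝ≥0∞ := fun r => ν (F ∩ Metric.closedBall 0 r)
  have hg : Continuous g := continuous_measure_inter_closedBall ν F
  have hmono : Monotone g := monotone_measure_inter_closedBall ν F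
  obtain ⟨R, hR⟩ := exists_lt_measure_inter_closedBall hv
  have hg0 : g 0 = 0 := measure_mono_null Set.inter_subset_right (by simp)
  have hR0 : 0 ≤ R := by
    by_contra! hlt
    exact (hmono hlt.le |>.trans (hg0.trans_le bot_le)).not_gt (bot_le.trans_lt hR)
  obtain ⟨r, ⟨hr, hgr⟩, hleast⟩ : ∃ r, IsLeast (Set.Icc 0 R ∩ g ⁻¹' {v}) r := by
    refine (isCompact_Icc.inter_right (isClosed_singleton.preimage hg)).exists_isLeast ?_
    exact intermediate_value_Icc hR0 hg.continuousOn ⟨hg0.trans_le bot_le, hR.le⟩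
  have hball : radialTruncation ν F v = F ∩ Metric.ball 0 r := by
    ext t
    refine and_congr_right fun _ => ?_
    rw [mem_ball_zero_iff]
    refine ⟨fun ht => hmono.reflect_lt (ht.trans_eq hgr.symm), fun ht => ?_⟩
    refine lt_of_le_of_ne ((hmono ht.le).trans_eq hgr) fun heq => ht.not_ge ?_
    exact hleast ⟨⟨norm_nonneg t, ht.le.trans hr.2⟩, heq⟩
  rw [hball, ← hgr]
  refine measure_congr (Filter.EventuallyEq.rfl.inter ?_)
  exact ae_eq_of_subset_of_measure_ge Metric.ball_subset_closedBall
    (Measure.addHaar_closedBall_eq_addHaar_ball ν 0 r).le measurableSet_ball.nullMeasurableSet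
    measure_closedBall_lt_top.ne

end RadialTruncation

section Tower

theorem exists_lt_of_mul_measure_lt_setLIntegral {α : Type*} [MeasurableSpace α] {μ : Measure α}
    {f : α → ℝ≥0∞} {v : ℝ≥0∞} {s : Set α} (h : v * μ s < ∫⁻ x in s, f x ∂μ) :
    ∃ x ∈ s, v < f x := by
  by_contra! hle
  exact h.not_ge ((setLIntegral_mono measurable_const hle).trans_eq (setLIntegral_const s v))

theorem setLIntegral_le_setLIntegral_superlevel_add {α : Type*} [MeasurableSpace α] {μ : Measure α}
    {f : α → ℝ≥0∞} (hf : Measurable f) (v : ℝ≥0∞) (s : Set α) :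
    ∫⁻ x in s, f x ∂μ ≤ ∫⁻ x in s ∩ {x | v < f x}, f x ∂μ + v * μ s := by
  rw [← lintegral_inter_add_sdiff f s (measurableSet_lt measurable_const hf)]
  gcongr
  calc ∫⁻ x in s \ {x | v < f x}, f x ∂μ ≤ ∫⁻ _ in s \ {x | v < f x}, v ∂μ :=
        setLIntegral_mono measurable_const fun x hx => not_lt.1 hx.2
    _ ≤ v * μ s := by
        rw [setLIntegral_const]
        gcongr
        exact Set.sdiff_subset

variable {G V : Type*} [AddGroup G] [MeasurableSpace G] [MeasurableAdd₂ G] [MeasurableSub₂ G]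
  {μ : Measure G} [SFinite μ] {γ : V → G} {E S : Set G} {v₁ v₂ : ℝ≥0∞}

theorem exists_mem_lt_measure_subFiber_inter [MeasurableSpace V] {ν : Measure V} [SFinite ν]
    [μ.IsAddRightInvariant] (hγ : Measurable γ) (hE : MeasurableSet E) (hS : MeasurableSet S)
    (h : v₁ * μ E + v₂ * μ S < ∫⁻ x in E, ν (subFiber γ S x) ∂μ) :
    ∃ x ∈ E, v₁ < ν (subFiber γ (S ∩ {y | v₂ < ν (addFiber γ E y)}) x) := by
  have hfiber := measurable_measure_addFiber (ν := ν) hγ hE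
  apply exists_lt_of_mul_measure_lt_setLIntegral (μ := μ)
  rw [setLIntegral_measure_subFiber hγ hE hS] at h
  rw [setLIntegral_measure_subFiber hγ hE (hS.inter (measurableSet_lt measurable_const hfiber))]
  exact lt_of_add_lt_add_right
    (h.trans_le (setLIntegral_le_setLIntegral_superlevel_add hfiber v₂ S))

theorem exists_tower [NormedAddCommGroup V] [NormedSpace ℝ V] [FiniteDimensional ℝ V]
    [MeasurableSpace V] [BorelSpace V] [Nontrivial V] {ν : Measure V} [ν.IsAddHaarMeasure]
    [μ.IsAddRightInvariant] (hγ : Measurable γ) (hE : MeasurableSet E) (hS : MeasurableSet S)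
    (h : v₁ * μ E + v₂ * μ S < ∫⁻ x in E, ν (subFiber γ S x) ∂μ) :
    ∃ (x : G) (Ω₁ : Set V) (Ω : Set (V × V)),
      x ∈ E ∧ MeasurableSet Ω₁ ∧ MeasurableSet Ω ∧ Ω ⊆ Ω₁ ×ˢ Set.univ ∧ ν Ω₁ = v₁ ∧
      (∀ s ∈ Ω₁, x - γ s ∈ S) ∧ (∀ s ∈ Ω₁, ν {t | (s, t) ∈ Ω} = v₂) ∧
      ∀ p ∈ Ω, x - γ p.1 + γ p.2 ∈ E := by
  obtain ⟨x, hxE, hx⟩ := exists_mem_lt_measure_subFiber_inter hγ hE hS h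
  set S' := S ∩ {y | v₂ < ν (addFiber γ E y)}
  set Ω₁ := radialTruncation ν (subFiber γ S' x) v₁
  have hS' : MeasurableSet S' :=
    hS.inter (measurableSet_lt measurable_const (measurable_measure_addFiber hγ hE))
  have hΩ₁ : MeasurableSet Ω₁ :=
    measurable_prodMk_left (x := x) (measurableSet_prod_radialTruncation (ν := ν)
      ((by fun_prop : Measurable fun p : G × V => p.1 - γ p.2) hS') v₁)
  have hΩ : MeasurableSet {p : V × V | p.2 ∈ radialTruncation ν (addFiber γ E (x - γ p.1)) v₂} :=
    measurableSet_prod_radialTruncation (ν := ν)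
      ((by fun_prop : Measurable fun p : V × V => x - γ p.1 + γ p.2) hE) v₂
  refine ⟨x, Ω₁, {p | p.1 ∈ Ω₁ ∧ p.2 ∈ radialTruncation ν (addFiber γ E (x - γ p.1)) v₂}, hxE, hΩ₁,
    (measurable_fst hΩ₁).inter hΩ, fun p hp => ⟨hp.1, Set.mem_univ _⟩,
    measure_radialTruncation hx, fun s hs => hs.1.1, fun s hs => ?_, fun p hp => hp.2.1⟩
  simp only [Set.mem_ofPred_eq, hs, true_and]
  exact measure_radialTruncation hs.1.2

end Tower

section PiMeasure

variable {X : Type*} [MeasurableSpace X] (μ : Measure X) [SigmaFinite μ]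

theorem measurePreserving_head_tail (n : ℕ) :
    MeasurePreserving (fun x : Fin (n + 1) → X => (x 0, Fin.tail x)) (Measure.pi fun _ => μ)
      (μ.prod (Measure.pi fun _ => μ)) :=
  measurePreserving_piFinSuccAbove (fun _ => μ) 0

theorem lintegral_prod_eval_eq_prod_lintegral {n : ℕ} {f : Fin n → X → ℝ≥0∞}
    (hf : ∀ i, Measurable (f i)) :
    ∫⁻ x, ∏ i, f i (x i) ∂Measure.pi (fun _ => μ) = ∏ i, ∫⁻ x, f i x ∂μ := by
  induction n with
  | zero => simp
  | succ n ih =>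
    have htail : Measurable fun t : Fin n → X => ∏ i, f i.succ (t i) :=
      Finset.measurable_prod _ fun i _ => (hf i.succ).comp (measurable_pi_apply i)
    simp_rw [Fin.prod_univ_succ]
    rw [← ih fun i => hf i.succ, ← lintegral_prod_mul (hf 0).aemeasurable htail.aemeasurable]
    exact (measurePreserving_head_tail μ n).lintegral_comp
      (((hf 0).comp measurable_fst).mul (htail.comp measurable_snd))

theorem measurePreserving_comp_perm {ι : Type*} [Fintype ι] (σ : Equiv.Perm ι) :
    MeasurePreserving (fun x : ι → X => x ∘ σ) (Measure.pi fun _ => μ) (Measure.pi fun _ => μ) :=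
  (measurePreserving_piCongrLeft (fun _ => μ) σ).symm

theorem measure_pi_le_of_forall_exists_perm {ι : Type*} [Fintype ι] {S A : Set (ι → X)}
    (hA : MeasurableSet A) (h : ∀ x ∈ S, ∃ σ : Equiv.Perm ι, x ∘ σ ∈ A) :
    Measure.pi (fun _ => μ) S ≤ (Fintype.card ι).factorial * Measure.pi (fun _ => μ) A := by
  classical
  calc Measure.pi (fun _ => μ) S
      ≤ Measure.pi (fun _ => μ) (⋃ σ : Equiv.Perm ι, (· ∘ σ) ⁻¹' A) :=
        measure_mono fun x hx => Set.mem_iUnion.2 (h x hx)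
    _ ≤ ∑ σ : Equiv.Perm ι, Measure.pi (fun _ => μ) ((· ∘ σ) ⁻¹' A) := measure_iUnion_fintype_le _ _
    _ = (Fintype.card ι).factorial * Measure.pi (fun _ => μ) A := by
        simp [(measurePreserving_comp_perm μ _).measure_preimage hA.nullMeasurableSet,
          Fintype.card_perm]

theorem update_tail_eq_tail_comp_swap {α : Type*} {n : ℕ} (x : Fin (n + 1) → α) (k : Fin n) :
    Function.update (Fin.tail x) k (x 0) = Fin.tail (x ∘ Equiv.swap 0 k.succ) := by
  ext j
  obtain rfl | hj := eq_or_ne j k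
  · simp [Fin.tail]
  · simp [Fin.tail, hj, Equiv.swap_apply_of_ne_of_ne (Fin.succ_ne_zero j)
      ((Fin.succ_injective n).ne hj)]

theorem exists_perm_update_tail_le {α β : Type*} [LinearOrder β] {n : ℕ} (D : (Fin n → α) → β)
    (x : Fin (n + 1) → α) : ∃ σ : Equiv.Perm (Fin (n + 1)), ∀ k,
      D (Function.update (Fin.tail (x ∘ σ)) k ((x ∘ σ) 0)) ≤ D (Fin.tail (x ∘ σ)) := by
  obtain ⟨σ, hσ⟩ := Finite.exists_max fun σ : Equiv.Perm (Fin (n + 1)) => D (Fin.tail (x ∘ σ))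
  refine ⟨σ, fun k => ?_⟩
  rw [update_tail_eq_tail_comp_swap]
  exact hσ (σ * Equiv.swap 0 k.succ)

theorem measure_pow_le_factorial_mul_lintegral {n : ℕ} {D : (Fin n → X) → ℝ} (hD : Measurable D)
    {F : Set X} (hF : MeasurableSet F) :
    μ F ^ (n + 1) ≤ (n + 1).factorial * ∫⁻ t in Set.univ.pi fun _ => F,
      μ {z | ∀ k, D (Function.update t k z) ≤ D t} ∂Measure.pi fun _ => μ := by
  set B : Set (X × (Fin n → X)) := {p | ∀ k, D (Function.update p.2 k p.1) ≤ D p.2}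
  set P : Set (Fin n → X) := Set.univ.pi fun _ => F
  have hP : MeasurableSet P := MeasurableSet.univ_pi fun _ => hF
  have hB : MeasurableSet B := by
    refine measurableSet_setOfPred.2 <| Measurable.forall fun k => measurableSet_setOfPred.1 ?_
    exact measurableSet_le (hD.comp (measurable_update'.comp measurable_swap))
      (hD.comp measurable_snd)
  have hA : MeasurableSet (B ∩ F ×ˢ P) := hB.inter (hF.prod hP)
  calc μ F ^ (n + 1) = Measure.pi (fun _ => μ) (Set.univ.pi fun _ : Fin (n + 1) => F) := by
        simp
    _ ≤ (n + 1).factorial * Measure.pi (fun _ => μ) ((fun x : Fin (n + 1) → X =>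
          (x 0, Fin.tail x)) ⁻¹' (B ∩ F ×ˢ P)) := by
        convert measure_pi_le_of_forall_exists_perm μ
          ((measurePreserving_head_tail μ n).measurable hA) fun x hx => ?_
        · simp
        · obtain ⟨σ, hσ⟩ := exists_perm_update_tail_le D x
          exact ⟨σ, hσ, hx _ trivial, fun k _ => hx _ trivial⟩
    _ = (n + 1).factorial * ∫⁻ t in P, μ ({z | ∀ k, D (Function.update t k z) ≤ D t} ∩ F)
          ∂Measure.pi fun _ => μ := by
        rw [(measurePreserving_head_tail μ n).measure_preimage hA.nullMeasurableSet,
          Measure.prod_apply_symm hA, ← lintegral_indicator hP]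
        congr! 3 with t
        by_cases ht : t ∈ P <;> simp [ht, B, Set.indicator]
    _ ≤ (n + 1).factorial * ∫⁻ t in P, μ {z | ∀ k, D (Function.update t k z) ≤ D t}
          ∂Measure.pi fun _ => μ := by
        gcongr
        exact Set.inter_subset_left

end PiMeasure

section Determinant

theorem continuous_basis_det {V ι : Type*} [NormedAddCommGroup V] [NormedSpace ℝ V]
    [FiniteDimensional ℝ V] [Fintype ι] [DecidableEq ι] (b : Module.Basis ι ℝ V) :
    Continuous fun t : ι → V => b.det t := by
  simp_rw [Module.Basis.det_apply]
  refine Continuous.matrix_det (continuous_matrix fun i j => ?_)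
  exact (b.coord i).continuous_of_finiteDimensional.comp (continuous_apply j)

theorem ae_linearIndependent {V : Type*} [NormedAddCommGroup V] [NormedSpace ℝ V]
    [FiniteDimensional ℝ V] [MeasurableSpace V] [BorelSpace V] (μ : Measure V)
    [μ.IsAddHaarMeasure] {n : ℕ} (hn : n ≤ Module.finrank ℝ V) :
    ∀ᵐ t : Fin n → V ∂Measure.pi fun _ => μ, LinearIndependent ℝ t := by
  induction n with
  | zero => exact ae_of_all _ fun t => linearIndependent_empty_type
  | succ n ih =>
    have hspan (t : Fin n → V) : μ (Submodule.span ℝ (Set.range t)) = 0 := by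
      refine Measure.addHaar_submodule μ _ fun htop => ?_
      have hcard := finrank_range_le_card (R := ℝ) t
      rw [Set.finrank, htop, finrank_top, Fintype.card_fin] at hcard
      omega
    have hcons : ∀ᵐ p : (Fin n → V) × V ∂(Measure.pi fun _ => μ).prod μ,
        LinearIndependent ℝ (Fin.cons p.2 p.1 : Fin (n + 1) → V) := by
      refine (Measure.ae_prod_iff_ae_ae ?_).2 ?_
      · exact (isOpen_setOfPred_linearIndependent.preimage (by fun_prop)).measurableSet
      · filter_upwards [ih (by omega)] with t ht
        filter_upwards [measure_eq_zero_iff_ae_notMem.1 (hspan t)] with x hx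
        exact linearIndependent_finCons.2 ⟨ht, hx⟩
    have hsplit := Measure.measurePreserving_swap.comp (measurePreserving_head_tail μ n)
    filter_upwards [hsplit.quasiMeasurePreserving.ae hcons] with t ht
    simpa using ht

variable {V : Type*} [NormedAddCommGroup V] [InnerProductSpace ℝ V] [FiniteDimensional ℝ V]
  [MeasurableSpace V] [BorelSpace V]

theorem volume_setOf_abs_det_update_le {ι : Type*} [Fintype ι] [DecidableEq ι]
    (b : OrthonormalBasis ι ℝ V) {t : ι → V} (ht : b.toBasis.det t ≠ 0) :
    volume {z | ∀ k, |b.toBasis.det (Function.update t k z)| ≤ |b.toBasis.det t|} ≤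
      2 ^ Fintype.card ι * ENNReal.ofReal |b.toBasis.det t| := by
  obtain ⟨hli, hspan⟩ := b.toBasis.is_basis_iff_det.2 (isUnit_iff_ne_zero.2 ht)
  set B := Module.Basis.mk hli hspan.ge
  have hcramer (z : V) (k : ι) :
      b.toBasis.det t * B.repr z k = b.toBasis.det (Function.update t k z) :=
    congrArg (· z) (b.toBasis.det_smul_mk_coord_eq_det_update hli hspan.ge k)
  have hsubset : {z | ∀ k, |b.toBasis.det (Function.update t k z)| ≤ |b.toBasis.det t|} ⊆
      (· + ∑ k, t k) ⁻¹' parallelepiped fun k => (2 : ℝ) • t k := by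
    intro z hz
    have hcoord (k : ι) : |B.repr z k| ≤ 1 := by
      have := hz k
      rw [← hcramer, abs_mul] at this
      exact le_of_mul_le_mul_left (by rwa [mul_one]) (abs_pos.2 ht)
    refine (mem_parallelepiped_iff _ _).2
      ⟨fun k => (B.repr z k + 1) / 2, ⟨fun k => ?_, fun k => ?_⟩, ?_⟩
    · simp only [Pi.zero_apply]; linarith [(abs_le.1 (hcoord k)).1]
    · simp only [Pi.one_apply]; linarith [(abs_le.1 (hcoord k)).2]
    · conv_lhs => rw [← B.sum_repr z]
      simp [B, smul_smul, add_smul, Finset.sum_add_distrib]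
  calc volume {z | ∀ k, |b.toBasis.det (Function.update t k z)| ≤ |b.toBasis.det t|}
      ≤ volume ((· + ∑ k, t k) ⁻¹' parallelepiped fun k => (2 : ℝ) • t k) := measure_mono hsubset
    _ = ENNReal.ofReal |b.toBasis.det fun k => (2 : ℝ) • t k| := by
      rw [measure_preimage_add_right, ← b.addHaar_eq_volume, Measure.addHaar_parallelepiped]
    _ = 2 ^ Fintype.card ι * ENNReal.ofReal |b.toBasis.det t| := by
      rw [AlternatingMap.map_smul_univ]
      simp [abs_mul, ENNReal.ofReal_mul, ENNReal.ofReal_pow]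

theorem volume_pow_le_lintegral_abs_det {n : ℕ} (b : OrthonormalBasis (Fin n) ℝ V)
    {F : Set V} (hF : MeasurableSet F) :
    volume F ^ (n + 1) ≤ (n + 1).factorial * 2 ^ n *
      ∫⁻ t in Set.univ.pi fun _ : Fin n => F, ENNReal.ofReal |b.toBasis.det t| := by
  have hn : n = Module.finrank ℝ V := by simpa using (Module.finrank_eq_card_basis b.toBasis).symm
  have hD : Measurable fun t : Fin n → V => |b.toBasis.det t| :=
    (continuous_basis_det b.toBasis).abs.measurable
  refine (measure_pow_le_factorial_mul_lintegral volume hD hF).trans ?_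
  rw [mul_assoc, volume_pi, ← lintegral_const_mul _ hD.ennreal_ofReal]
  gcongr _ * ?_
  refine lintegral_mono_ae (ae_restrict_of_ae ?_)
  filter_upwards [ae_linearIndependent volume hn.le] with t ht
  have hdet : b.toBasis.det t ≠ 0 :=
    isUnit_iff_ne_zero.1 <| b.toBasis.is_basis_iff_det.1
      ⟨ht, ht.span_eq_top_of_card_eq_finrank' (by simpa using hn)⟩
  simpa using volume_setOf_abs_det_update_le b hdet

theorem lintegral_comp_inner_mul_abs_det_le {ι : Type*} [Fintype ι] [DecidableEq ι]
    (b : OrthonormalBasis ι ℝ V) (w : ι → V) {G : (ι → ℝ) → ℝ≥0∞} (hG : Measurable G) :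
    (∫⁻ s, G fun k => inner ℝ (w k) s) * ENNReal.ofReal |b.toBasis.det w| ≤ ∫⁻ r, G r := by
  set M := (b.toBasis.toMatrix w).transpose
  have hM : b.toBasis.det w = M.det := by rw [Module.Basis.det_apply, Matrix.det_transpose]
  obtain hdet | hdet := eq_or_ne M.det 0
  · simp [hM, hdet]
  have hcoord : MeasurePreserving fun s : V => WithLp.ofLp (b.repr s) :=
    (PiLp.volume_preserving_ofLp ι).comp b.measurePreserving_repr
  have hinner (s : V) : (fun k => inner ℝ (w k) s) = M.toLin' (WithLp.ofLp (b.repr s)) := by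
    ext k
    rw [← b.sum_inner_mul_inner]
    simp [M, Matrix.mulVec, dotProduct, Module.Basis.toMatrix_apply, real_inner_comm,
      b.repr_apply_apply]
  refine le_of_eq ?_
  calc (∫⁻ s, G fun k => inner ℝ (w k) s) * ENNReal.ofReal |b.toBasis.det w|
      = (∫⁻ r, G (M.toLin' r)) * ENNReal.ofReal |M.det| := by
        simp_rw [hinner, hM]
        rw [hcoord.lintegral_comp (f := fun r => G (M.toLin' r)) (hG.comp (by fun_prop))]
    _ = ENNReal.ofReal |M.det⁻¹| * (∫⁻ r, G r) * ENNReal.ofReal |M.det| := by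
        rw [← lintegral_map hG (by fun_prop), Real.map_matrix_volume_pi_eq_smul_volume_pi hdet,
          lintegral_smul_measure, smul_eq_mul]
    _ = ∫⁻ r, G r := by
        rw [mul_right_comm, ← ENNReal.ofReal_mul (abs_nonneg _), ← abs_mul, inv_mul_cancel₀ hdet,
          abs_one, ENNReal.ofReal_one, one_mul]

end Determinant

section Paraboloid

instance {G H : Type*} [AddGroup G] [AddGroup H] [MeasureSpace G] [MeasureSpace H]
    [MeasurableAdd G] [MeasurableAdd H]
    [SFinite (volume : Measure G)] [SFinite (volume : Measure H)]
    [(volume : Measure G).IsAddRightInvariant] [(volume : Measure H).IsAddRightInvariant] :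
    (volume : Measure (G × H)).IsAddRightInvariant :=
  inferInstanceAs ((volume : Measure G).prod (volume : Measure H)).IsAddRightInvariant

/-- The standard parametrization of the paraboloid in `V × ℝ`. -/
def paraboloid {V : Type*} [NormedAddCommGroup V] (t : V) : V × ℝ := (t, ‖t‖ ^ 2)

theorem measurable_paraboloid {V : Type*} [NormedAddCommGroup V] [MeasurableSpace V]
    [OpensMeasurableSpace V] : Measurable (paraboloid : V → V × ℝ) := by
  unfold paraboloid
  fun_prop

variable {V : Type*} [NormedAddCommGroup V] [InnerProductSpace ℝ V]

theorem paraboloid_add (s t : V) :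
    paraboloid (s + t) = paraboloid s + (t, 2 * inner ℝ t s + ‖t‖ ^ 2) := by
  simp only [paraboloid, Prod.mk_add_mk, norm_add_sq_real, real_inner_comm, add_assoc]

variable [FiniteDimensional ℝ V] [MeasurableSpace V] [BorelSpace V] {n : ℕ}

theorem lintegral_prod_comp_inner_add_mul_abs_det_le (b : OrthonormalBasis (Fin n) ℝ V)
    (w : Fin n → V) (c : Fin n → ℝ) {g : Fin n → ℝ → ℝ≥0∞} (hg : ∀ k, Measurable (g k)) :
    (∫⁻ s, ∏ k, g k (2 * inner ℝ (w k) s + c k)) * ENNReal.ofReal |b.toBasis.det w| ≤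
      ∏ k, ∫⁻ r, g k r := by
  have hshift (k : Fin n) : Measurable fun r => g k (r + c k) := (hg k).comp (by fun_prop)
  have hdet : |b.toBasis.det w| ≤ |b.toBasis.det fun k => (2 : ℝ) • w k| := by
    rw [AlternatingMap.map_smul_univ, smul_eq_mul, abs_mul]
    refine le_mul_of_one_le_left (abs_nonneg _) ?_
    simpa using one_le_pow₀ (one_le_two (α := ℝ))
  calc (∫⁻ s, ∏ k, g k (2 * inner ℝ (w k) s + c k)) * ENNReal.ofReal |b.toBasis.det w|
      ≤ (∫⁻ s, ∏ k, g k (inner ℝ ((2 : ℝ) • w k) s + c k)) *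
          ENNReal.ofReal |b.toBasis.det fun k => (2 : ℝ) • w k| := by
        simp_rw [real_inner_smul_left]
        gcongr
    _ ≤ ∫⁻ r : Fin n → ℝ, ∏ k, g k (r k + c k) :=
        lintegral_comp_inner_mul_abs_det_le b _ (G := fun r => ∏ k, g k (r k + c k)) <|
          Finset.measurable_prod _ fun k _ => (hshift k).comp (measurable_pi_apply k)
    _ = ∏ k, ∫⁻ r, g k r := by
        rw [volume_pi, lintegral_prod_eval_eq_prod_lintegral volume hshift]
        exact Finset.prod_congr rfl fun k _ => lintegral_add_right_eq_self (g k) (c k)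

theorem lintegral_lintegral_prod_comp_mul_abs_det_le (b : OrthonormalBasis (Fin n) ℝ V)
    {g : Fin n → V × ℝ → ℝ≥0∞} (hg : ∀ k, Measurable (g k)) :
    ∫⁻ s, ∫⁻ w : Fin n → V, (∏ k, g k (w k, 2 * inner ℝ (w k) s + ‖w k‖ ^ 2)) *
        ENNReal.ofReal |b.toBasis.det w| ≤ ∏ k, ∫⁻ z, g k z := by
  have hdet : Measurable fun w : Fin n → V => ENNReal.ofReal |b.toBasis.det w| :=
    (continuous_basis_det b.toBasis).abs.measurable.ennreal_ofReal
  have hprod : Measurable fun p : V × (Fin n → V) =>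
      ∏ k, g k (p.2 k, 2 * inner ℝ (p.2 k) p.1 + ‖p.2 k‖ ^ 2) :=
    Finset.measurable_prod _ fun k _ => (hg k).comp (by fun_prop)
  rw [lintegral_lintegral_swap (hprod.mul (hdet.comp measurable_snd)).aemeasurable]
  calc ∫⁻ w : Fin n → V, ∫⁻ s, (∏ k, g k (w k, 2 * inner ℝ (w k) s + ‖w k‖ ^ 2)) *
        ENNReal.ofReal |b.toBasis.det w|
      ≤ ∫⁻ w : Fin n → V, ∏ k, ∫⁻ r, g k (w k, r) := by
        refine lintegral_mono fun w => ?_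
        rw [lintegral_mul_const' _ _ ENNReal.ofReal_ne_top]
        exact lintegral_prod_comp_inner_add_mul_abs_det_le b w (fun k => ‖w k‖ ^ 2)
          (g := fun k r => g k (w k, r)) fun k => (hg k).comp measurable_prodMk_left
    _ = ∏ k, ∫⁻ v, ∫⁻ r, g k (v, r) :=
        lintegral_prod_eval_eq_prod_lintegral (f := fun k v => ∫⁻ r, g k (v, r)) volume
          fun k => (hg k).lintegral_prod_right'
    _ = ∏ k, ∫⁻ z, g k z :=
        Finset.prod_congr rfl fun k _ => (lintegral_prod (g k) (hg k).aemeasurable).symm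

theorem lintegral_lintegral_mul_prod_paraboloid_le (b : OrthonormalBasis (Fin n) ℝ V)
    {f : V × ℝ → ℝ≥0∞} (hf : Measurable f) {g : Fin n → V × ℝ → ℝ≥0∞}
    (hg : ∀ k, Measurable (g k)) :
    ∫⁻ y, ∫⁻ s, f (y + paraboloid s) * ∫⁻ w : Fin n → V,
        (∏ k, g k (y + paraboloid (s + w k))) * ENNReal.ofReal |b.toBasis.det w| ≤
      (∫⁻ x, f x) * ∏ k, ∫⁻ x, g k x := by
  set J : (V × ℝ) × V → ℝ≥0∞ := fun p => ∫⁻ w : Fin n → V,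
    (∏ k, g k (p.1 + (w k, 2 * inner ℝ (w k) p.2 + ‖w k‖ ^ 2))) * ENNReal.ofReal |b.toBasis.det w|
  have hJ : Measurable J := by
    refine Measurable.lintegral_prod_right' (f := fun p : ((V × ℝ) × V) × (Fin n → V) =>
      (∏ k, g k (p.1.1 + (p.2 k, 2 * inner ℝ (p.2 k) p.1.2 + ‖p.2 k‖ ^ 2))) *
        ENNReal.ofReal |b.toBasis.det p.2|) (.mul ?_ ?_)
    · exact Finset.measurable_prod _ fun k _ => (hg k).comp (by fun_prop)
    · exact ((continuous_basis_det b.toBasis).comp continuous_snd).abs.measurable.ennreal_ofReal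
  have hJ_le (x : V × ℝ) : ∫⁻ s, J (x, s) ≤ ∏ k, ∫⁻ z, g k z := by
    refine (lintegral_lintegral_prod_comp_mul_abs_det_le b (g := fun k z => g k (x + z))
      fun k => (hg k).comp (measurable_const_add x)).trans_eq ?_
    refine Finset.prod_congr rfl fun k _ => ?_
    simp_rw [add_comm x]
    exact lintegral_add_right_eq_self (g k) x
  calc _ = ∫⁻ y, ∫⁻ s, f (y + paraboloid s) * J (y + paraboloid s, s) := by
        simp_rw [J, paraboloid_add, add_assoc]
    _ = ∫⁻ x, ∫⁻ s, f x * J (x, s) :=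
        lintegral_lintegral_add_comp measurable_paraboloid
          (K := fun p => f p.1 * J p) ((hf.comp measurable_fst).mul hJ)
    _ ≤ ∫⁻ x, f x * ∏ k, ∫⁻ z, g k z := by
        refine lintegral_mono fun x => ?_
        have hJx : Measurable fun s => J (x, s) := hJ.comp measurable_prodMk_left
        rw [lintegral_const_mul _ hJx]
        gcongr
        exact hJ_le x
    _ = (∫⁻ x, f x) * ∏ k, ∫⁻ x, g k x := lintegral_mul_const _ hf

theorem volume_addFiber_pow_le (b : OrthonormalBasis (Fin n) ℝ V) {E : Set (V × ℝ)}
    (hE : MeasurableSet E) (y : V × ℝ) (s : V) :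
    volume (addFiber paraboloid E y) ^ (n + 1) ≤ (n + 1).factorial * 2 ^ n * ∫⁻ w : Fin n → V,
      (∏ k, E.indicator 1 (y + paraboloid (s + w k))) * ENNReal.ofReal |b.toBasis.det w| := by
  set F := (s + ·) ⁻¹' addFiber paraboloid E y
  have hF : MeasurableSet F :=
    measurable_const_add s (measurableSet_addFiber measurable_paraboloid hE y)
  calc volume (addFiber paraboloid E y) ^ (n + 1) = volume F ^ (n + 1) := by
        rw [measure_preimage_add]
    _ ≤ (n + 1).factorial * 2 ^ n *
          ∫⁻ w in Set.univ.pi fun _ => F, ENNReal.ofReal |b.toBasis.det w| :=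
        volume_pow_le_lintegral_abs_det b hF
    _ = (n + 1).factorial * 2 ^ n * ∫⁻ w : Fin n → V,
          (∏ k, E.indicator 1 (y + paraboloid (s + w k))) * ENNReal.ofReal |b.toBasis.det w| := by
        rw [← lintegral_indicator (.univ_pi fun _ => hF)]
        congr 1
        refine lintegral_congr fun w => ?_
        by_cases hw : ∀ k, w k ∈ F
        · have hE' (k : Fin n) : y + paraboloid (s + w k) ∈ E := hw k
          simp [hw, hE']
        · obtain ⟨k, hk⟩ := not_forall.1 hw
          have hE' : y + paraboloid (s + w k) ∉ E := hk
          simp [hw, Finset.prod_eq_zero (Finset.mem_univ k), hE']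

theorem lintegral_volume_addFiber_pow_le (b : OrthonormalBasis (Fin n) ℝ V) {E : Set (V × ℝ)}
    (hE : MeasurableSet E) :
    ∫⁻ y, volume (addFiber paraboloid E y) ^ (n + 2) ≤
      (n + 1).factorial * 2 ^ n * volume E ^ (n + 1) := by
  have hI : Measurable (E.indicator (1 : V × ℝ → ℝ≥0∞)) := measurable_one.indicator hE
  set C : ℝ≥0∞ := (n + 1).factorial * 2 ^ n
  set D : V × ℝ → V → ℝ≥0∞ := fun y s => ∫⁻ w : Fin n → V,
    (∏ k, E.indicator 1 (y + paraboloid (s + w k))) * ENNReal.ofReal |b.toBasis.det w|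
  have hpow (y : V × ℝ) : volume (addFiber paraboloid E y) ^ (n + 2) ≤
      C * ∫⁻ s, E.indicator 1 (y + paraboloid s) * D y s := by
    calc volume (addFiber paraboloid E y) ^ (n + 2)
        = ∫⁻ _ in addFiber paraboloid E y, volume (addFiber paraboloid E y) ^ (n + 1) := by
          rw [setLIntegral_const, pow_succ]
      _ ≤ ∫⁻ s in addFiber paraboloid E y, C * D y s :=
          lintegral_mono fun s => volume_addFiber_pow_le b hE y s
      _ = C * ∫⁻ s, E.indicator 1 (y + paraboloid s) * D y s := by
          rw [← lintegral_const_mul' _ _ (by finiteness),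
            ← lintegral_indicator (measurableSet_addFiber measurable_paraboloid hE y)]
          refine lintegral_congr fun s => ?_
          by_cases hs : y + paraboloid s ∈ E <;> simp [addFiber, hs]
  calc ∫⁻ y, volume (addFiber paraboloid E y) ^ (n + 2)
      ≤ C * ∫⁻ y, ∫⁻ s, E.indicator 1 (y + paraboloid s) * D y s := by
        rw [← lintegral_const_mul' _ _ (by finiteness)]
        exact lintegral_mono hpow
    _ ≤ C * volume E ^ (n + 1) := by
        grw [lintegral_lintegral_mul_prod_paraboloid_le b hI fun _ => hI]
        simp [lintegral_indicator_one hE, pow_succ']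

theorem setLIntegral_volume_addFiber_paraboloid_lt_top {E S : Set (V × ℝ)} (hE : MeasurableSet E)
    (hE_fin : volume E ≠ ⊤) (hS_fin : volume S ≠ ⊤) :
    ∫⁻ y in S, volume (addFiber paraboloid E y) < ⊤ := by
  set n := Module.finrank ℝ V
  have hle (a : ℝ≥0∞) : a ≤ 1 + a ^ (n + 2) := by
    obtain ha | ha := le_total a 1
    · exact le_add_right ha
    · exact le_add_left (le_self_pow ha (by omega))
  calc ∫⁻ y in S, volume (addFiber paraboloid E y)
      ≤ ∫⁻ y in S, (1 + volume (addFiber paraboloid E y) ^ (n + 2)) :=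
        lintegral_mono fun y => hle _
    _ = volume S + ∫⁻ y in S, volume (addFiber paraboloid E y) ^ (n + 2) := by
        rw [lintegral_add_left measurable_const, setLIntegral_one]
    _ ≤ volume S + (n + 1).factorial * 2 ^ n * volume E ^ (n + 1) := by
        grw [setLIntegral_le_lintegral,
          lintegral_volume_addFiber_pow_le (stdOrthonormalBasis ℝ V) hE]
    _ < ⊤ := by finiteness

end Paraboloid

theorem incT_eq_setLIntegral_volume_subFiber {n : ℕ} (E : Set (Pt n)) {S : Set (Pt n)}
    (hS : MeasurableSet S) : incT n E S = ∫⁻ x in E, volume (subFiber paraboloid S x) :=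
  lintegral_congr fun x =>
    lintegral_indicator_one (measurableSet_subFiber measurable_paraboloid hS x)

theorem incT_ne_top {n : ℕ} {E S : Set (Pt n)} (hE : MeasurableSet E) (hS : MeasurableSet S)
    (hE_fin : volume E ≠ ⊤) (hS_fin : volume S ≠ ⊤) : incT n E S ≠ ⊤ := by
  rw [incT_eq_setLIntegral_volume_subFiber E hS,
    setLIntegral_measure_subFiber measurable_paraboloid hE hS]
  exact (setLIntegral_volume_addFiber_paraboloid_lt_top hE hE_fin hS_fin).ne

theorem mul_div_mul_add_lt {I c v w : ℝ≥0∞} (hI : I ≠ 0) (hI' : I ≠ ⊤) (hc : c + c < 1) :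
    c * (I / v) * v + c * (I / w) * w < I :=
  calc c * (I / v) * v + c * (I / w) * w = c * (v * (I / v)) + c * (w * (I / w)) := by ring
    _ ≤ (c + c) * I := by
        grw [ENNReal.mul_div_le, ENNReal.mul_div_le, add_mul]
    _ < 1 * I := ENNReal.mul_lt_mul_left hI hI' hc
    _ = I := one_mul I

/-- the tower lemma: with `α = 𝒯(E,E*)/|E|`,
`α* = 𝒯(E,E*)/|E*|`, there exist `x̄ ∈ E`, `Ω₁ ⊆ ℝ^{d-1}` and
`Ω ⊆ Ω₁ × ℝ^{d-1}` with `|Ω₁| = cα`, `x̄ - (s,|s|²) ∈ E*` for `s ∈ Ω₁`,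
slices of `Ω` of measure `cα*`, and `x̄ - (s,|s|²) + (t,|t|²) ∈ E` on `Ω`. -/
theorem stmt11 (d : ℕ) (hd : 2 ≤ d) :
    ∃ c : ℝ, 0 < c ∧
      ∀ (E Es : Set (Pt (d - 1))), MeasurableSet E → MeasurableSet Es →
        0 < volume E → volume E < ⊤ → 0 < volume Es → volume Es < ⊤ →
        0 < incT (d - 1) E Es →
        ∃ (xb : Pt (d - 1)) (Ω₁ : Set (Vec (d - 1)))
          (Ω : Set (Vec (d - 1) × Vec (d - 1))),
          xb ∈ E ∧ MeasurableSet Ω₁ ∧ MeasurableSet Ω ∧ Ω ⊆ Ω₁ ×ˢ Set.univ ∧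
          volume Ω₁ = ENNReal.ofReal c * (incT (d - 1) E Es / volume E) ∧
          (∀ s ∈ Ω₁, (xb.1 - s, xb.2 - ‖s‖ ^ 2) ∈ Es) ∧
          (∀ s ∈ Ω₁, volume {t | (s, t) ∈ Ω} =
            ENNReal.ofReal c * (incT (d - 1) E Es / volume Es)) ∧
          (∀ p ∈ Ω, (xb.1 - p.1 + p.2, xb.2 - ‖p.1‖ ^ 2 + ‖p.2‖ ^ 2) ∈ E) := by
  have : Nonempty (Fin (d - 1)) := ⟨⟨0, by omega⟩⟩
  refine ⟨1 / 4, by norm_num, fun E Es hE hEs _ hE_fin _ hEs_fin hI => ?_⟩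
  have hI_fin : incT (d - 1) E Es ≠ ⊤ := incT_ne_top hE hEs hE_fin.ne hEs_fin.ne
  refine exists_tower (γ := paraboloid) (μ := volume) measurable_paraboloid hE hEs ?_
  rw [← incT_eq_setLIntegral_volume_subFiber E hEs]
  refine mul_div_mul_add_lt hI.ne' hI_fin ?_
  rw [← ENNReal.ofReal_add (by norm_num) (by norm_num), ENNReal.ofReal_lt_one]
  norm_num
end
end

section
/- For each integer n ≥ 1 there exists a constant c > 0, depending only on n, with the following property. Let 𝒞 ⊆ ℝ^n be a bounded balanced convex set of positive measure, let δ, λ > 0, and let μ be a positive finite measure supported on 𝒞. Suppose that for every balanced convex subset 𝒞' ⊆ 𝒞 satisfying |𝒞'| ≤ δ |𝒞| one has μ(𝒞 \ 𝒞') ≥ λ. Then ∫_{𝒞^n} |det(u₁, …, u_n)| dμ(u₁) ⋯ dμ(u_n) ≥ c δ^n λ^n |𝒞|, where det(u₁, …, u_n) denotes the determinant of the n × n matrix whose columns are u₁, …, u_n. -/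
open MeasureTheory ENNReal

noncomputable section

/-!
The hypothesis on `μ` is applied to the slabs `𝒞' = {x ∈ 𝒞 | |f x| < ε |f v|}`, where `f` is a
linear functional and `v ∈ 𝒞`. About `1 / (2 ε)` translates of such a slab along the segment
`[0, v]` are disjoint and lie in `𝒞 + 𝒞 = 2 𝒞`, so `|𝒞'| ≤ δ |𝒞|` for some `ε` comparable to `δ`.
Hence `|f x| ≥ ε |f v|` on a set of `μ`-mass at least `λ`. Applied successively to each argument of
the determinant, this gives `∫ |det| ≥ (ε λ)ⁿ |det v|` for all `v₁, …, vₙ ∈ 𝒞`. If `v` maximizes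
`|det v|` over `𝒞ⁿ` up to a factor `2`, then by Cramer's rule every point of `𝒞` has coordinates in
`[-2, 2]` with respect to `v`, so `|𝒞| ≤ 4ⁿ |det v|`.
-/

theorem lintegral_pi_fin_succ {m : ℕ} {α : Fin (m + 1) → Type*} [∀ i, MeasurableSpace (α i)]
    (μ : ∀ i, Measure (α i)) [∀ i, SigmaFinite (μ i)] {φ : (∀ i, α i) → ℝ≥0∞}
    (hφ : Measurable φ) :
    ∫⁻ u, φ u ∂Measure.pi μ =
      ∫⁻ x, ∫⁻ y, φ (Fin.cons x y) ∂Measure.pi (fun i : Fin m => μ i.succ) ∂μ 0 := by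
  have he := (measurePreserving_piFinSuccAbove μ 0).symm
  rw [← he.lintegral_comp hφ]
  refine (lintegral_prod _ (hφ.comp he.measurable).aemeasurable).trans ?_
  simp only [MeasurableEquiv.piFinSuccAbove_symm_apply, Fin.insertNthEquiv_zero]
  rfl

section Multilinear

variable {𝕜 E F : Type*} [NontriviallyNormedField 𝕜] [NormedAddCommGroup E] [NormedSpace 𝕜 E]
  [MeasurableSpace E] [OpensMeasurableSpace E] [SecondCountableTopology E]
  [NormedAddCommGroup F] [NormedSpace 𝕜 F]

theorem pow_mul_enorm_le_lintegral_pi {μ : Measure E} [SigmaFinite μ] {C : Set E} {ε L : ℝ≥0∞}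
    (hμ : ∀ f : E →L[𝕜] F, ∀ v ∈ C, L ≤ μ {x | ε * ‖f v‖ₑ ≤ ‖f x‖ₑ}) {m : ℕ}
    (g : ContinuousMultilinearMap 𝕜 (fun _ : Fin m => E) F) {v : Fin m → E} (hv : ∀ i, v i ∈ C) :
    (ε * L) ^ m * ‖g v‖ₑ ≤ ∫⁻ u, ‖g u‖ₑ ∂Measure.pi fun _ => μ := by
  induction m with
  | zero => simp [Subsingleton.elim v 0, lintegral_unique]
  | succ m ih =>
    let f : E →L[𝕜] F :=
      (ContinuousMultilinearMap.apply 𝕜 (fun _ : Fin m => E) F (Fin.tail v)).comp g.curryLeft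
    have hf : f (v 0) = g v := by simp [f]
    calc (ε * L) ^ (m + 1) * ‖g v‖ₑ
        = (ε * L) ^ m * (ε * ‖f (v 0)‖ₑ * L) := by rw [hf]; ring
      _ ≤ (ε * L) ^ m * ∫⁻ x, ‖f x‖ₑ ∂μ := by
          gcongr
          exact (mul_le_mul_right (hμ f _ (hv 0)) _).trans
            (mul_meas_ge_le_lintegral f.continuous.enorm.measurable _)
      _ ≤ ∫⁻ x, (ε * L) ^ m * ‖f x‖ₑ ∂μ := lintegral_const_mul_le _ _
      _ ≤ ∫⁻ x, ∫⁻ y, ‖g (Fin.cons x y)‖ₑ ∂(Measure.pi fun _ => μ) ∂μ :=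
          lintegral_mono fun x => ih (g.curryLeft x) fun i => hv i.succ
      _ = ∫⁻ u, ‖g u‖ₑ ∂Measure.pi fun _ => μ :=
          (lintegral_pi_fin_succ (fun _ => μ) g.cont.enorm.measurable).symm

end Multilinear

section Convex

variable {E F : Type*} [AddCommGroup E] [Module ℝ E] [SeminormedAddCommGroup F] [NormedSpace ℝ F]
  {C : Set E}

theorem zero_mem_of_convex_of_neg_mem (hC : Convex ℝ C) (hneg : ∀ x ∈ C, -x ∈ C) {v : E}
    (hv : v ∈ C) : (0 : E) ∈ C := by
  simpa using hC hv (hneg v hv) one_half_pos.le one_half_pos.le (add_halves 1)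

theorem convex_inter_preimage_ball (hC : Convex ℝ C) (f : E →ₗ[ℝ] F) (r : ℝ) :
    Convex ℝ (C ∩ f ⁻¹' Metric.ball 0 r) :=
  hC.inter ((convex_ball 0 r).linear_preimage f)

end Convex

section Slab

open Module
open scoped Pointwise

variable {E : Type*} [NormedAddCommGroup E] [NormedSpace ℝ E] [FiniteDimensional ℝ E]
  [MeasurableSpace E] [BorelSpace E] (ν : Measure E) [ν.IsAddHaarMeasure]

theorem card_mul_measure_le_of_pairwise_disjoint_vadd {ι : Type*} [Fintype ι] {C S : Set E}
    (hC : Convex ℝ C) (hSC : S ⊆ C) (hS : NullMeasurableSet S ν) {p : ι → E} (hp : ∀ i, p i ∈ C)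
    (hdisj : Pairwise fun i j => Disjoint (p i +ᵥ S) (p j +ᵥ S)) :
    Fintype.card ι * ν S ≤ 2 ^ finrank ℝ E * ν C := by
  have hsub : ⋃ i, (p i +ᵥ S) ⊆ (2 : ℝ) • C := by
    rw [← one_add_one_eq_two, hC.add_smul zero_le_one zero_le_one, one_smul]
    exact Set.iUnion_subset fun i => (Set.vadd_set_mono hSC).trans
      (Set.vadd_set_subset_add (hp i))
  calc Fintype.card ι * ν S = ν (⋃ i, (p i +ᵥ S)) := by
        rw [measure_iUnion₀ (fun i j hij => (hdisj hij).aedisjoint) fun i => hS.vadd (p i)]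
        simp
    _ ≤ ν ((2 : ℝ) • C) := measure_mono hsub
    _ = 2 ^ finrank ℝ E * ν C := by
        rw [Measure.addHaar_smul]
        simp

theorem natCast_mul_measure_inter_preimage_ball_le {C : Set E} (hC : Convex ℝ C)
    (h0 : 0 ∈ C) (f : E →ₗ[ℝ] ℝ) {v : E} (hv : v ∈ C) (N : ℕ) :
    N * ν (C ∩ f ⁻¹' Metric.ball 0 (|f v| / (2 * N))) ≤ 2 ^ finrank ℝ E * ν C := by
  have hp (j : Fin N) : ((j : ℝ) / N) • v ∈ C :=
    hC.smul_mem_of_zero_mem h0 hv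
      ⟨by positivity, div_le_one_of_le₀ (mod_cast j.2.le) (by positivity)⟩
  have hdisj : Pairwise fun i j : Fin N =>
      Disjoint (((i : ℝ) / N) • v +ᵥ (C ∩ f ⁻¹' Metric.ball 0 (|f v| / (2 * N))))
        (((j : ℝ) / N) • v +ᵥ (C ∩ f ⁻¹' Metric.ball 0 (|f v| / (2 * N)))) := by
    intro i j hij
    have himage (k : Fin N) : Set.MapsTo f
        (((k : ℝ) / N) • v +ᵥ (C ∩ f ⁻¹' Metric.ball 0 (|f v| / (2 * N))))
        (Metric.ball ((k : ℝ) / N * f v) (|f v| / (2 * N))) := by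
      rintro _ ⟨x, ⟨-, hx⟩, rfl⟩
      simpa [dist_eq_norm] using hx
    refine .mono (himage i) (himage j) (.preimage f (Metric.ball_disjoint_ball ?_))
    have hij' : (1 : ℝ) ≤ |(i : ℝ) - j| := by
      exact_mod_cast Int.one_le_abs
        (sub_ne_zero.2 (Nat.cast_injective.ne (Fin.val_ne_of_ne hij)) : ((i : ℕ) : ℤ) - (j : ℕ) ≠ 0)
    calc |f v| / (2 * N) + |f v| / (2 * N) = 1 * (|f v| / N) := by ring
      _ ≤ |(i : ℝ) - j| * (|f v| / N) := by gcongr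
      _ = dist ((i : ℝ) / N * f v) ((j : ℝ) / N * f v) := by
        rw [Real.dist_eq, ← sub_mul, ← sub_div, abs_mul, abs_div, Nat.abs_cast]; ring
  simpa using card_mul_measure_le_of_pairwise_disjoint_vadd ν hC Set.inter_subset_left
    ((convex_inter_preimage_ball hC f _).nullMeasurableSet ν) hp hdisj

theorem measure_inter_preimage_ball_le {C : Set E} (hC : Convex ℝ C) (h0 : 0 ∈ C)
    (f : E →ₗ[ℝ] ℝ) {v : E} (hv : v ∈ C) {δ : ℝ} (hδ : 0 < δ) (hδ1 : δ ≤ 1) :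
    ν (C ∩ f ⁻¹' Metric.ball 0 (δ / 2 ^ (finrank ℝ E + 2) * |f v|)) ≤ ENNReal.ofReal δ * ν C := by
  set d := finrank ℝ E
  set N := ⌈2 ^ d / δ⌉₊
  have hN : N ≠ 0 := (Nat.ceil_pos.2 (by positivity)).ne'
  have hNδ_ge : 2 ^ d ≤ N * δ := (div_le_iff₀ hδ).1 (Nat.le_ceil _)
  have hNδ_le : N * δ ≤ 2 ^ d + δ := by
    calc N * δ ≤ (2 ^ d / δ + 1) * δ := by gcongr; exact (Nat.ceil_lt_add_one (by positivity)).le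
      _ = 2 ^ d + δ := by field_simp
  have hcoeff : δ / 2 ^ (d + 2) ≤ 1 / (2 * N) := by
    have h2d : (1 : ℝ) ≤ 2 ^ d := one_le_pow₀ one_le_two
    rw [div_le_div_iff₀ (by positivity) (by positivity), pow_add]
    linarith
  have hradius : δ / 2 ^ (d + 2) * |f v| ≤ |f v| / (2 * N) :=
    (mul_le_mul_of_nonneg_right hcoeff (abs_nonneg _)).trans_eq (one_div_mul_eq_div _ _)
  have hvol : (2 : ℝ≥0∞) ^ d ≤ N * ENNReal.ofReal δ := by
    simpa [ENNReal.ofReal_mul, ENNReal.ofReal_pow] using ENNReal.ofReal_le_ofReal hNδ_ge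
  refine (ENNReal.mul_le_mul_iff_right (Nat.cast_ne_zero.2 hN) (natCast_ne_top N)).1 ?_
  calc N * ν (C ∩ f ⁻¹' Metric.ball 0 (δ / 2 ^ (d + 2) * |f v|))
      ≤ N * ν (C ∩ f ⁻¹' Metric.ball 0 (|f v| / (2 * N))) := by gcongr
    _ ≤ 2 ^ d * ν C := natCast_mul_measure_inter_preimage_ball_le ν hC h0 f hv N
    _ ≤ N * (ENNReal.ofReal δ * ν C) := by rw [← mul_assoc]; gcongr

end Slab

section Determinant

open Module
open scoped Pointwise

theorem span_eq_top_of_measure_ne_zero {E : Type*} [NormedAddCommGroup E] [NormedSpace ℝ E]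
    [FiniteDimensional ℝ E] [MeasurableSpace E] [BorelSpace E] (ν : Measure E)
    [ν.IsAddHaarMeasure] {s : Set E} (hs : ν s ≠ 0) : Submodule.span ℝ s = ⊤ := by
  by_contra hspan
  exact hs (measure_mono_null Submodule.subset_span (Measure.addHaar_submodule ν _ hspan))

theorem exists_basis_forall_mem_of_span_eq_top {ι K V : Type*} [DivisionRing K] [AddCommGroup V]
    [Module K V] (b : Basis ι K V) {s : Set V} (hs : Submodule.span K s = ⊤) :
    ∃ v : Basis ι K V, ∀ i, v i ∈ s := by
  let v := Basis.ofSpan hs.ge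
  refine ⟨v.reindex (v.indexEquiv b), fun i => Basis.ofSpan_subset hs.ge ?_⟩
  simp [v]

theorem basis_det_update {ι R M : Type*} [Fintype ι] [DecidableEq ι] [CommRing R] [AddCommGroup M]
    [Module R M] (b v : Basis ι R M) (i : ι) (x : M) :
    b.det (Function.update v i x) = b.det v * v.repr x i := by
  have hself : v.det (Function.update v i x) = v.repr x i := by
    rw [v.det_apply, Basis.toMatrix_update, Basis.toMatrix_self, ← Matrix.cramer_apply,
      Matrix.cramer_one, Module.End.one_apply]
  rw [← hself]
  exact DFunLike.congr_fun (b.det.eq_smul_basis_det v) (Function.update v i x)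

variable {ι E : Type*} [Fintype ι] [DecidableEq ι] [NormedAddCommGroup E] [NormedSpace ℝ E]

theorem continuous_basis_det_s15 (b : Basis ι ℝ E) : Continuous b.det := by
  have := b.finiteDimensional_of_finite
  have hcoord (i : ι) : Continuous (b.coord i) := (b.coord i).continuous_of_finiteDimensional
  rw [funext b.det_apply]
  exact .matrix_det (continuous_matrix fun i j => (hcoord i).comp (continuous_apply j))

variable [MeasurableSpace E] [BorelSpace E] (b v : Basis ι ℝ E) {C : Set E}

theorem addHaar_le_of_abs_repr_le {r : ℝ} (hr : 0 < r) (hC : ∀ x ∈ C, ∀ i, |v.repr x i| ≤ r) :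
    b.addHaar C ≤ ENNReal.ofReal (2 * r) ^ Fintype.card ι * ‖b.det v‖ₑ := by
  have hsub : C ⊆ (-(r • ∑ i, v i)) +ᵥ parallelepiped fun i => (2 * r) • v i := by
    intro x hx
    rw [Set.mem_vadd_set_iff_neg_vadd_mem, mem_parallelepiped_iff]
    refine ⟨fun i => (v.repr x i + r) / (2 * r), ⟨fun i => ?_, fun i => ?_⟩, ?_⟩
    · exact div_nonneg (neg_le_iff_add_nonneg.1 (abs_le.1 (hC x hx i)).1) (by positivity)
    · have := (abs_le.1 (hC x hx i)).2
      exact div_le_one_of_le₀ (by linarith) (by positivity)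
    · simp [smul_smul, div_mul_cancel₀ _ (mul_pos two_pos hr).ne', add_smul,
        Finset.sum_add_distrib, Finset.smul_sum, add_comm, v.sum_repr]
  calc b.addHaar C ≤ b.addHaar (parallelepiped fun i => (2 * r) • v i) :=
        (measure_mono hsub).trans_eq (measure_vadd ..)
    _ = ENNReal.ofReal (2 * r) ^ Fintype.card ι * ‖b.det v‖ₑ := by
        rw [Measure.addHaar_parallelepiped, AlternatingMap.map_smul_univ,
          ← Real.enorm_eq_ofReal_abs]
        simp only [smul_eq_mul, Finset.prod_const, Finset.card_univ, enorm_mul, enorm_pow,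
          Real.enorm_of_nonneg (mul_pos two_pos hr).le]

theorem exists_basis_forall_mem_abs_det_le (hC : Bornology.IsBounded C) (hC0 : b.addHaar C ≠ 0) :
    ∃ v : Basis ι ℝ E, (∀ i, v i ∈ C) ∧
      ∀ w : ι → E, (∀ i, w i ∈ C) → |b.det w| ≤ 2 * |b.det v| := by
  have := b.finiteDimensional_of_finite
  obtain ⟨v₀, hv₀⟩ :=
    exists_basis_forall_mem_of_span_eq_top b (span_eq_top_of_measure_ne_zero _ hC0)
  let D : Set ℝ := (fun w => |b.det w|) '' Set.univ.pi fun _ : ι => C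
  have hD {w : ι → E} (hw : ∀ i, w i ∈ C) : |b.det w| ∈ D := ⟨w, fun i _ => hw i, rfl⟩
  have hbdd : BddAbove D :=
    ((Bornology.IsBounded.pi fun _ => hC).isCompact_closure.image
      (continuous_basis_det_s15 b).abs).bddAbove.mono (Set.image_mono subset_closure)
  have hpos : 0 < sSup D :=
    (abs_pos.2 (b.isUnit_det v₀).ne_zero).trans_le (le_csSup hbdd (hD hv₀))
  obtain ⟨_, ⟨v, hv, rfl⟩, hlt⟩ := exists_lt_of_lt_csSup ⟨_, hD hv₀⟩ (half_lt_self hpos)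
  have hdet : b.det v ≠ 0 := abs_pos.1 ((half_pos hpos).trans hlt)
  obtain ⟨hli, hspan⟩ := b.is_basis_iff_det.2 hdet.isUnit
  refine ⟨.mk hli hspan.ge, fun i => by simpa using hv i trivial, fun w hw => ?_⟩
  rw [Basis.coe_mk]
  linarith [le_csSup hbdd (hD hw)]

theorem exists_forall_mem_addHaar_le_enorm_det (hC : Bornology.IsBounded C)
    (hC0 : b.addHaar C ≠ 0) :
    ∃ v : ι → E, (∀ i, v i ∈ C) ∧ b.addHaar C ≤ 4 ^ Fintype.card ι * ‖b.det v‖ₑ := by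
  obtain ⟨v, hvC, hv⟩ := exists_basis_forall_mem_abs_det_le b hC hC0
  refine ⟨v, hvC, ?_⟩
  have hrepr (x : E) (hx : x ∈ C) (i : ι) : |v.repr x i| ≤ 2 := by
    have hmem := hv (Function.update v i x) fun j => by
      obtain rfl | hj := eq_or_ne j i <;> simp [*]
    rw [basis_det_update, abs_mul, mul_comm] at hmem
    exact le_of_mul_le_mul_right hmem (abs_pos.2 (b.isUnit_det v).ne_zero)
  simpa [show (2 : ℝ) * 2 = 4 by norm_num] using addHaar_le_of_abs_repr_le b v two_pos hrepr

end Determinant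

section Spread

open Module

variable {E : Type*} [NormedAddCommGroup E] [NormedSpace ℝ E] [FiniteDimensional ℝ E]
  [MeasurableSpace E] [BorelSpace E] (ν : Measure E) [ν.IsAddHaarMeasure] {C : Set E} {δ : ℝ}
  {μ : Measure E} {L : ℝ≥0∞}

theorem le_restrict_setOf_enorm_le (hC : Convex ℝ C) (hneg : ∀ x ∈ C, -x ∈ C) (hδ : 0 < δ)
    (hμ : ∀ C' ⊆ C, Convex ℝ C' → (∀ x ∈ C', -x ∈ C') → ν C' ≤ ENNReal.ofReal δ * ν C →
      L ≤ μ (C \ C'))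
    (f : E →L[ℝ] ℝ) {v : E} (hv : v ∈ C) :
    L ≤ μ.restrict C {x | ENNReal.ofReal (δ / 2 ^ (finrank ℝ E + 2)) * ‖f v‖ₑ ≤ ‖f x‖ₑ} := by
  obtain hδ1 | hδ1 := lt_or_ge 1 δ
  · have hνC : ν C ≤ ENNReal.ofReal δ * ν C :=
      le_mul_of_one_le_left zero_le (ENNReal.one_le_ofReal.2 hδ1.le)
    exact (hμ C subset_rfl hC hneg hνC).trans (by simp)
  set ε := δ / 2 ^ (finrank ℝ E + 2)
  have h0 := zero_mem_of_convex_of_neg_mem hC hneg hv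
  calc L ≤ μ (C \ (C ∩ f ⁻¹' Metric.ball 0 (ε * |f v|))) :=
        hμ _ Set.inter_subset_left (convex_inter_preimage_ball hC f.toLinearMap _)
          (fun x hx => ⟨hneg x hx.1, by simpa using hx.2⟩)
          (measure_inter_preimage_ball_le ν hC h0 f hv hδ hδ1)
    _ ≤ μ ({x | ENNReal.ofReal ε * ‖f v‖ₑ ≤ ‖f x‖ₑ} ∩ C) := by
        refine measure_mono fun x ⟨hxC, hx⟩ => ⟨?_, hxC⟩
        have hfx : ε * |f v| ≤ |f x| := by simpa [hxC] using hx
        simpa [Real.enorm_eq_ofReal_abs, ENNReal.ofReal_mul (show 0 ≤ ε by positivity)]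
          using ENNReal.ofReal_le_ofReal hfx
    _ ≤ μ.restrict C {x | ENNReal.ofReal ε * ‖f v‖ₑ ≤ ‖f x‖ₑ} := Measure.le_restrict_apply _ _

theorem pow_mul_enorm_le_setLIntegral_pi [SigmaFinite μ]
    (hC : Convex ℝ C) (hneg : ∀ x ∈ C, -x ∈ C) (hδ : 0 < δ)
    (hμ : ∀ C' ⊆ C, Convex ℝ C' → (∀ x ∈ C', -x ∈ C') → ν C' ≤ ENNReal.ofReal δ * ν C →
      L ≤ μ (C \ C'))
    {m : ℕ} (g : ContinuousMultilinearMap ℝ (fun _ : Fin m => E) ℝ) {v : Fin m → E}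
    (hv : ∀ i, v i ∈ C) :
    (ENNReal.ofReal (δ / 2 ^ (finrank ℝ E + 2)) * L) ^ m * ‖g v‖ₑ ≤
      ∫⁻ u in Set.univ.pi (fun _ => C), ‖g u‖ₑ ∂Measure.pi fun _ => μ := by
  rw [Measure.restrict_pi_pi]
  exact pow_mul_enorm_le_lintegral_pi
    (fun f _ hx => le_restrict_setOf_enorm_le ν hC hneg hδ hμ f hx) g hv

end Spread

theorem addHaar_basisFun (ι : Type*) [Fintype ι] : (Pi.basisFun ℝ ι).addHaar = volume := by
  rw [Module.Basis.addHaar_def, Module.Basis.parallelepiped_basisFun, addHaarMeasure_eq_volume_pi]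

theorem basisFun_det_eq_det_of {ι R : Type*} [Fintype ι] [DecidableEq ι] [CommRing R]
    (u : ι → ι → R) : (Pi.basisFun R ι).det u = Matrix.det (Matrix.of fun i j => u j i) := by
  rw [Pi.basisFun_det_apply, ← Matrix.det_transpose]
  rfl

theorem stmt15_general {n : ℕ} {E : Type*} [NormedAddCommGroup E] [NormedSpace ℝ E]
    [MeasurableSpace E] [BorelSpace E] (b : Module.Basis (Fin n) ℝ E) {C : Set E}
    (hC : Convex ℝ C) (hb : Bornology.IsBounded C) (hneg : ∀ x ∈ C, -x ∈ C) {δ lam : ℝ}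
    (hδ : 0 < δ) (hlam : 0 ≤ lam) {μ : Measure E} [SigmaFinite μ]
    (hμ : ∀ C' ⊆ C, Convex ℝ C' → (∀ x ∈ C', -x ∈ C') →
      b.addHaar C' ≤ ENNReal.ofReal δ * b.addHaar C → ENNReal.ofReal lam ≤ μ (C \ C')) :
    ENNReal.ofReal ((2 ^ (n + 4))⁻¹ ^ n * δ ^ n * lam ^ n) * b.addHaar C ≤
      ∫⁻ u in Set.univ.pi (fun _ : Fin n => C), ENNReal.ofReal |b.det u|
        ∂(Measure.pi fun _ : Fin n => μ) := by
  have := b.finiteDimensional_of_finite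
  obtain hC0 | hC0 := eq_or_ne (b.addHaar C) 0
  · simp only [hC0, mul_zero, zero_le]
  obtain ⟨v, hv, hCv⟩ := exists_forall_mem_addHaar_le_enorm_det b hb hC0
  let g : ContinuousMultilinearMap ℝ (fun _ : Fin n => E) ℝ :=
    ⟨b.det.toMultilinearMap, continuous_basis_det_s15 b⟩
  have hg := pow_mul_enorm_le_setLIntegral_pi b.addHaar hC hneg hδ hμ g hv
  rw [Module.finrank_eq_card_basis b, Fintype.card_fin] at hg
  rw [Fintype.card_fin] at hCv
  have hconst : ENNReal.ofReal ((2 ^ (n + 4))⁻¹ ^ n * δ ^ n * lam ^ n) * 4 ^ n =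
      (ENNReal.ofReal (δ / 2 ^ (n + 2)) * ENNReal.ofReal lam) ^ n := by
    rw [← mul_pow, ← mul_pow, ENNReal.ofReal_pow (by positivity), ← mul_pow,
      ← ENNReal.ofReal_ofNat, ← ENNReal.ofReal_mul (by positivity),
      ← ENNReal.ofReal_mul (by positivity)]
    ring_nf
  simp only [← Real.enorm_eq_ofReal_abs]
  calc ENNReal.ofReal ((2 ^ (n + 4))⁻¹ ^ n * δ ^ n * lam ^ n) * b.addHaar C
      ≤ ENNReal.ofReal ((2 ^ (n + 4))⁻¹ ^ n * δ ^ n * lam ^ n) * (4 ^ n * ‖b.det v‖ₑ) := by gcongr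
    _ = (ENNReal.ofReal (δ / 2 ^ (n + 2)) * ENNReal.ofReal lam) ^ n * ‖b.det v‖ₑ := by
        rw [← mul_assoc, hconst]
    _ ≤ ∫⁻ u in Set.univ.pi (fun _ => C), ‖b.det u‖ₑ ∂Measure.pi fun _ => μ := hg

/-- determinant lower bound: if `μ` is a finite measure
supported on a bounded balanced convex set `𝒞` which gives mass at least `λ`
to the complement in `𝒞` of every balanced convex subset of measure at most
`δ|𝒞|`, then `∫_{𝒞^n} |det(u₁,…,uₙ)| dμ⋯dμ ≥ c δ^n λ^n |𝒞|`. -/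
theorem stmt15 (n : ℕ) (hn : 1 ≤ n) :
    ∃ c : ℝ, 0 < c ∧
      ∀ (𝒞 : Set (Fin n → ℝ)), Convex ℝ 𝒞 → Bornology.IsBounded 𝒞 →
        (∀ x ∈ 𝒞, -x ∈ 𝒞) → 0 < volume 𝒞 →
      ∀ (δ lam : ℝ), 0 < δ → 0 < lam →
      ∀ (μ : Measure (Fin n → ℝ)) [IsFiniteMeasure μ], μ 𝒞ᶜ = 0 →
        (∀ 𝒞' ⊆ 𝒞, Convex ℝ 𝒞' → (∀ x ∈ 𝒞', -x ∈ 𝒞') →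
          volume 𝒞' ≤ ENNReal.ofReal δ * volume 𝒞 →
          ENNReal.ofReal lam ≤ μ (𝒞 \ 𝒞')) →
        ENNReal.ofReal (c * δ ^ n * lam ^ n) * volume 𝒞 ≤
          ∫⁻ u in Set.univ.pi (fun _ : Fin n => 𝒞),
            ENNReal.ofReal |Matrix.det (Matrix.of fun i j => u j i)|
              ∂(Measure.pi fun _ : Fin n => μ) := by
  refine ⟨(2 ^ (n + 4))⁻¹ ^ n, by positivity, fun 𝒞 hC hb hneg _ δ lam hδ hlam μ _ _ hμ => ?_⟩
  simp only [← addHaar_basisFun, ← basisFun_det_eq_det_of] at hμ ⊢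
  exact stmt15_general _ hC hb hneg hδ hlam.le hμ
end
end

section
/- There exists a constant c > 0, depending only on d, with the following property. Let α, α* > 0, let Ω₁ ⊆ ℝ^{d−1} be Lebesgue measurable with |Ω₁| ≥ α, and let Ω ⊆ Ω₁ × ℝ^{d−1} be Lebesgue measurable with |{t : (s, t) ∈ Ω}| ≥ α* for every s ∈ Ω₁. Define Ω̃ = {(s, u) : (s, s + u) ∈ Ω} and Φ(s, u) = (u, s·u) ∈ ℝ^{d−1} × ℝ. Then the outer Lebesgue measure of the image satisfies |Φ(Ω̃)| ≥ c α*^{d/(d−1)} α^{1/(d−1)}. -/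
open MeasureTheory ENNReal
open scoped RealInnerProductSpace

noncomputable section

/-! Write `W` for the sheared set, `W_s` for its sections, `n = d - 1`, and let `P(U)` be the set of
combinations with coefficients in `[-1, 1]` of `U = (U₁, …, Uₙ)`. Among `n + 1` vectors of an
`n`-dimensional space, one lies in the `P` of the others, so `|F|^(n+1) ≤ (n+1) ∫_{Fⁿ} |P(U)| dU`
for every measurable `F`. Take `F = W_s`, integrate over `s` and exchange the integrals: for fixed
`U` the set `{s : U ∈ W_sⁿ}` is mapped by `s ↦ (s·U₁, …, s·Uₙ)` into the fiber over `U` of `Φ(W)ⁿ`,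
and this linear map scales volume by `|P(U)| / 2ⁿ`. Hence
`∫ |W_s|^(n+1) ds ≤ (n+1) 2ⁿ |Φ(W)|ⁿ`, and Markov's inequality bounds the left side from below. -/

/-- The centrally symmetric parallelepiped spanned by the vectors `U i`. Mathlib's `parallelepiped`
has coefficients in `[0, 1]`; here they range over `[-1, 1]`. -/
def symmParallelepiped {ι E : Type*} [Fintype ι] [AddCommGroup E] [Module ℝ E] (U : ι → E) :
    Set E :=
  (fun c : ι → ℝ => ∑ k, c k • U k) '' Set.Icc (-1) 1

lemma exists_mem_symmParallelepiped_removeNth {n : ℕ} {E : Type*} [AddCommGroup E] [Module ℝ E]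
    {x : Fin (n + 1) → E} (hx : ¬ LinearIndependent ℝ x) :
    ∃ i, x i ∈ symmParallelepiped (i.removeNth x) := by
  obtain ⟨g, hg, j, hj⟩ := Fintype.not_linearIndependent_iff.mp hx
  -- Solve the dependence for the vector whose coefficient is largest.
  obtain ⟨i, hi⟩ := Finite.exists_max fun k => |g k|
  have hgi : 0 < |g i| := (abs_pos.mpr hj).trans_le (hi j)
  have hcoeff (k : Fin n) : |-(g (i.succAbove k) / g i)| ≤ 1 := by
    rw [abs_neg, abs_div]
    exact (div_le_one hgi).mpr (hi _)
  refine ⟨i, fun k => -(g (i.succAbove k) / g i),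
    ⟨fun k => (abs_le.mp (hcoeff k)).1, fun k => (abs_le.mp (hcoeff k)).2⟩, ?_⟩
  have hsolve : g i • x i = -∑ k, g (i.succAbove k) • x (i.succAbove k) :=
    eq_neg_of_add_eq_zero_left ((Fin.sum_univ_succAbove _ i).symm.trans hg)
  calc ∑ k, -(g (i.succAbove k) / g i) • i.removeNth x k
      = (g i)⁻¹ • -∑ k, g (i.succAbove k) • x (i.succAbove k) := by
        simp only [Fin.removeNth_apply, ← Finset.sum_neg_distrib, Finset.smul_sum, smul_neg,
          smul_smul, neg_smul, div_eq_inv_mul]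
    _ = x i := by rw [← hsolve, inv_smul_smul₀ (abs_pos.mp hgi)]

lemma isClosed_setOf_mem_symmParallelepiped {ι E : Type*} [Fintype ι] [AddCommGroup E] [Module ℝ E]
    [TopologicalSpace E] [ContinuousAdd E] [ContinuousSMul ℝ E] [T2Space E] :
    IsClosed {p : E × (ι → E) | p.1 ∈ symmParallelepiped p.2} := by
  have hgraph : IsClosed {q : Set.Icc (-1 : ι → ℝ) 1 × (E × (ι → E)) |
      ∑ k, (q.1 : ι → ℝ) k • q.2.2 k = q.2.1} :=
    isClosed_eq
      (continuous_finsetSum _ fun k _ => ((continuous_apply k).comp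
        (continuous_subtype_val.comp continuous_fst)).smul (by fun_prop)) (by fun_prop)
  convert isClosedMap_snd_of_compactSpace _ hgraph using 1
  ext ⟨x, U⟩
  simp [symmParallelepiped]

section Measure

variable {X Y : Type*} [MeasurableSpace X] [MeasurableSpace Y]

lemma measurableSet_setOf_forall_prodMk {ι : Type*} [Countable ι] {W : Set (X × Y)}
    (hW : MeasurableSet W) : MeasurableSet {p : X × (ι → Y) | ∀ i, (p.1, p.2 i) ∈ W} := by
  rw [Set.ofPred_forall]
  exact MeasurableSet.iInter fun i =>
    (show Measurable fun p : X × (ι → Y) => (p.1, p.2 i) by fun_prop) hW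

lemma lintegral_setLIntegral_section {μ : Measure X} {ν : Measure Y} [SFinite μ] [SFinite ν]
    {S : Set (X × Y)} (hS : MeasurableSet S) {f : Y → ℝ≥0∞} (hf : Measurable f) :
    ∫⁻ x, ∫⁻ y in {y | (x, y) ∈ S}, f y ∂ν ∂μ = ∫⁻ y, f y * μ {x | (x, y) ∈ S} ∂ν := by
  have hind : Measurable (Function.uncurry fun x y => S.indicator (fun p => f p.2) (x, y)) :=
    (hf.comp measurable_snd).indicator hS
  calc ∫⁻ x, ∫⁻ y in {y | (x, y) ∈ S}, f y ∂ν ∂μ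
      = ∫⁻ x, ∫⁻ y, S.indicator (fun p => f p.2) (x, y) ∂ν ∂μ :=
        lintegral_congr fun x => (lintegral_indicator (measurable_prodMk_left hS) f).symm
    _ = ∫⁻ y, ∫⁻ x, S.indicator (fun p => f p.2) (x, y) ∂μ ∂ν :=
        lintegral_lintegral_swap hind.aemeasurable
    _ = ∫⁻ y, f y * μ {x | (x, y) ∈ S} ∂ν := lintegral_congr fun y =>
        lintegral_indicator_const (measurable_prodMk_right hS) (f y)

lemma measure_prod_pow_eq_lintegral_pi {ι : Type*} [Fintype ι] {μ : Measure X} {ν : Measure Y}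
    [SigmaFinite μ] [SigmaFinite ν] {A : Set (X × Y)} (hA : MeasurableSet A) :
    μ.prod ν A ^ Fintype.card ι =
      ∫⁻ x, Measure.pi (fun _ : ι => ν) {y | ∀ i, (x i, y i) ∈ A} ∂Measure.pi (fun _ : ι => μ) := by
  let S : Set ((ι → X) × (ι → Y)) := {p | ∀ i, (p.1 i, p.2 i) ∈ A}
  have hS : MeasurableSet S := by
    simp only [S, Set.ofPred_forall]
    exact MeasurableSet.iInter fun i =>
      (show Measurable fun p : (ι → X) × (ι → Y) => (p.1 i, p.2 i) by fun_prop) hA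
  have hpi : MeasurableEquiv.arrowProdEquivProdArrow X Y ι ⁻¹' S = Set.univ.pi fun _ => A := by
    ext x
    simp [S, MeasurableEquiv.arrowProdEquivProdArrow, Equiv.arrowProdEquivProdArrow]
  calc μ.prod ν A ^ Fintype.card ι
      = Measure.pi (fun _ : ι => μ.prod ν) (Set.univ.pi fun _ => A) := by simp [Measure.pi_pi]
    _ = (Measure.pi fun _ : ι => μ).prod (Measure.pi fun _ : ι => ν) S := by
        rw [← hpi, (measurePreserving_arrowProdEquivProdArrow X Y ι _ _).measure_preimage_equiv]
    _ = _ := Measure.prod_apply hS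

end Measure

section FiniteDimensional

variable {E : Type*} [NormedAddCommGroup E] [NormedSpace ℝ E] [FiniteDimensional ℝ E]
  [MeasurableSpace E] [BorelSpace E]

lemma measurableSet_setOf_mem_symmParallelepiped {ι : Type*} [Fintype ι] :
    MeasurableSet {p : E × (ι → E) | p.1 ∈ symmParallelepiped p.2} :=
  isClosed_setOf_mem_symmParallelepiped.measurableSet

lemma measurable_measure_symmParallelepiped {ι : Type*} [Fintype ι] (μ : Measure E) [SFinite μ] :
    Measurable fun U : ι → E => μ (symmParallelepiped U) :=
  measurable_measure_prodMk_right measurableSet_setOf_mem_symmParallelepiped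

theorem measure_pow_succ_le_lintegral_symmParallelepiped {n : ℕ} (hn : Module.finrank ℝ E ≤ n)
    (μ : Measure E) [SigmaFinite μ] {F : Set E} (hF : MeasurableSet F) :
    μ F ^ (n + 1) ≤ (n + 1) * ∫⁻ U in {U : Fin n → E | ∀ i, U i ∈ F},
      μ (symmParallelepiped U) ∂Measure.pi fun _ => μ := by
  let T : Set (E × (Fin n → E)) := {p | p.1 ∈ symmParallelepiped p.2} ∩ {p | ∀ i, p.2 i ∈ F}
  have hFn : MeasurableSet {U : Fin n → E | ∀ i, U i ∈ F} := by
    rw [Set.ofPred_forall]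
    exact MeasurableSet.iInter fun i => measurable_pi_apply i hF
  have hT : MeasurableSet T :=
    measurableSet_setOf_mem_symmParallelepiped.inter (measurable_snd hFn)
  have hcover : (Set.univ.pi fun _ : Fin (n + 1) => F) ⊆
      ⋃ i, MeasurableEquiv.piFinSuccAbove (fun _ => E) i ⁻¹' T := by
    intro x hx
    have hdep : ¬ LinearIndependent ℝ x := fun h => by
      have hcard := h.fintype_card_le_finrank
      rw [Fintype.card_fin] at hcard
      omega
    obtain ⟨i, hi⟩ := exists_mem_symmParallelepiped_removeNth hdep
    exact Set.mem_iUnion.mpr ⟨i, hi, fun k => hx (i.succAbove k) (Set.mem_univ _)⟩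
  have hT_measure : μ.prod (Measure.pi fun _ => μ) T =
      ∫⁻ U in {U : Fin n → E | ∀ i, U i ∈ F}, μ (symmParallelepiped U) ∂Measure.pi fun _ => μ := by
    rw [Measure.prod_apply_symm hT, ← lintegral_indicator hFn]
    refine lintegral_congr fun U => ?_
    by_cases hU : ∀ i, U i ∈ F <;> simp [T, hU]
  calc μ F ^ (n + 1) = Measure.pi (fun _ => μ) (Set.univ.pi fun _ : Fin (n + 1) => F) := by
        simp [Measure.pi_pi]
    _ ≤ ∑ i : Fin (n + 1), Measure.pi (fun _ => μ)
          (MeasurableEquiv.piFinSuccAbove (fun _ => E) i ⁻¹' T) :=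
        (measure_mono hcover).trans (measure_iUnion_fintype_le _ _)
    _ = ∑ _i : Fin (n + 1), μ.prod (Measure.pi fun _ => μ) T :=
        Finset.sum_congr rfl fun i _ =>
          (measurePreserving_piFinSuccAbove (fun _ => μ) i).measure_preimage_equiv T
    _ = _ := by simp [hT_measure]

end FiniteDimensional

lemma det_adjoint {𝕜 E : Type*} [RCLike 𝕜] [NormedAddCommGroup E] [InnerProductSpace 𝕜 E]
    [FiniteDimensional 𝕜 E] (T : E →ₗ[𝕜] E) :
    LinearMap.det (LinearMap.adjoint T) = star (LinearMap.det T) := by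
  let b := stdOrthonormalBasis 𝕜 E
  rw [← LinearMap.det_toMatrix b.toBasis, ← LinearMap.det_toMatrix b.toBasis T,
    LinearMap.toMatrix_adjoint, Matrix.det_conjTranspose]

section InnerProductSpace

variable {E : Type*} [NormedAddCommGroup E] [InnerProductSpace ℝ E]

/-- The map `Φ(s, u) = (u, ⟪s, u⟫)` whose image is estimated. -/
def inflationMap (p : E × E) : E × ℝ := (p.2, ⟪p.1, p.2⟫)

variable [MeasurableSpace E] [BorelSpace E]

section Basis

variable {ι : Type*} [Fintype ι] (b : OrthonormalBasis ι ℝ E)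

/-- The coordinates in an orthonormal basis, as a measurable equivalence onto `ι → ℝ`, the space on
which `volume` is the product measure. -/
def coordinateEquiv : E ≃ᵐ (ι → ℝ) :=
  b.measurableEquiv.trans (MeasurableEquiv.toLp 2 (ι → ℝ)).symm

lemma coordinateEquiv_apply (x : E) (i : ι) : coordinateEquiv b x i = ⟪b i, x⟫ :=
  b.repr_apply_apply x i

lemma coordinateEquiv_symm_apply (c : ι → ℝ) : (coordinateEquiv b).symm c = ∑ i, c i • b i :=
  (b.sum_repr_symm (WithLp.toLp 2 c)).symm

variable [FiniteDimensional ℝ E]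

lemma measurePreserving_coordinateEquiv : MeasurePreserving (coordinateEquiv b) :=
  b.measurePreserving_measurableEquiv.trans
    (EuclideanSpace.volume_preserving_symm_measurableEquiv_toLp ι)

lemma volume_symmParallelepiped (U : ι → E) :
    volume (symmParallelepiped U) =
      2 ^ Fintype.card ι * ENNReal.ofReal |LinearMap.det (b.toBasis.constr ℝ U)| := by
  have himage : symmParallelepiped U =
      b.toBasis.constr ℝ U '' ((coordinateEquiv b).symm '' Set.Icc (-1 : ι → ℝ) 1) := by
    rw [symmParallelepiped, Set.image_image]
    refine Set.image_congr fun c _ => ?_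
    simp only [coordinateEquiv_symm_apply, map_sum, map_smul, ← b.coe_toBasis,
      Module.Basis.constr_basis]
  have hcube : volume (Set.Icc (-1 : ι → ℝ) 1) = 2 ^ Fintype.card ι := by
    rw [Real.volume_Icc_pi]
    norm_num
  rw [himage, Measure.addHaar_image_linearMap, MeasurableEquiv.image_symm,
    (measurePreserving_coordinateEquiv b).measure_preimage_equiv, hcube, mul_comm]

lemma volume_image_inner (U : ι → E) (G : Set E) :
    volume ((fun (s : E) (i : ι) => ⟪s, U i⟫) '' G) =
      ENNReal.ofReal |LinearMap.det (b.toBasis.constr ℝ U)| * volume G := by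
  have himage : (fun (s : E) (i : ι) => ⟪s, U i⟫) '' G =
      coordinateEquiv b '' (LinearMap.adjoint (b.toBasis.constr ℝ U) '' G) := by
    rw [Set.image_image]
    refine Set.image_congr fun s _ => ?_
    ext i
    rw [coordinateEquiv_apply, LinearMap.adjoint_inner_right, ← b.coe_toBasis,
      Module.Basis.constr_basis, real_inner_comm]
  rw [himage, MeasurableEquiv.image_eq_preimage_symm,
    (measurePreserving_coordinateEquiv b).symm.measure_preimage_equiv,
    Measure.addHaar_image_linearMap, det_adjoint, star_trivial]

lemma volume_symmParallelepiped_mul_volume (hι : Module.finrank ℝ E = Fintype.card ι) (U : ι → E)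
    (G : Set E) :
    volume (symmParallelepiped U) * volume G =
      2 ^ Fintype.card ι * volume ((fun (s : E) (i : ι) => ⟪s, U i⟫) '' G) := by
  let b := (stdOrthonormalBasis ℝ E).reindex ((finCongr hι).trans (Fintype.equivFin ι).symm)
  rw [volume_symmParallelepiped b, volume_image_inner b, mul_assoc]

end Basis

variable [FiniteDimensional ℝ E]

lemma lintegral_volume_symmParallelepiped_mul_le {n : ℕ} (hn : Module.finrank ℝ E = n)
    (W : Set (E × E)) :
    ∫⁻ U : Fin n → E, volume (symmParallelepiped U) * volume {s | ∀ i, (s, U i) ∈ W} ≤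
      2 ^ n * volume (inflationMap '' W) ^ n := by
  let A := toMeasurable volume (inflationMap '' W)
  have hmaps (U : Fin n → E) : (fun s i => ⟪s, U i⟫) '' {s | ∀ i, (s, U i) ∈ W} ⊆
      {y : Fin n → ℝ | ∀ i, (U i, y i) ∈ A} := by
    rintro _ ⟨s, hs, rfl⟩ i
    exact subset_toMeasurable _ _ ⟨(s, U i), hs i, rfl⟩
  calc ∫⁻ U : Fin n → E, volume (symmParallelepiped U) * volume {s | ∀ i, (s, U i) ∈ W}
      ≤ ∫⁻ U : Fin n → E, 2 ^ n * volume {y : Fin n → ℝ | ∀ i, (U i, y i) ∈ A} := by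
        refine lintegral_mono fun U => ?_
        rw [volume_symmParallelepiped_mul_volume (by simpa using hn), Fintype.card_fin]
        gcongr
        exact hmaps U
    _ = 2 ^ n * ∫⁻ U : Fin n → E, volume {y : Fin n → ℝ | ∀ i, (U i, y i) ∈ A} :=
        lintegral_const_mul' _ _ (by simp)
    _ = 2 ^ n * volume A ^ n := by
        have hpow := measure_prod_pow_eq_lintegral_pi (ι := Fin n) (μ := (volume : Measure E))
          (ν := (volume : Measure ℝ)) (measurableSet_toMeasurable volume (inflationMap '' W))
        rw [Fintype.card_fin] at hpow
        exact congrArg _ hpow.symm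
    _ = 2 ^ n * volume (inflationMap '' W) ^ n := by rw [measure_toMeasurable]

theorem lintegral_volume_section_pow_le {n : ℕ} (hn : Module.finrank ℝ E = n) {W : Set (E × E)}
    (hW : MeasurableSet W) :
    ∫⁻ s, volume {u | (s, u) ∈ W} ^ (n + 1) ≤
      (n + 1) * 2 ^ n * volume (inflationMap '' W) ^ n := by
  calc ∫⁻ s, volume {u | (s, u) ∈ W} ^ (n + 1)
      ≤ ∫⁻ s, (n + 1) * ∫⁻ U in {U : Fin n → E | ∀ i, (s, U i) ∈ W},
          volume (symmParallelepiped U) :=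
        lintegral_mono fun s => measure_pow_succ_le_lintegral_symmParallelepiped hn.le volume
          (measurable_prodMk_left hW)
    _ = (n + 1) * ∫⁻ s, ∫⁻ U in {U : Fin n → E | ∀ i, (s, U i) ∈ W},
          volume (symmParallelepiped U) :=
        lintegral_const_mul' _ _ (by finiteness)
    _ = (n + 1) * ∫⁻ U : Fin n → E,
          volume (symmParallelepiped U) * volume {s | ∀ i, (s, U i) ∈ W} :=
        congrArg _ (lintegral_setLIntegral_section (measurableSet_setOf_forall_prodMk hW)
          (measurable_measure_symmParallelepiped volume))
    _ ≤ (n + 1) * (2 ^ n * volume (inflationMap '' W) ^ n) := by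
        gcongr
        exact lintegral_volume_symmParallelepiped_mul_le hn W
    _ = (n + 1) * 2 ^ n * volume (inflationMap '' W) ^ n := (mul_assoc _ _ _).symm

theorem pow_mul_volume_le_volume_image_inflationMap {n : ℕ} (hn : Module.finrank ℝ E = n)
    {a : ℝ≥0∞} {Ω₁ : Set E} {Ω : Set (E × E)} (hΩ : MeasurableSet Ω)
    (hslice : ∀ s ∈ Ω₁, a ≤ volume {t | (s, t) ∈ Ω}) :
    a ^ (n + 1) * volume Ω₁ ≤
      (n + 1) * 2 ^ n * volume (inflationMap '' {p | (p.1, p.1 + p.2) ∈ Ω}) ^ n := by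
  let W : Set (E × E) := {p | (p.1, p.1 + p.2) ∈ Ω}
  have hW : MeasurableSet W :=
    (show Measurable fun p : E × E => (p.1, p.1 + p.2) by fun_prop) hΩ
  have hsection : Ω₁ ⊆ {s | a ^ (n + 1) ≤ volume {u | (s, u) ∈ W} ^ (n + 1)} := fun s hs => by
    have htranslate : volume {u | (s, u) ∈ W} = volume {t | (s, t) ∈ Ω} :=
      measure_preimage_add volume s {t | (s, t) ∈ Ω}
    rw [Set.mem_ofPred_eq, htranslate]
    gcongr
    exact hslice s hs
  calc a ^ (n + 1) * volume Ω₁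
      ≤ a ^ (n + 1) * volume {s | a ^ (n + 1) ≤ volume {u | (s, u) ∈ W} ^ (n + 1)} := by gcongr
    _ ≤ ∫⁻ s, volume {u | (s, u) ∈ W} ^ (n + 1) :=
        mul_meas_ge_le_lintegral ((measurable_measure_prodMk_left hW).pow_const _) _
    _ ≤ _ := lintegral_volume_section_pow_le hn hW

end InnerProductSpace

lemma ofReal_rpow_mul_rpow_le_of_pow_mul_le {n : ℕ} (hn : n ≠ 0) {C a b : ℝ} (hC : 0 < C)
    (ha : 0 ≤ a) (hb : 0 ≤ b) {V : ℝ≥0∞}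
    (h : ENNReal.ofReal a ^ (n + 1) * ENNReal.ofReal b ≤ ENNReal.ofReal C * V ^ n) :
    ENNReal.ofReal (C ^ (-1 / n : ℝ) * a ^ ((n + 1) / n : ℝ) * b ^ (1 / n : ℝ)) ≤ V := by
  have hroot : (C ^ (-1 / n : ℝ) * a ^ ((n + 1) / n : ℝ) * b ^ (1 / n : ℝ)) ^ n =
      C⁻¹ * (a ^ (n + 1) * b) := by
    have hpow {x : ℝ} (hx : 0 ≤ x) (r : ℝ) : (x ^ (r / n)) ^ n = x ^ r := by
      rw [← Real.rpow_mul_natCast hx, div_mul_cancel₀ r (Nat.cast_ne_zero.mpr hn)]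
    rw [mul_pow, mul_pow, hpow hC.le, hpow ha, hpow hb, Real.rpow_neg_one, Real.rpow_one,
      mul_assoc]
    norm_cast
  rw [← ENNReal.pow_le_pow_left_iff hn, ← ENNReal.ofReal_pow (by positivity), hroot,
    ENNReal.ofReal_mul (by positivity), ENNReal.ofReal_inv_of_pos hC,
    ENNReal.ofReal_mul (by positivity), ENNReal.ofReal_pow ha]
  exact ENNReal.inv_mul_le_iff (by simpa using hC) ENNReal.ofReal_ne_top |>.mpr h

theorem stmt16_general {E : Type*} [NormedAddCommGroup E] [InnerProductSpace ℝ E]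
    [FiniteDimensional ℝ E] [MeasurableSpace E] [BorelSpace E] {d : ℕ} (hd : 2 ≤ d)
    (hE : Module.finrank ℝ E = d - 1) {α αs : ℝ} (hα : 0 ≤ α) (hαs : 0 ≤ αs)
    {Ω₁ : Set E} {Ω : Set (E × E)} (hΩ : MeasurableSet Ω) (hΩ₁ : ENNReal.ofReal α ≤ volume Ω₁)
    (hslice : ∀ s ∈ Ω₁, ENNReal.ofReal αs ≤ volume {t | (s, t) ∈ Ω}) :
    ENNReal.ofReal (((d : ℝ) * 2 ^ (d - 1)) ^ (-1 / ((d : ℝ) - 1)) *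
        αs ^ ((d : ℝ) / ((d : ℝ) - 1)) * α ^ ((1 : ℝ) / ((d : ℝ) - 1))) ≤
      volume ((fun p : E × E => (p.2, ⟪p.1, p.2⟫)) '' {p | (p.1, p.1 + p.2) ∈ Ω}) := by
  obtain ⟨n, rfl⟩ : ∃ n, d = n + 1 := ⟨d - 1, by omega⟩
  rw [Nat.add_sub_cancel] at hE ⊢
  push_cast
  rw [add_sub_cancel_right]
  refine ofReal_rpow_mul_rpow_le_of_pow_mul_le (by omega) (by positivity) hαs hα ?_
  calc ENNReal.ofReal αs ^ (n + 1) * ENNReal.ofReal α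
      ≤ ENNReal.ofReal αs ^ (n + 1) * volume Ω₁ := by gcongr
    _ ≤ (n + 1) * 2 ^ n * volume (inflationMap '' {p | (p.1, p.1 + p.2) ∈ Ω}) ^ n :=
        pow_mul_volume_le_volume_image_inflationMap hE hΩ hslice
    _ = ENNReal.ofReal ((n + 1) * 2 ^ n) * _ := by
        congr 1
        norm_cast

/-- inflation bound: if `|Ω₁| ≥ α` and every slice of
`Ω ⊆ Ω₁ × ℝ^{d-1}` over `s ∈ Ω₁` has measure at least `α*`, then with
`Ω̃ = {(s,u) : (s, s+u) ∈ Ω}` and `Φ(s,u) = (u, s·u)` one has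
`|Φ(Ω̃)| ≥ c α*^{d/(d-1)} α^{1/(d-1)}`. -/
theorem stmt16 (d : ℕ) (hd : 2 ≤ d) :
    ∃ c : ℝ, 0 < c ∧
      ∀ (α αs : ℝ), 0 < α → 0 < αs →
      ∀ (Ω₁ : Set (Vec (d - 1))) (Ω : Set (Vec (d - 1) × Vec (d - 1))),
        MeasurableSet Ω₁ → MeasurableSet Ω →
        ENNReal.ofReal α ≤ volume Ω₁ → Ω ⊆ Ω₁ ×ˢ Set.univ →
        (∀ s ∈ Ω₁, ENNReal.ofReal αs ≤ volume {t | (s, t) ∈ Ω}) →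
        ENNReal.ofReal (c * αs ^ ((d : ℝ) / ((d : ℝ) - 1)) *
            α ^ ((1 : ℝ) / ((d : ℝ) - 1))) ≤
          volume ((fun p : Vec (d - 1) × Vec (d - 1) => (p.2, ⟪p.1, p.2⟫)) ''
            {p : Vec (d - 1) × Vec (d - 1) | (p.1, p.1 + p.2) ∈ Ω}) :=
  ⟨((d : ℝ) * 2 ^ (d - 1)) ^ (-1 / ((d : ℝ) - 1)), by positivity,
    fun _ _ hα hαs _ _ _ hΩ hΩ₁ _ hslice =>
      stmt16_general hd finrank_euclideanSpace_fin hα.le hαs.le hΩ hΩ₁ hslice⟩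
end
end

section
/- There exists a constant C < ∞, depending only on d, with the following property. Let E, E', G ⊆ ℝ^d be Lebesgue measurable sets of finite measure with |E| > 0, and let β' > 0. If T(χ_{E'})(x) ≥ β' for every x ∈ G, then ( 𝒯(E, G) / |E| )^{1/(d−1)} · (β')^{d/(d−1)} ≤ C |E'|. -/
open MeasureTheory ENNReal

noncomputable section

/-
Set `n = d - 1`. The heart of the matter is the pointwise bound `T((T χ_A)^d)(x) ≤ 2 d! |A|^n`: it
gives `T(χ_G)(x) β^d ≤ 2 d! |E'|^n` for every `x` as soon as `T(χ_{E'}) ≥ β` on `G`, and the average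
of `T(χ_G)` over `E` is at most its supremum.

Stepping twice from `x`, over `t` and then over `y - t`, leads to `x - (y, |t|² + |y - t|²)`, so
that, for a set `S` congruent to `A`, one has to bound `∫ |B_t|^(n+1) dt` with
`B_t = {y | (y, |t|² + |y - t|²) ∈ S}`. Among `n + 1` vectors the largest minor is one whose omitted
vector lies in the parallelepiped of volume `2^n |det|` of the others, by Cramer's rule; hence, by
symmetry, `|B_t|^(n+1)` is at most `(n+1)! 2^n` times the integral of `|det (yᵢ - 2t)|` over
`B_t^n`. For fixed `y₁, …, yₙ` this determinant is, up to the factor `(-2)^n`, the Jacobian of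
`t ↦ (|t|² + |yᵢ - t|²)ᵢ`. That map is at most two-to-one off its critical set: the Jacobian
matrices at two points of a fibre differ by a reflection, so their determinants have opposite signs.
Changing variables bounds the integral over `t` by twice the product of the measures of the fibres
of `S` over the `yᵢ`, and integrating over the `yᵢ` gives `2 |S|^n`.
-/

open Matrix Set Function
open scoped Nat

section ProductMeasures

variable {α β : Type*} [MeasurableSpace α] [MeasurableSpace β]

lemma lintegral_setLIntegral_swap {μ : Measure α} {ν : Measure β} [SFinite μ] [SFinite ν]
    {W : Set (α × β)} (hW : MeasurableSet W) {g : α → β → ℝ≥0∞} (hg : Measurable (uncurry g)) :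
    ∫⁻ a, ∫⁻ b in {b | (a, b) ∈ W}, g a b ∂ν ∂μ = ∫⁻ b, ∫⁻ a in {a | (a, b) ∈ W}, g a b ∂μ ∂ν := by
  have hleft (a : α) : ∫⁻ b in {b | (a, b) ∈ W}, g a b ∂ν =
      ∫⁻ b, W.indicator (uncurry g) (a, b) ∂ν :=
    (lintegral_indicator (measurable_prodMk_left hW) _).symm
  have hright (b : β) : ∫⁻ a in {a | (a, b) ∈ W}, g a b ∂μ =
      ∫⁻ a, W.indicator (uncurry g) (a, b) ∂μ :=
    (lintegral_indicator (measurable_prodMk_right hW) _).symm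
  simp only [hleft, hright]
  exact lintegral_lintegral_swap (hg.indicator hW).aemeasurable

variable {ι : Type*} [Fintype ι]

lemma measure_pi_univ_le_factorial_mul_of_exists_comp_perm_mem (μ : Measure α) [SigmaFinite μ]
    {M : Set (ι → α)} (hM : ∀ w : ι → α, ∃ σ : Equiv.Perm ι, w ∘ σ ∈ M) :
    Measure.pi (fun _ : ι => μ) univ ≤ (Fintype.card ι)! * Measure.pi (fun _ : ι => μ) M := by
  classical
  have hcover : univ ⊆ ⋃ σ : Equiv.Perm ι, {w : ι → α | w ∘ σ ∈ M} := fun w _ =>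
    mem_iUnion.2 (hM w)
  have hperm (σ : Equiv.Perm ι) :
      Measure.pi (fun _ : ι => μ) {w | w ∘ σ ∈ M} = Measure.pi (fun _ : ι => μ) M :=
    (measurePreserving_arrowCongr' (fun _ => μ) (fun _ => μ) σ.symm (.refl α)
      fun _ => .id μ).measure_preimage_equiv M
  calc Measure.pi (fun _ : ι => μ) univ
      ≤ ∑ σ : Equiv.Perm ι, Measure.pi (fun _ : ι => μ) {w | w ∘ σ ∈ M} :=
        (measure_mono hcover).trans (measure_iUnion_fintype_le _ _)
    _ = (Fintype.card ι)! * Measure.pi (fun _ : ι => μ) M := by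
        simp only [hperm, Finset.sum_const, Finset.card_univ, Fintype.card_perm, nsmul_eq_mul]

lemma lintegral_measure_univ_pi_slice (μ : Measure α) (ν : Measure β) [SigmaFinite μ]
    [SigmaFinite ν] {S : Set (α × β)} (hS : MeasurableSet S) :
    ∫⁻ y : ι → α, Measure.pi (fun _ => ν) (univ.pi fun i => Prod.mk (y i) ⁻¹' S)
        ∂Measure.pi (fun _ => μ) = (μ.prod ν) S ^ Fintype.card ι := by
  let Q : Set ((ι → α) × (ι → β)) := {q | ∀ i, (q.1 i, q.2 i) ∈ S}
  have hQ : MeasurableSet Q := by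
    simp only [Q, ofPred_forall]
    refine .iInter fun i => ?_
    exact (show Measurable fun q : (ι → α) × (ι → β) => (q.1 i, q.2 i) by fun_prop) hS
  calc ∫⁻ y : ι → α, Measure.pi (fun _ => ν) (univ.pi fun i => Prod.mk (y i) ⁻¹' S)
        ∂Measure.pi (fun _ => μ)
      = ((Measure.pi fun _ => μ).prod (Measure.pi fun _ => ν)) Q := by
        rw [Measure.prod_apply hQ]
        simp only [Set.pi, mem_univ, true_imp_iff]
        rfl
    _ = Measure.pi (fun _ : ι => μ.prod ν) (univ.pi fun _ => S) := by
        rw [← (measurePreserving_arrowProdEquivProdArrow α β ι (fun _ => μ)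
          (fun _ => ν)).measure_preimage_equiv Q]
        simp only [Set.pi, mem_univ, true_imp_iff]
        rfl
    _ = (μ.prod ν) S ^ Fintype.card ι := by
        rw [Measure.pi_pi, Finset.prod_const, Finset.card_univ]

end ProductMeasures

section ChangeOfVariables

variable {V : Type*} [NormedAddCommGroup V] [NormedSpace ℝ V] [FiniteDimensional ℝ V]
  [MeasurableSpace V] [BorelSpace V]

lemma setLIntegral_preimage_abs_det_fderiv_le (μ : Measure V) [μ.IsAddHaarMeasure] {f : V → V}
    {f' : V → V →L[ℝ] V} (hf : ∀ x, HasFDerivAt f (f' x) x) (hpos : InjOn f {x | 0 < (f' x).det})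
    (hneg : InjOn f {x | (f' x).det < 0}) {F : Set V} (hF : MeasurableSet F) :
    ∫⁻ x in f ⁻¹' F, ENNReal.ofReal |(f' x).det| ∂μ ≤ 2 * μ F := by
  have hf_meas : Measurable f :=
    (continuous_iff_continuousAt.2 fun x => (hf x).continuousAt).measurable
  have hdet_meas : Measurable fun x => (f' x).det := by
    rw [funext fun x => (hf x).fderiv.symm]
    exact ContinuousLinearMap.continuous_det.measurable.comp (measurable_fderiv ℝ f)
  have hpiece {P : Set V} (hP : MeasurableSet P) (hinj : InjOn f P) :
      ∫⁻ x in f ⁻¹' F ∩ P, ENNReal.ofReal |(f' x).det| ∂μ ≤ μ F := by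
    rw [lintegral_abs_det_fderiv_eq_addHaar_image μ ((hf_meas hF).inter hP)
      (fun x _ => (hf x).hasFDerivWithinAt) (hinj.mono inter_subset_right)]
    exact measure_mono ((image_mono inter_subset_left).trans (image_preimage_subset f F))
  have hzero : ∫⁻ x in f ⁻¹' F ∩ {x | (f' x).det = 0}, ENNReal.ofReal |(f' x).det| ∂μ = 0 := by
    rw [setLIntegral_eq_zero_iff
      ((hf_meas hF).inter (measurableSet_eq_fun hdet_meas measurable_const))
      hdet_meas.abs.ennreal_ofReal]
    exact ae_of_all _ fun x hx => by simp [show (f' x).det = 0 from hx.2]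
  have hcover : f ⁻¹' F ⊆ f ⁻¹' F ∩ {x | 0 < (f' x).det} ∪
      (f ⁻¹' F ∩ {x | (f' x).det < 0} ∪ f ⁻¹' F ∩ {x | (f' x).det = 0}) := fun x hx => by
    rcases lt_trichotomy (f' x).det 0 with h | h | h <;> simp_all
  calc ∫⁻ x in f ⁻¹' F, ENNReal.ofReal |(f' x).det| ∂μ
      ≤ μ F + (μ F + 0) := by
        refine (lintegral_mono_set hcover).trans <| (lintegral_union_le _ _ _).trans ?_
        gcongr
        · exact hpiece (measurableSet_lt measurable_const hdet_meas) hpos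
        · refine (lintegral_union_le _ _ _).trans ?_
          rw [hzero]
          gcongr
          exact hpiece (measurableSet_lt hdet_meas measurable_const) hneg
    _ = 2 * μ F := by rw [add_zero, two_mul]

end ChangeOfVariables

section Determinants

variable {ι : Type*} [Fintype ι] [DecidableEq ι]

lemma ae_det_of_ne_zero : ∀ᵐ v : ι → ι → ℝ, (of v).det ≠ 0 := by
  have hclosed : IsClosed {v : ι → ι → ℝ | (of v).det = 0} :=
    isClosed_singleton.preimage (show Continuous fun v : ι → ι → ℝ => (of v).det from
      continuous_id.matrix_det)
  refine ae_mem_of_ae_add_linearMap_mem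
    (LinearMap.toSpanSingleton ℝ (ι → ι → ℝ) (1 : Matrix ι ι ℝ)) volume volume
    hclosed.measurableSet.compl fun v => ?_
  have hfinite := (-of v).charpoly.rootSet_finite ℝ
  filter_upwards [compl_mem_ae_iff.2 (hfinite.measure_zero volume)] with r hr hdet
  change (of v + r • 1).det = 0 at hdet
  refine hr ((Polynomial.mem_rootSet_of_ne (charpoly_monic _).ne_zero).2 ?_)
  rwa [Polynomial.coe_aeval_eq_eval, eval_charpoly, sub_neg_eq_add, add_comm, scalar_apply,
    ← smul_one_eq_diagonal]

/-- The set of vectors which, substituted for any row of `M`, do not increase `|det M|`. If `M` is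
invertible this is the parallelepiped `{∑ cᵢ Mᵢ | |cᵢ| ≤ 1}` over the rows of `M`, by Cramer's
rule. -/
def cramerBox (M : Matrix ι ι ℝ) : Set (ι → ℝ) :=
  {u | ∀ i, |(M.updateRow i u).det| ≤ |M.det|}

lemma volume_cramerBox_le {M : Matrix ι ι ℝ} (hM : M.det ≠ 0) :
    volume (cramerBox M) ≤ 2 ^ Fintype.card ι * ENNReal.ofReal |M.det| := by
  have hsub : cramerBox M ⊆ toLin' Mᵀ '' (univ.pi fun _ => Icc (-1) 1) := fun u hu => by
    refine ⟨M.det⁻¹ • cramer Mᵀ u, fun i _ => ?_, ?_⟩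
    · rw [Pi.smul_apply, cramer_transpose_apply, smul_eq_mul, mem_Icc, ← abs_le, abs_mul, abs_inv]
      exact inv_mul_le_one_of_le₀ (hu i) (abs_nonneg _)
    · rw [toLin'_apply, mulVec_smul, mulVec_cramer, det_transpose, inv_smul_smul₀ hM]
  calc volume (cramerBox M) ≤ volume (toLin' Mᵀ '' (univ.pi fun _ => Icc (-1) 1)) :=
        measure_mono hsub
    _ = 2 ^ Fintype.card ι * ENNReal.ofReal |M.det| := by
        rw [Measure.addHaar_image_linearMap, LinearMap.det_toLin', det_transpose, volume_pi_pi,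
          mul_comm]
        norm_num

lemma measurableSet_mem_cramerBox :
    MeasurableSet {p : (ι → ℝ) × (ι → ι → ℝ) | p.1 ∈ cramerBox (of p.2)} := by
  have hof : Continuous fun p : (ι → ℝ) × (ι → ι → ℝ) => of p.2 := continuous_snd
  simp only [cramerBox, mem_ofPred_eq]
  simp only [ofPred_forall]
  exact .iInter fun i => (isClosed_le (hof.matrix_updateRow i continuous_fst).matrix_det.abs
    hof.matrix_det.abs).measurableSet

lemma exists_perm_mem_cramerBox {n : ℕ} (w : Fin (n + 1) → Fin n → ℝ) :
    ∃ σ : Equiv.Perm (Fin (n + 1)), w (σ 0) ∈ cramerBox (of fun k => w (σ k.succ)) := by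
  obtain ⟨σ, hσ⟩ := Finite.exists_max fun σ : Equiv.Perm (Fin (n + 1)) =>
    |(of fun k : Fin n => w (σ k.succ)).det|
  refine ⟨σ, fun i => ?_⟩
  have hexchange : (of fun k : Fin n => w (σ k.succ)).updateRow i (w (σ 0)) =
      of fun k => w ((σ * Equiv.swap 0 i.succ) k.succ) := by
    ext k j
    rcases eq_or_ne k i with rfl | hki
    · simp
    · simp [updateRow_ne hki, Equiv.swap_apply_of_ne_of_ne (Fin.succ_ne_zero k)
        (Fin.succ_injective n |>.ne hki)]
  rw [hexchange]
  exact hσ _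

lemma volume_pow_succ_le_lintegral_abs_det {n : ℕ} (B : Set (Fin n → ℝ)) :
    volume B ^ (n + 1) ≤ (n + 1)! * 2 ^ n *
      ∫⁻ v in univ.pi fun _ : Fin n => B, ENNReal.ofReal |(of v).det| := by
  set μ : Measure (Fin n → ℝ) := volume.restrict B with hμ
  let M : Set (Fin (n + 1) → Fin n → ℝ) := {w | w 0 ∈ cramerBox (of fun k => w k.succ)}
  have hM : Measure.pi (fun _ => μ) M = ∫⁻ v in univ.pi fun _ => B, μ (cramerBox (of v)) := by
    have hmp := measurePreserving_piFinSuccAbove (fun _ : Fin (n + 1) => μ) 0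
    calc Measure.pi (fun _ => μ) M
        = (μ.prod (Measure.pi fun _ : Fin n => μ)) {p | p.1 ∈ cramerBox (of p.2)} :=
          hmp.measure_preimage_equiv {p | p.1 ∈ cramerBox (of p.2)}
      _ = ∫⁻ v in univ.pi fun _ => B, μ (cramerBox (of v)) := by
          rw [Measure.prod_apply_symm measurableSet_mem_cramerBox, volume_pi,
            Measure.restrict_pi_pi]
          rfl
  have hbox : ∀ᵐ v ∂volume.restrict (univ.pi fun _ : Fin n => B),
      μ (cramerBox (of v)) ≤ 2 ^ n * ENNReal.ofReal |(of v).det| := by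
    filter_upwards [ae_restrict_of_ae ae_det_of_ne_zero] with v hv
    simpa using (Measure.restrict_apply_le _ _).trans (volume_cramerBox_le hv)
  calc volume B ^ (n + 1) = Measure.pi (fun _ : Fin (n + 1) => μ) univ := by
        simp [hμ, Measure.pi_univ]
    _ ≤ (n + 1)! * Measure.pi (fun _ => μ) M := by
        simpa using measure_pi_univ_le_factorial_mul_of_exists_comp_perm_mem μ
          (M := M) exists_perm_mem_cramerBox
    _ ≤ (n + 1)! * ∫⁻ v in univ.pi fun _ => B, 2 ^ n * ENNReal.ofReal |(of v).det| := by
        rw [hM]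
        gcongr 1
        exact lintegral_mono_ae hbox
    _ = _ := by rw [lintegral_const_mul' _ _ (by simp), mul_assoc]

lemma volume_pow_succ_le_lintegral_abs_det_sub {n : ℕ} (B : Set (Fin n → ℝ)) (p : Fin n → ℝ) :
    volume B ^ (n + 1) ≤ (n + 1)! * 2 ^ n *
      ∫⁻ v in univ.pi fun _ : Fin n => B, ENNReal.ofReal |(of fun i => v i - p).det| := by
  have hshift : MeasurePreserving fun v : Fin n → Fin n → ℝ => v - fun _ => p :=
    measurePreserving_sub_right volume _
  have hpre : (fun v : Fin n → Fin n → ℝ => v - fun _ => p) ⁻¹'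
      (univ.pi fun _ => (· + p) ⁻¹' B) = univ.pi fun _ => B := by
    ext v
    simp
  rw [← measure_preimage_add_right volume p B, ← hpre]
  refine (volume_pow_succ_le_lintegral_abs_det _).trans_eq ?_
  rw [← hshift.setLIntegral_comp_preimage_emb (measurableEmbedding_subRight _)]
  rfl

lemma det_add_vecMulVec_eq_neg_of_mulVec_eq_zero {N : Matrix ι ι ℝ} {w : ι → ℝ} (hw : w ≠ 0)
    (hN : N *ᵥ w = 0) (u : ι → ℝ) :
    (N + vecMulVec u w).det = -(N - vecMulVec u w).det := by
  have hww : w ⬝ᵥ w ≠ 0 := dotProduct_self_eq_zero.not.2 hw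
  -- The factor on the right is the reflection in the hyperplane orthogonal to `w`.
  have hreflect : N + vecMulVec u w =
      (N - vecMulVec u w) * (1 + vecMulVec ((-2 * (w ⬝ᵥ w)⁻¹) • w) w) := by
    rw [Matrix.mul_add, Matrix.mul_one, mul_vecMulVec, mulVec_smul, sub_mulVec, hN,
      vecMulVec_mulVec]
    ext i j
    simp only [Matrix.add_apply, Matrix.sub_apply, vecMulVec_apply, Pi.sub_apply, Pi.zero_apply,
      Pi.smul_apply, op_smul_eq_smul, smul_eq_mul]
    field_simp
    ring
  rw [hreflect, det_mul, vecMulVec_eq Unit (_ • w), det_one_add_replicateCol_mul_replicateRow,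
    dotProduct_smul, smul_eq_mul, mul_assoc, inv_mul_cancel₀ hww]
  ring

end Determinants

section DoubleStep

/-- The height reached from the origin by two steps on the paraboloid `{(s, |s|²)}`, the first over
`t` and the second over `y - t`; the double step itself leads to `(y, twoStepHeight t y)`. -/
def twoStepHeight {ι : Type*} [Fintype ι] (t y : ι → ℝ) : ℝ :=
  t ⬝ᵥ t + (y - t) ⬝ᵥ (y - t)

/-- The matrix with rows `yᵢ - 2t`, which up to the factor `-2` is the Jacobian matrix of
`t ↦ (twoStepHeight t yᵢ)ᵢ`. -/
def twoStepMatrix {ι : Type*} (y : ι → ι → ℝ) (t : ι → ℝ) : Matrix ι ι ℝ :=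
  of fun i => y i - (2 : ℝ) • t

lemma continuous_twoStepMatrix {ι : Type*} :
    Continuous fun p : (ι → ℝ) × (ι → ι → ℝ) => twoStepMatrix p.2 p.1 :=
  continuous_matrix fun i j => by
    simp only [twoStepMatrix, of_apply, Pi.sub_apply, Pi.smul_apply]
    fun_prop

variable {ι : Type*} [Fintype ι]

@[fun_prop]
lemma continuous_twoStepHeight : Continuous fun p : (ι → ℝ) × (ι → ℝ) => twoStepHeight p.1 p.2 := by
  unfold twoStepHeight
  fun_prop

lemma twoStepHeight_sub_twoStepHeight (t s y : ι → ℝ) :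
    twoStepHeight t y - twoStepHeight s y = -2 * ((y - (t + s)) ⬝ᵥ (t - s)) := by
  simp only [twoStepHeight, dotProduct, Pi.sub_apply, Pi.add_apply, ← Finset.sum_add_distrib,
    ← Finset.sum_sub_distrib, Finset.mul_sum]
  exact Finset.sum_congr rfl fun j _ => by ring

variable [DecidableEq ι]

lemma hasFDerivAt_twoStepHeight (y : ι → ι → ℝ) (t : ι → ℝ) :
    HasFDerivAt (fun t i => twoStepHeight t (y i))
      (toLin' ((-2 : ℝ) • twoStepMatrix y t)).toContinuousLinearMap t := by
  refine hasFDerivAt_pi'.2 fun i => ?_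
  have hcoord (j : ι) : HasFDerivAt (fun t : ι → ℝ => t j * t j + (y i j - t j) * (y i j - t j))
      ((-2 * (y i j - 2 * t j)) • (ContinuousLinearMap.proj j : (ι → ℝ) →L[ℝ] ℝ)) t := by
    have hscalar : HasDerivAt (fun r : ℝ => r * r + (y i j - r) * (y i j - r))
        (-2 * (y i j - 2 * t j)) (t j) := by
      have hid := hasDerivAt_id' (t j)
      have hsub := hid.const_sub (y i j)
      exact ((hid.fun_mul hid).fun_add (hsub.fun_mul hsub)).congr_deriv (by ring)
    have hproj : HasFDerivAt (fun t : ι → ℝ => t j)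
      (ContinuousLinearMap.proj j : (ι → ℝ) →L[ℝ] ℝ) t := hasFDerivAt_apply j t
    exact hscalar.comp_hasFDerivAt t hproj
  have hsum := HasFDerivAt.fun_sum fun j (_ : j ∈ Finset.univ) => hcoord j
  refine (hsum.congr_fderiv ?_).congr_of_eventuallyEq (.of_eq ?_)
  · ext v
    simp [twoStepMatrix, mulVec, dotProduct, mul_assoc]
  · simp only [twoStepHeight, dotProduct, Finset.sum_add_distrib, Pi.sub_apply]

lemma det_twoStepMatrix_eq_neg {y : ι → ι → ℝ} {t s : ι → ℝ} (hts : t ≠ s)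
    (h : ∀ i, twoStepHeight t (y i) = twoStepHeight s (y i)) :
    (twoStepMatrix y s).det = -(twoStepMatrix y t).det := by
  have hker : (of fun i => y i - (t + s)) *ᵥ (t - s) = 0 := funext fun i => by
    have hi := twoStepHeight_sub_twoStepHeight t s (y i)
    rw [h i, sub_self] at hi
    exact (mul_eq_zero.1 hi.symm).resolve_left (by norm_num)
  have hs : twoStepMatrix y s = of (fun i => y i - (t + s)) + vecMulVec 1 (t - s) := by
    ext i j
    simp only [twoStepMatrix, of_apply, Matrix.add_apply, vecMulVec_apply, Pi.sub_apply,
      Pi.add_apply, Pi.smul_apply, Pi.one_apply, smul_eq_mul]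
    ring
  have ht : twoStepMatrix y t = of (fun i => y i - (t + s)) - vecMulVec 1 (t - s) := by
    ext i j
    simp only [twoStepMatrix, of_apply, Matrix.sub_apply, vecMulVec_apply, Pi.sub_apply,
      Pi.add_apply, Pi.smul_apply, Pi.one_apply, smul_eq_mul]
    ring
  rw [hs, ht]
  exact det_add_vecMulVec_eq_neg_of_mulVec_eq_zero (sub_ne_zero.2 hts) hker 1

lemma setLIntegral_abs_det_twoStepMatrix_le (y : ι → ι → ℝ) {F : Set (ι → ℝ)}
    (hF : MeasurableSet F) :
    2 ^ Fintype.card ι * ∫⁻ t in {t | (fun i => twoStepHeight t (y i)) ∈ F},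
      ENNReal.ofReal |(twoStepMatrix y t).det| ≤ 2 * volume F := by
  have hdet (t : ι → ℝ) :
      (toLin' ((-2 : ℝ) • twoStepMatrix y t)).toContinuousLinearMap.det =
        (-2) ^ Fintype.card ι * (twoStepMatrix y t).det := by
    rw [← det_smul, ← LinearMap.det_toLin']
    rfl
  have hinj (ε : ℝ) : InjOn (fun t i => twoStepHeight t (y i))
      {t | 0 < ε * (twoStepMatrix y t).det} := fun t ht s hs hts => by
    by_contra hne
    rw [mem_ofPred_eq, det_twoStepMatrix_eq_neg hne (congrFun hts)] at hs
    rw [mem_ofPred_eq] at ht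
    linarith
  refine le_of_eq_of_le ?_ (setLIntegral_preimage_abs_det_fderiv_le volume
    (hasFDerivAt_twoStepHeight y) ?_ ?_ hF)
  · rw [← lintegral_const_mul' _ _ (by simp)]
    refine lintegral_congr fun t => ?_
    rw [hdet, abs_mul, abs_pow, ENNReal.ofReal_mul (by positivity), ENNReal.ofReal_pow (by simp)]
    simp
  · simpa only [hdet] using hinj _
  · simpa only [hdet, ← neg_pos, ← neg_mul] using hinj _

theorem lintegral_volume_twoStepHeight_pow_le {n : ℕ} {S : Set ((Fin n → ℝ) × ℝ)}
    (hS : MeasurableSet S) :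
    ∫⁻ t, volume {y | (y, twoStepHeight t y) ∈ S} ^ (n + 1) ≤ 2 * (n + 1)! * volume S ^ n := by
  let W : Set ((Fin n → ℝ) × (Fin n → Fin n → ℝ)) :=
    {p | ∀ i, (p.2 i, twoStepHeight p.1 (p.2 i)) ∈ S}
  let D (t : Fin n → ℝ) (y : Fin n → Fin n → ℝ) : ℝ≥0∞ :=
    ENNReal.ofReal |(twoStepMatrix y t).det|
  have hW : MeasurableSet W := by
    simp only [W, ofPred_forall]
    refine .iInter fun i => ?_
    have hcont : Continuous fun p : (Fin n → ℝ) × (Fin n → Fin n → ℝ) =>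
      (p.2 i, twoStepHeight p.1 (p.2 i)) := by fun_prop
    exact hcont.measurable hS
  have hD : Measurable (uncurry D) :=
    continuous_twoStepMatrix.matrix_det.measurable.abs.ennreal_ofReal
  calc ∫⁻ t, volume {y | (y, twoStepHeight t y) ∈ S} ^ (n + 1)
      ≤ ∫⁻ t, (n + 1)! * 2 ^ n * ∫⁻ y in {y | (t, y) ∈ W}, D t y := lintegral_mono fun t => by
        simpa only [W, D, twoStepMatrix, mem_ofPred_eq, Set.pi, mem_univ, true_imp_iff] using
          volume_pow_succ_le_lintegral_abs_det_sub {y | (y, twoStepHeight t y) ∈ S} ((2 : ℝ) • t)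
    _ = (n + 1)! * ∫⁻ y, 2 ^ n * ∫⁻ t in {t | (t, y) ∈ W}, D t y := by
        rw [lintegral_const_mul' _ _ (by finiteness), lintegral_setLIntegral_swap hW hD,
          lintegral_const_mul' _ _ (by simp), mul_assoc]
    _ ≤ (n + 1)! * ∫⁻ y : Fin n → Fin n → ℝ, 2 * volume (univ.pi fun i => Prod.mk (y i) ⁻¹' S) := by
        gcongr 1
        refine lintegral_mono fun y => ?_
        have hF : MeasurableSet (univ.pi fun i => Prod.mk (y i) ⁻¹' S) :=
          .univ_pi fun i => measurable_prodMk_left hS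
        simpa [W] using setLIntegral_abs_det_twoStepMatrix_le y hF
    _ = 2 * (n + 1)! * volume S ^ n := by
        have hslices := lintegral_measure_univ_pi_slice (ι := Fin n) (volume : Measure (Fin n → ℝ))
          (volume : Measure ℝ) hS
        simp only [← volume_pi, ← Measure.volume_eq_prod, Fintype.card_fin] at hslices
        rw [lintegral_const_mul' _ _ (by simp), hslices]
        ring

end DoubleStep

section RadonTransform

variable {n : ℕ}

lemma radonT_eq_lintegral_pi (f : Pt n → ℝ≥0∞) (x : Pt n) :
    radonT n f x = ∫⁻ t : Fin n → ℝ, f (x - (WithLp.toLp 2 t, t ⬝ᵥ t)) := by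
  rw [radonT, ← (PiLp.volume_preserving_toLp (Fin n)).lintegral_comp_emb
    (MeasurableEquiv.toLp 2 (Fin n → ℝ)).measurableEmbedding]
  refine lintegral_congr fun t => ?_
  simp only [EuclideanSpace.real_norm_sq_eq, dotProduct, ← sq]
  rfl

lemma measurePreserving_sub_toLp (x : Pt n) :
    MeasurePreserving fun p : (Fin n → ℝ) × ℝ => x - (WithLp.toLp 2 p.1, p.2) :=
  ((Measure.measurePreserving_sub_left volume x.1).comp
    (PiLp.volume_preserving_toLp (Fin n))).prod (Measure.measurePreserving_sub_left volume x.2)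

lemma radonT_indicator_sub_toLp {A : Set (Pt n)} (hA : MeasurableSet A) (x : Pt n)
    (t : Fin n → ℝ) :
    radonT n (A.indicator 1) (x - (WithLp.toLp 2 t, t ⬝ᵥ t)) =
      volume {y | x - (WithLp.toLp 2 y, twoStepHeight t y) ∈ A} := by
  have hcont : Continuous fun y => x - (WithLp.toLp 2 y, twoStepHeight t y) := by fun_prop
  rw [radonT_eq_lintegral_pi, ← lintegral_sub_right_eq_self _ t]
  refine Eq.trans ?_ (lintegral_indicator_one (hcont.measurable hA))
  refine lintegral_congr fun y => ?_
  rw [sub_sub, Prod.mk_add_mk, ← WithLp.toLp_add, add_sub_cancel]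
  rfl

theorem radonT_radonT_indicator_pow_le {A : Set (Pt n)} (hA : MeasurableSet A) (x : Pt n) :
    radonT n (fun z => radonT n (A.indicator 1) z ^ (n + 1)) x ≤
      2 * (n + 1)! * volume A ^ n := by
  have hx := measurePreserving_sub_toLp x
  rw [radonT_eq_lintegral_pi, ← hx.measure_preimage hA.nullMeasurableSet]
  simp only [radonT_indicator_sub_toLp hA]
  exact lintegral_volume_twoStepHeight_pow_le (hx.measurable hA)

lemma radonT_indicator_mul_pow_le {A G : Set (Pt n)} (hA : MeasurableSet A) {b : ℝ≥0∞}
    (hG : ∀ z ∈ G, b ≤ radonT n (A.indicator 1) z) (x : Pt n) :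
    radonT n (G.indicator 1) x * b ^ (n + 1) ≤ 2 * (n + 1)! * volume A ^ n := by
  have hmarkov (z : Pt n) :
      G.indicator 1 z * b ^ (n + 1) ≤ radonT n (A.indicator 1) z ^ (n + 1) := by
    by_cases hz : z ∈ G
    · simpa [hz] using pow_le_pow_left' (hG z hz) (n + 1)
    · simp [hz]
  calc radonT n (G.indicator 1) x * b ^ (n + 1)
      ≤ radonT n (fun z => G.indicator 1 z * b ^ (n + 1)) x := lintegral_mul_const_le _ _
    _ ≤ radonT n (fun z => radonT n (A.indicator 1) z ^ (n + 1)) x :=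
        lintegral_mono fun t => hmarkov _
    _ ≤ 2 * (n + 1)! * volume A ^ n := radonT_radonT_indicator_pow_le hA x

lemma incT_div_volume_le_iSup (E G : Set (Pt n)) :
    incT n E G / volume E ≤ ⨆ x, radonT n (G.indicator 1) x := by
  refine ENNReal.div_le_of_le_mul ?_
  rw [incT, ← setLIntegral_const]
  exact lintegral_mono fun x => le_iSup (radonT n (G.indicator 1)) x

end RadonTransform

lemma rpow_one_div_mul_rpow_div_le {a b c : ℝ≥0∞} {m n : ℕ} (hn : n ≠ 0)
    (h : a * b ^ m ≤ c ^ n) : a ^ (1 / n : ℝ) * b ^ (m / n : ℝ) ≤ c := by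
  have hn' : (0 : ℝ) < n := by positivity
  rwa [div_eq_mul_one_div (m : ℝ), ENNReal.rpow_mul, ENNReal.rpow_natCast,
    ← ENNReal.mul_rpow_of_nonneg _ _ (by positivity), one_div, ENNReal.rpow_inv_le_iff hn',
    ENNReal.rpow_natCast]

theorem stmt18_general (d : ℕ) (hd : 2 ≤ d) :
    ∃ C : ℝ, 0 < C ∧
      ∀ (E' G : Set (Pt (d - 1))), MeasurableSet E' →
      ∀ (β : ℝ≥0∞), (∀ x ∈ G, β ≤ radonT (d - 1) (E'.indicator 1) x) →
        (⨆ x, radonT (d - 1) (G.indicator 1) x) ^ ((1 : ℝ) / ((d : ℝ) - 1)) *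
            β ^ ((d : ℝ) / ((d : ℝ) - 1)) ≤
          ENNReal.ofReal C * volume E' := by
  have hd' : d - 1 ≠ 0 := by lia
  refine ⟨2 * d !, by positivity, fun E' G hE' β hG => ?_⟩
  rw [← Nat.cast_pred (by lia : 0 < d)]
  refine rpow_one_div_mul_rpow_div_le hd' ?_
  calc (⨆ x, radonT (d - 1) (G.indicator 1) x) * β ^ d
      ≤ 2 * d ! * volume E' ^ (d - 1) := by
        rw [ENNReal.iSup_mul]
        refine iSup_le fun x => ?_
        simpa only [Nat.sub_add_cancel (by lia : 1 ≤ d)] using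
          radonT_indicator_mul_pow_le hE' hG x
    _ ≤ (2 * d !) ^ (d - 1) * volume E' ^ (d - 1) := by
        gcongr
        refine le_self_pow ?_ hd'
        exact_mod_cast Nat.one_le_iff_ne_zero.2 (by positivity)
    _ = (ENNReal.ofReal (2 * d !) * volume E') ^ (d - 1) := by
        rw [← mul_pow, ENNReal.ofReal_mul zero_le_two, ENNReal.ofReal_ofNat,
          ENNReal.ofReal_natCast]

/-- trilinear lemma: if `T(χ_{E'}) ≥ β'` on `G`, then
`(𝒯(E,G)/|E|)^{1/(d-1)} (β')^{d/(d-1)} ≤ C |E'|`. -/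
theorem stmt18 (d : ℕ) (hd : 2 ≤ d) :
    ∃ C : ℝ, 0 < C ∧
      ∀ (E E' G : Set (Pt (d - 1))),
        MeasurableSet E → MeasurableSet E' → MeasurableSet G →
        volume E < ⊤ → volume E' < ⊤ → volume G < ⊤ → 0 < volume E →
      ∀ (β : ℝ), 0 < β →
        (∀ x ∈ G, ENNReal.ofReal β ≤ radonT (d - 1) (E'.indicator 1) x) →
        (incT (d - 1) E G / volume E) ^ ((1 : ℝ) / ((d : ℝ) - 1)) *
            ENNReal.ofReal β ^ ((d : ℝ) / ((d : ℝ) - 1)) ≤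
          ENNReal.ofReal C * volume E' := by
  obtain ⟨C, hC, hbound⟩ := stmt18_general d hd
  have hd' : (0 : ℝ) ≤ 1 / ((d : ℝ) - 1) :=
    one_div_nonneg.2 (sub_nonneg.2 (Nat.one_le_cast.2 (by lia)))
  refine ⟨C, hC, fun E E' G _ hE' _ _ _ _ _ β _ hG => ?_⟩
  grw [incT_div_volume_le_iSup E G]
  exact hbound E' G hE' _ hG
end
end

section
/- There exist constants γ > 0 and C < ∞, depending only on d, with the following property. Let f = Σ_{k∈ℤ} 2^k χ_{E_k} and f* = Σ_{l∈ℤ} 2^l χ_{F_l}, where {E_k}_{k∈ℤ} are pairwise disjoint Lebesgue measurable subsets of ℝ^d, {F_l}_{l∈ℤ} are pairwise disjoint Lebesgue measurable subsets of ℝ^d, and f, f* ∈ L^{(d+1)/d}(ℝ^d). Let η > 0 and suppose 2^l |F_l|^{d/(d+1)} ≤ η ‖f*‖_{L^{(d+1)/d}} for every l ∈ ℤ. Then ⟨Tf, f*⟩ ≤ C η^γ ‖f‖_{L^{(d+1)/d}} ‖f*‖_{L^{(d+1)/d}}. -/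
open MeasureTheory ENNReal

noncomputable section

/-- The `L^p` norm `(∫ f^p)^{1/p}` of a nonnegative function. -/
def LpN (n : ℕ) (p : ℝ) (f : Pt n → ℝ≥0∞) : ℝ≥0∞ :=
  (∫⁻ x, f x ^ p) ^ (1 / p)

/-- The pairing `⟨Tg, f⟩ = ∫ f · Tg` for nonnegative functions. -/
def pairT (n : ℕ) (f g : Pt n → ℝ≥0∞) : ℝ≥0∞ :=
  ∫⁻ x, f x * radonT n g x

/-!
In the coordinates in which paraboloids become hyperplanes, the transform integrates a function over
the non-vertical hyperplanes of `ℝ^d`. Its critical estimate `L^((d+1)/d) → L^(d+1)` is proved by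
induction on `d`. The hyperplanes through a fixed point form a pencil, and projecting centrally from
that point turns integrals over the pencil into integrals over all hyperplanes of `ℝ^(d-1)`; so the
estimate in dimension `d - 1` bounds the `d`-th moment of the integrals of a function `h ≤ 1` over
each pencil of `ℝ^d`. By duality this bounds the integral of the product of the transform of one
layer of a dyadic decomposition with the `d`-th power of the transform of another. When the linear
factor is the larger layer, the bound decays geometrically in the ratio of the two layers. Summing
over all pairs gives an estimate whose right-hand side is the `ℓ^(d+1)` norm of the sequence
`2 ^ k * |F_k| ^ (d/(d+1))`; it is stronger than the strong-type estimate, where the `ℓ^((d+1)/d)`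
norm appears instead. The gain `η ^ γ` comes from interpolating that `ℓ^(d+1)` norm between
`ℓ^((d+1)/d)` and the hypothesis, which is a bound in `ℓ^∞`.
-/

section Series

theorem tsum_rpow_le_rpow_tsum {ι : Type*} (a : ι → ℝ≥0∞) {p : ℝ} (hp : 1 ≤ p) :
    ∑' i, a i ^ p ≤ (∑' i, a i) ^ p := by
  have rpow_eq (x : ℝ≥0∞) : x ^ p = x * x ^ (p - 1) := by
    conv_rhs => enter [1]; rw [← ENNReal.rpow_one x]
    rw [← ENNReal.rpow_add_of_nonneg _ _ zero_le_one (sub_nonneg.2 hp), add_sub_cancel]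
  rw [rpow_eq (∑' i, a i), ← ENNReal.tsum_mul_right]
  refine ENNReal.tsum_le_tsum fun i => (rpow_eq _).le.trans ?_
  gcongr
  exact ENNReal.le_tsum i

theorem tsum_pow_succ_le_of_le {ι : Type*} {a : ι → ℝ≥0∞} {M : ℝ≥0∞} (h : ∀ i, a i ≤ M) (n : ℕ) :
    ∑' i, a i ^ (n + 1) ≤ M ^ n * ∑' i, a i := by
  rw [← ENNReal.tsum_mul_left]
  refine ENNReal.tsum_le_tsum fun i => ?_
  rw [pow_succ]
  gcongr
  exact h i

theorem add_pow_succ_le (s a : ℝ≥0∞) (n : ℕ) :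
    (s + a) ^ (n + 1) ≤ s ^ (n + 1) + (n + 1) * (a * (s + a) ^ n) := by
  induction n with
  | zero => simp
  | succ n ih =>
    calc (s + a) ^ (n + 1 + 1)
        = (s + a) ^ (n + 1) * s + a * (s + a) ^ (n + 1) := by ring
      _ ≤ (s ^ (n + 1) + (n + 1) * (a * (s + a) ^ n)) * s + a * (s + a) ^ (n + 1) := by gcongr
      _ = s ^ (n + 1 + 1) + ((n + 1) * (a * ((s + a) ^ n * s)) + a * (s + a) ^ (n + 1)) := by ring
      _ ≤ s ^ (n + 1 + 1)
            + ((n + 1) * (a * ((s + a) ^ n * (s + a))) + a * (s + a) ^ (n + 1)) := by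
        gcongr
        exact le_self_add
      _ = _ := by push_cast; ring

theorem sum_le_tsum_Iic {ι : Type*} [LinearOrder ι] (a : ι → ℝ≥0∞) {k : ι} {s : Finset ι}
    (hs : ∀ j ∈ s, j ≤ k) : ∑ j ∈ s, a j ≤ ∑' j : Set.Iic k, a j := by
  rw [← Finset.tsum_subtype' s a]
  exact ENNReal.tsum_mono_subtype a hs

theorem tsum_pow_succ_le_tsum_mul_tsum_Iic {ι : Type*} [LinearOrder ι] (a : ι → ℝ≥0∞) (n : ℕ) :
    (∑' k, a k) ^ (n + 1) ≤ (n + 1) * ∑' k, a k * (∑' j : Set.Iic k, a j) ^ n := by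
  have sum_pow_le (s : Finset ι) :
      (∑ k ∈ s, a k) ^ (n + 1) ≤ (n + 1) * ∑ k ∈ s, a k * (∑' j : Set.Iic k, a j) ^ n := by
    induction s using Finset.induction_on_max with
    | empty => simp
    | insert k s hk ih =>
      have hks : k ∉ s := fun h => lt_irrefl _ (hk k h)
      have sum_le : ∑ j ∈ s, a j + a k ≤ ∑' j : Set.Iic k, a j := by
        rw [add_comm, ← Finset.sum_insert hks]
        refine sum_le_tsum_Iic a ?_
        exact (Finset.forall_mem_insert _ _ _).2 ⟨le_rfl, fun j hj => (hk j hj).le⟩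
      rw [Finset.sum_insert hks, Finset.sum_insert hks, add_comm (a k), add_comm (a k * _), mul_add]
      refine (add_pow_succ_le _ _ n).trans ?_
      gcongr
  have tendsto_sum_pow := ((ENNReal.continuous_pow (n + 1)).tendsto _).comp
    (ENNReal.summable (f := a)).hasSum
  refine le_of_tendsto' tendsto_sum_pow fun s => (sum_pow_le s).trans ?_
  gcongr
  exact ENNReal.sum_le_tsum s

theorem tsum_Iic_int (a : ℤ → ℝ≥0∞) (k : ℤ) : ∑' j : Set.Iic k, a j = ∑' i : ℕ, a (k - i) := by
  have range_eq : Set.range (fun i : ℕ => k - i) = Set.Iic k := by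
    ext j
    exact ⟨fun ⟨i, hi⟩ => by simp [← hi], fun hj => ⟨(k - j).toNat, by grind⟩⟩
  rw [← range_eq]
  exact tsum_range a fun i j hij => by simpa using hij

theorem tsum_pow_le_tsum_geometric_mul (a : ℕ → ℝ≥0∞) {r : ℝ≥0∞} (hr0 : r ≠ 0) (hr : r ≠ ⊤)
    {q : ℕ} (hq : q ≠ 0) :
    (∑' i, a i) ^ q ≤ (1 - r)⁻¹ ^ q * ∑' i, (r⁻¹ ^ i * a i) ^ q := by
  set S := ∑' i, (r⁻¹ ^ i * a i) ^ q
  have hq' : (0 : ℝ) < q := by positivity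
  have le_rpow_inv (i : ℕ) : a i ≤ r ^ i * S ^ (q : ℝ)⁻¹ := by
    calc a i = r ^ i * (r⁻¹ ^ i * a i) := by
          rw [← mul_assoc, ← mul_pow, ENNReal.mul_inv_cancel hr0 hr, one_pow, one_mul]
      _ ≤ _ := by
        gcongr
        rw [ENNReal.le_rpow_inv_iff hq', ENNReal.rpow_natCast]
        exact ENNReal.le_tsum (f := fun i => (r⁻¹ ^ i * a i) ^ q) i
  calc (∑' i, a i) ^ q ≤ (∑' i, r ^ i * S ^ (q : ℝ)⁻¹) ^ q := by gcongr with i; exact le_rpow_inv i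
    _ = (1 - r)⁻¹ ^ q * S := by
      rw [ENNReal.tsum_mul_right, ENNReal.tsum_geometric, mul_pow, ← ENNReal.rpow_mul_natCast,
        inv_mul_cancel₀ hq'.ne', ENNReal.rpow_one]

theorem tsum_int_pow_le_tsum_tsum (a : ℤ → ℝ≥0∞) {r : ℝ≥0∞} (hr0 : r ≠ 0) (hr : r ≠ ⊤)
    {q : ℕ} (hq : q ≠ 0) :
    (∑' k, a k) ^ (q + 1) ≤
      (q + 1) * (1 - r)⁻¹ ^ q * ∑' k, ∑' i : ℕ, a k * (r⁻¹ ^ i * a (k - i)) ^ q := by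
  refine (tsum_pow_succ_le_tsum_mul_tsum_Iic a q).trans ?_
  rw [mul_assoc, ← ENNReal.tsum_mul_left (a := (1 - r)⁻¹ ^ q)]
  refine mul_le_mul' le_rfl (ENNReal.tsum_le_tsum fun k => ?_)
  rw [tsum_Iic_int, ENNReal.tsum_mul_left, mul_left_comm]
  gcongr
  exact tsum_pow_le_tsum_geometric_mul _ hr0 hr hq

theorem exists_pow_mul_two_eq_one {n : ℕ} (hn : n ≠ 0) : ∃ r : ℝ≥0∞, r < 1 ∧ r ^ n * 2 = 1 := by
  refine ⟨2⁻¹ ^ (n : ℝ)⁻¹, ENNReal.rpow_lt_one (by simp) (by positivity), ?_⟩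
  rw [← ENNReal.rpow_mul_natCast, inv_mul_cancel₀ (by positivity), ENNReal.rpow_one,
    ENNReal.inv_mul_cancel two_ne_zero ofNat_ne_top]

theorem mul_pow_le_add_pow_succ (x y : ℝ≥0∞) (n : ℕ) : x * y ^ n ≤ (x + y) ^ (n + 1) := by
  rw [pow_succ']
  gcongr
  · exact le_self_add
  · exact le_add_self

/- The `(n + 1)`-st power of the left side is `2⁻ⁱ c_k c_{k-i}ⁿ`,
where `c_k = (2 ^ k) ^ (n + 2) * e k ^ (n + 1)`. -/
theorem zpow_mul_mul_zpow_mul_pow_le {n : ℕ} {s : ℝ≥0∞} (hs : s ^ (n + 1) * 2 = 1)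
    (e : ℤ → ℝ≥0∞) (k : ℤ) (i : ℕ) :
    (2 ^ k * e k) * ((2 ^ (k - i)) ^ (n + 1) * e (k - i) ^ n) ≤
      s ^ i * ((2 ^ k) ^ (n + 2) * e k ^ (n + 1) +
        (2 ^ (k - i)) ^ (n + 2) * e (k - i) ^ (n + 1)) := by
  have zpow_eq : (2 : ℝ≥0∞) ^ k = 2 ^ (k - i) * 2 ^ i := by
    rw [← zpow_natCast, ← ENNReal.zpow_add two_ne_zero ofNat_ne_top, sub_add_cancel]
  rw [zpow_eq, ← ENNReal.pow_le_pow_left_iff n.succ_ne_zero]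
  generalize e k = x, e (k - i) = y, (2 : ℝ≥0∞) ^ (k - i) = a
  have weight : (s ^ i) ^ (n + 1) * 2 ^ i = 1 := by
    rw [← pow_mul', pow_mul, ← mul_pow, hs, one_pow]
  calc ((a * 2 ^ i * x) * (a ^ (n + 1) * y ^ n)) ^ (n + 1)
      = (s ^ i) ^ (n + 1) * 2 ^ i * ((a * 2 ^ i * x) * (a ^ (n + 1) * y ^ n)) ^ (n + 1) := by
        rw [weight, one_mul]
    _ = (s ^ i) ^ (n + 1) *
          (((a * 2 ^ i) ^ (n + 2) * x ^ (n + 1)) * (a ^ (n + 2) * y ^ (n + 1)) ^ n) := by ring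
    _ ≤ _ := by
      rw [mul_pow (s ^ i)]
      gcongr
      exact mul_pow_le_add_pow_succ _ _ n

theorem tsum_tsum_geometric_mul_add (c : ℤ → ℝ≥0∞) (θ : ℝ≥0∞) :
    ∑' k : ℤ, ∑' i : ℕ, θ ^ i * (c k + c (k - i)) = (1 - θ)⁻¹ * (2 * ∑' k, c k) := by
  have tsum_add_shift (i : ℕ) : ∑' k : ℤ, (c k + c (k - i)) = 2 * ∑' k, c k := by
    rw [ENNReal.tsum_add, two_mul, ← (Equiv.subRight (i : ℤ)).tsum_eq c]
    rfl
  rw [ENNReal.tsum_comm]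
  simp_rw [ENNReal.tsum_mul_left, tsum_add_shift, ENNReal.tsum_mul_right, ENNReal.tsum_geometric]

theorem lintegral_zpow_mul_mul_pow_le {α : Type*} [MeasurableSpace α] {μ : Measure α} {n : ℕ}
    {C r : ℝ≥0∞} (hr : r ^ (2 * (n + 1) * (n + 1)) * 2 = 1) {g : ℤ → α → ℝ≥0∞} {e : ℤ → ℝ≥0∞}
    (hg : ∀ k, Measurable (g k))
    (hge : ∀ k j, ∫⁻ x, g k x * g j x ^ (n + 1) ∂μ ≤ C * (e k * e j ^ n)) (k : ℤ) (i : ℕ) :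
    ∫⁻ x, 2 ^ k * g k x * (r⁻¹ ^ i * (2 ^ (k - i) * g (k - i) x)) ^ (n + 1) ∂μ ≤
      C * ((r ^ (n + 1)) ^ i * ((2 ^ k) ^ (n + 2) * e k ^ (n + 1) +
        (2 ^ (k - i)) ^ (n + 2) * e (k - i) ^ (n + 1))) := by
  have hr0 : r ≠ 0 := by rintro rfl; simp at hr
  have hr' : r ≠ ⊤ := by rintro rfl; simp at hr
  have weight : (r⁻¹ ^ i) ^ (n + 1) * (r ^ (2 * (n + 1))) ^ i = (r ^ (n + 1)) ^ i := by
    calc _ = (r⁻¹ * r) ^ (i * (n + 1)) * (r ^ (n + 1)) ^ i := by ring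
      _ = _ := by rw [ENNReal.inv_mul_cancel hr0 hr', one_pow, one_mul]
  calc _ = ∫⁻ x, 2 ^ k * (r⁻¹ ^ i * 2 ^ (k - i)) ^ (n + 1) *
            (g k x * g (k - i) x ^ (n + 1)) ∂μ := by congr! 2; ring
    _ = 2 ^ k * (r⁻¹ ^ i * 2 ^ (k - i)) ^ (n + 1) *
            ∫⁻ x, g k x * g (k - i) x ^ (n + 1) ∂μ := lintegral_const_mul _ (by fun_prop)
    _ ≤ 2 ^ k * (r⁻¹ ^ i * 2 ^ (k - i)) ^ (n + 1) * (C * (e k * e (k - i) ^ n)) := by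
      gcongr
      exact hge k (k - i)
    _ = C * ((r⁻¹ ^ i) ^ (n + 1) *
          ((2 ^ k * e k) * ((2 ^ (k - i)) ^ (n + 1) * e (k - i) ^ n))) := by ring
    _ ≤ C * ((r⁻¹ ^ i) ^ (n + 1) * ((r ^ (2 * (n + 1))) ^ i *
          ((2 ^ k) ^ (n + 2) * e k ^ (n + 1) +
            (2 ^ (k - i)) ^ (n + 2) * e (k - i) ^ (n + 1)))) :=
      mul_le_mul' le_rfl <| mul_le_mul' le_rfl <|
        zpow_mul_mul_zpow_mul_pow_le (by rwa [← pow_mul]) e k i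
    _ = _ := by rw [← mul_assoc ((r⁻¹ ^ i) ^ (n + 1)), weight]

theorem lintegral_tsum_zpow_mul_pow_le {α : Type*} [MeasurableSpace α] {μ : Measure α} {n : ℕ}
    {C r : ℝ≥0∞} (hr : r ^ (2 * (n + 1) * (n + 1)) * 2 = 1) {g : ℤ → α → ℝ≥0∞} {e : ℤ → ℝ≥0∞}
    (hg : ∀ k, Measurable (g k))
    (hge : ∀ k j, ∫⁻ x, g k x * g j x ^ (n + 1) ∂μ ≤ C * (e k * e j ^ n)) :
    ∫⁻ x, (∑' k, 2 ^ k * g k x) ^ (n + 2) ∂μ ≤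
      ((n + 1 : ℕ) + 1) * (1 - r)⁻¹ ^ (n + 1) * (C * ((1 - r ^ (n + 1))⁻¹ * 2)) *
        ∑' k : ℤ, (2 ^ k) ^ (n + 2) * e k ^ (n + 1) := by
  have hr0 : r ≠ 0 := by rintro rfl; simp at hr
  have hr' : r ≠ ⊤ := by rintro rfl; simp at hr
  calc ∫⁻ x, (∑' k, 2 ^ k * g k x) ^ (n + 2) ∂μ
      ≤ ∫⁻ x, ((n + 1 : ℕ) + 1) * (1 - r)⁻¹ ^ (n + 1) * ∑' k : ℤ, ∑' i : ℕ,
          2 ^ k * g k x * (r⁻¹ ^ i * (2 ^ (k - i) * g (k - i) x)) ^ (n + 1) ∂μ :=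
        lintegral_mono fun x => tsum_int_pow_le_tsum_tsum _ hr0 hr' n.succ_ne_zero
    _ = ((n + 1 : ℕ) + 1) * (1 - r)⁻¹ ^ (n + 1) * ∑' k : ℤ, ∑' i : ℕ,
          ∫⁻ x, 2 ^ k * g k x * (r⁻¹ ^ i * (2 ^ (k - i) * g (k - i) x)) ^ (n + 1) ∂μ := by
      rw [lintegral_const_mul _ (by fun_prop), lintegral_tsum (by fun_prop)]
      congr! 3
      exact lintegral_tsum (by fun_prop)
    _ ≤ ((n + 1 : ℕ) + 1) * (1 - r)⁻¹ ^ (n + 1) * ∑' k : ℤ, ∑' i : ℕ,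
          C * ((r ^ (n + 1)) ^ i * ((2 ^ k) ^ (n + 2) * e k ^ (n + 1) +
            (2 ^ (k - i)) ^ (n + 2) * e (k - i) ^ (n + 1))) := by
      gcongr with k i
      exact lintegral_zpow_mul_mul_pow_le hr hg hge k i
    _ = _ := by
      simp_rw [ENNReal.tsum_mul_left (a := C)]
      rw [tsum_tsum_geometric_mul_add fun k => (2 ^ k) ^ (n + 2) * e k ^ (n + 1)]
      ring

theorem le_two_mul_tsum_zpow_indicator_Ici (x : ℝ≥0∞) :
    x ≤ 2 * ∑' k : ℤ, 2 ^ k * (Set.Ici (2 ^ k)).indicator 1 x := by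
  refine le_of_forall_lt_imp_le_of_dense fun y hy => ?_
  rcases eq_or_ne y 0 with rfl | hy0
  · exact zero_le
  obtain ⟨k, hky, hyk⟩ := ENNReal.exists_mem_Ico_zpow hy0 hy.ne_top one_lt_two ofNat_ne_top
  calc y ≤ 2 * 2 ^ k := by
        rw [ENNReal.zpow_add two_ne_zero ofNat_ne_top, zpow_one, mul_comm] at hyk
        exact hyk.le
    _ = 2 * (2 ^ k * (Set.Ici (2 ^ k)).indicator 1 x) := by
      rw [Set.indicator_of_mem (Set.mem_Ici.2 (hky.trans hy.le)), Pi.one_apply, mul_one]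
    _ ≤ _ := by
      gcongr
      exact ENNReal.le_tsum (f := fun k : ℤ => 2 ^ k * (Set.Ici (2 ^ k)).indicator 1 x) k

theorem tsum_zpow_indicator_Ici_le (x : ℝ≥0∞) :
    ∑' k : ℤ, 2 ^ k * (Set.Ici (2 ^ k)).indicator 1 x ≤ 2 * x := by
  rcases eq_or_ne x ⊤ with rfl | hx
  · simp
  rcases eq_or_ne x 0 with rfl | hx0
  · simp [(ENNReal.zpow_pos _ _ _).ne']
  obtain ⟨K, hKx, hxK⟩ := ENNReal.exists_mem_Ico_zpow hx0 hx one_lt_two ofNat_ne_top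
  have layer_le (k : ℤ) : 2 ^ k * (Set.Ici (2 ^ k)).indicator 1 x ≤
      (Set.Iic K).indicator (fun k => (2 : ℝ≥0∞) ^ k) k := by
    rcases le_or_gt k K with hk | hk
    · rw [Set.indicator_of_mem (Set.mem_Iic.2 hk)]
      exact mul_le_of_le_one_right' (Set.indicator_le_self' (by simp) x)
    · have hxk : x < 2 ^ k := hxK.trans_le (ENNReal.zpow_le_of_le one_le_two hk)
      simp [hxk.not_ge]
  calc _ ≤ ∑' k, (Set.Iic K).indicator (fun k => (2 : ℝ≥0∞) ^ k) k := ENNReal.tsum_le_tsum layer_le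
    _ = ∑' i : ℕ, 2 ^ K * 2⁻¹ ^ i := by
      rw [← tsum_subtype, tsum_Iic_int]
      congr! 2 with i
      rw [sub_eq_add_neg, ENNReal.zpow_add two_ne_zero ofNat_ne_top, ENNReal.zpow_neg, zpow_natCast,
        ENNReal.inv_pow]
    _ = 2 * 2 ^ K := by
      rw [ENNReal.tsum_mul_left, ENNReal.tsum_geometric, ENNReal.one_sub_inv_two, inv_inv, mul_comm]
    _ ≤ 2 * x := by gcongr

end Series

section DyadicLayers

variable {α : Type*} {F : ℤ → Set α}

theorem tsum_zpow_rpow_mul_indicator_le {p : ℝ} (hp : 1 ≤ p) (F : ℤ → Set α) (x : α) :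
    ∑' k, ((2 : ℝ≥0∞) ^ k) ^ p * (F k).indicator 1 x ≤
      (∑' k, 2 ^ k * (F k).indicator 1 x) ^ p := by
  have term_rpow (k : ℤ) : ((2 : ℝ≥0∞) ^ k) ^ p * (F k).indicator 1 x =
      (2 ^ k * (F k).indicator 1 x) ^ p := by
    by_cases hx : x ∈ F k <;> simp [hx, one_pos.trans_le hp]
  simp_rw [term_rpow]
  exact tsum_rpow_le_rpow_tsum _ hp

variable [MeasurableSpace α]

theorem measurable_tsum_zpow_mul_indicator (hF : ∀ k, MeasurableSet (F k)) :
    Measurable fun x => ∑' k, (2 : ℝ≥0∞) ^ k * (F k).indicator 1 x :=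
  .tsum fun k => (measurable_one.indicator (hF k)).const_mul _

theorem tsum_zpow_rpow_mul_measure_le (μ : Measure α) (hF : ∀ k, MeasurableSet (F k)) {p : ℝ}
    (hp : 1 ≤ p) :
    ∑' k, ((2 : ℝ≥0∞) ^ k) ^ p * μ (F k) ≤
      ∫⁻ x, (∑' k, 2 ^ k * (F k).indicator 1 x) ^ p ∂μ := by
  have indicator_meas (k : ℤ) : Measurable ((F k).indicator (1 : α → ℝ≥0∞)) :=
    measurable_one.indicator (hF k)
  calc _ = ∫⁻ x, ∑' k, ((2 : ℝ≥0∞) ^ k) ^ p * (F k).indicator 1 x ∂μ := by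
        rw [lintegral_tsum fun k => by fun_prop]
        simp_rw [lintegral_const_mul _ (indicator_meas _), lintegral_indicator_one (hF _)]
    _ ≤ _ := lintegral_mono (tsum_zpow_rpow_mul_indicator_le hp F)

end DyadicLayers

section CriticalExponent

/-- The critical exponent `(d + 1) / d` of the Radon-like transform on `ℝ^d`, indexed by
`n = d - 1`. -/
def critExp (n : ℕ) : ℝ := (n + 2) / (n + 1)

theorem critExp_pos (n : ℕ) : 0 < critExp n := by unfold critExp; positivity

theorem one_le_critExp (n : ℕ) : 1 ≤ critExp n := by
  rw [critExp, one_le_div (by positivity)]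
  linarith

theorem critExp_mul (n : ℕ) : critExp n * (n + 1) = n + 2 := by
  rw [critExp, div_mul_cancel₀ _ (by positivity)]

theorem holderConjugate_critExp (n : ℕ) : (critExp n).HolderConjugate (n + 2) := by
  rw [Real.holderConjugate_comm, Real.holderConjugate_iff_eq_conjExponent (by linarith), critExp]
  ring

theorem rpow_critExp_pow (x : ℝ≥0∞) (n : ℕ) : (x ^ critExp n) ^ (n + 1) = x ^ (n + 2) := by
  rw [← ENNReal.rpow_mul_natCast, ← ENNReal.rpow_natCast x]
  push_cast
  rw [critExp_mul]

theorem pow_rpow_critExp (x : ℝ≥0∞) (n : ℕ) : (x ^ (n + 1)) ^ critExp n = x ^ (n + 2) := by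
  rw [← rpow_critExp_pow, ← ENNReal.rpow_natCast_mul, ← ENNReal.rpow_mul_natCast, mul_comm]

theorem lintegral_enorm_pow_mul_le {h : ℝ → ℝ≥0∞} (hm : Measurable h) (h1 : ∀ u, h u ≤ 1) (n : ℕ)
    (R : ℝ≥0∞) :
    ∫⁻ u, ‖u‖ₑ ^ n * h u ≤ 2 * R ^ (n + 1) + R⁻¹ * ∫⁻ u, ‖u‖ₑ ^ (n + 1) * h u := by
  have split_le (u : ℝ) : ‖u‖ₑ ^ n * h u ≤
      (Metric.closedEBall 0 R).indicator (fun _ => R ^ n) u + R⁻¹ * (‖u‖ₑ ^ (n + 1) * h u) := by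
    rcases le_or_gt ‖u‖ₑ R with hu | hu
    · rw [Set.indicator_of_mem (by simpa using hu)]
      exact le_add_right ((mul_le_mul' (pow_le_pow_left' hu n) (h1 u)).trans_eq (mul_one _))
    · have one_le : 1 ≤ R⁻¹ * ‖u‖ₑ := by
        rw [mul_comm, ← div_eq_mul_inv, ENNReal.le_div_iff_mul_le
          (.inr (pos_of_gt hu).ne') (.inr enorm_ne_top), one_mul]
        exact hu.le
      calc ‖u‖ₑ ^ n * h u ≤ R⁻¹ * ‖u‖ₑ * (‖u‖ₑ ^ n * h u) := le_mul_of_one_le_left' one_le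
        _ = R⁻¹ * (‖u‖ₑ ^ (n + 1) * h u) := by ring
        _ ≤ _ := le_add_self
  calc _ ≤ ∫⁻ u, ((Metric.closedEBall 0 R).indicator (fun _ => R ^ n) u +
          R⁻¹ * (‖u‖ₑ ^ (n + 1) * h u)) := lintegral_mono split_le
    _ = R ^ n * (2 * R) + R⁻¹ * ∫⁻ u, ‖u‖ₑ ^ (n + 1) * h u := by
      rw [lintegral_add_right _ (by fun_prop), lintegral_const_mul _ (by fun_prop),
        lintegral_indicator_const Metric.isClosed_closedEBall.measurableSet,
        Real.volume_closedEBall]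
    _ = _ := by ring

theorem lintegral_enorm_pow_mul_rpow_critExp_le {h : ℝ → ℝ≥0∞} (hm : Measurable h)
    (h1 : ∀ u, h u ≤ 1) (n : ℕ) :
    (∫⁻ u, ‖u‖ₑ ^ n * h u) ^ critExp n ≤ 3 ^ critExp n * ∫⁻ u, ‖u‖ₑ ^ (n + 1) * h u := by
  obtain ⟨R, hR⟩ : ∃ R : ℝ≥0∞, R ^ (n + 2) = ∫⁻ u, ‖u‖ₑ ^ (n + 1) * h u :=
    ⟨_, ENNReal.rpow_inv_natCast_pow (by omega) _⟩
  have le_three_mul : ∫⁻ u, ‖u‖ₑ ^ n * h u ≤ 3 * R ^ (n + 1) := by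
    calc _ ≤ 2 * R ^ (n + 1) + R⁻¹ * R ^ (n + 2) :=
          (lintegral_enorm_pow_mul_le hm h1 n R).trans_eq (by rw [hR])
      _ = 2 * R ^ (n + 1) + R⁻¹ * R * R ^ (n + 1) := by ring
      _ ≤ 2 * R ^ (n + 1) + 1 * R ^ (n + 1) := by gcongr; exact ENNReal.inv_mul_le_one R
      _ = _ := by ring
  calc _ ≤ (3 * R ^ (n + 1)) ^ critExp n := by gcongr; exact (critExp_pos n).le
    _ = _ := by rw [ENNReal.mul_rpow_of_nonneg _ _ (critExp_pos n).le, pow_rpow_critExp, hR]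

end CriticalExponent

section Coordinates

open Matrix

@[fun_prop]
theorem measurable_vecCons {α : Type*} [MeasurableSpace α] {n : ℕ} {a : α → ℝ} {b : α → Fin n → ℝ}
    (ha : Measurable a) (hb : Measurable b) : Measurable fun x => vecCons (a x) (b x) :=
  measurable_pi_iff.2 <| Fin.cases ha (measurable_pi_iff.1 hb)

@[fun_prop]
theorem measurable_dotProduct {α : Type*} [MeasurableSpace α] {n : ℕ} {a b : α → Fin n → ℝ}
    (ha : Measurable a) (hb : Measurable b) : Measurable fun x => a x ⬝ᵥ b x :=
  Finset.measurable_fun_sum _ fun i _ => by fun_prop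

theorem measurePreserving_vecCons (n : ℕ) :
    MeasurePreserving fun q : ℝ × (Fin n → ℝ) => vecCons q.1 q.2 := by
  have insertNth_preserving := (volume_preserving_piFinSuccAbove (fun _ : Fin (n + 1) => ℝ) 0).symm
  convert insertNth_preserving using 2 with q
  exact (Fin.insertNth_zero' q.1 q.2).symm

theorem measurePreserving_vecCons_prod (n : ℕ) :
    MeasurePreserving fun q : ℝ × (Fin n → ℝ) × ℝ => (vecCons q.1 q.2.1, q.2.2) :=
  ((measurePreserving_vecCons n).prod (.id volume)).comp (measurePreserving_prodAssoc ..).symm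

theorem lintegral_prod_eq_lintegral_enorm_pow_mul {E : Type*} [NormedAddCommGroup E]
    [NormedSpace ℝ E] [FiniteDimensional ℝ E] [MeasurableSpace E] [BorelSpace E] (μ : Measure E)
    [μ.IsAddHaarMeasure] {g : ℝ × E → ℝ≥0∞} (hg : Measurable g) :
    ∫⁻ q, g q ∂(volume.prod μ) =
      ∫⁻ u : ℝ, ‖u‖ₑ ^ Module.finrank ℝ E * ∫⁻ w, g (u, u • w) ∂μ := by
  rw [lintegral_prod _ hg.aemeasurable]
  refine lintegral_congr_ae ?_
  filter_upwards [compl_mem_ae_iff.2 (measure_singleton (0 : ℝ))] with u hu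
  have hu : u ≠ 0 := hu
  have jacobian : ‖u‖ₑ ^ Module.finrank ℝ E * ENNReal.ofReal |(u ^ Module.finrank ℝ E)⁻¹| = 1 := by
    rw [← Real.enorm_eq_ofReal_abs, ← enorm_pow, ← enorm_mul,
      mul_inv_cancel₀ (pow_ne_zero _ hu), enorm_one]
  rw [← lintegral_map (f := fun v => g (u, v)) (by fun_prop) (measurable_const_smul u),
    Measure.map_addHaar_smul μ hu, lintegral_smul_measure, smul_eq_mul, ← mul_assoc, jacobian,
    one_mul]

end Coordinates

section AffineRadon

open Matrix

variable {n : ℕ}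

/-- The integral of `f` over the non-vertical hyperplane `{(y, m ⬝ᵥ y + b)}`, as a function of
`z = (m, b)`: the affine model of the Radon-like transform. -/
def affineRadon (f : (Fin n → ℝ) × ℝ → ℝ≥0∞) (z : (Fin n → ℝ) × ℝ) : ℝ≥0∞ :=
  ∫⁻ y : Fin n → ℝ, f (y, z.1 ⬝ᵥ y + z.2)

@[fun_prop]
theorem measurable_affineRadon {f : (Fin n → ℝ) × ℝ → ℝ≥0∞} (hf : Measurable f) :
    Measurable (affineRadon f) := by
  unfold affineRadon
  fun_prop

theorem affineRadon_mono {f g : (Fin n → ℝ) × ℝ → ℝ≥0∞} (h : f ≤ g) :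
    affineRadon f ≤ affineRadon g :=
  fun _ => lintegral_mono fun _ => h _

theorem affineRadon_const_mul {f : (Fin n → ℝ) × ℝ → ℝ≥0∞} (hf : Measurable f) (c : ℝ≥0∞) :
    (affineRadon fun z => c * f z) = fun z => c * affineRadon f z :=
  funext fun _ => lintegral_const_mul _ (by fun_prop)

theorem affineRadon_tsum {f : ℤ → (Fin n → ℝ) × ℝ → ℝ≥0∞} (hf : ∀ k, Measurable (f k)) :
    (affineRadon fun z => ∑' k, f k z) = fun z => ∑' k, affineRadon (f k) z :=
  funext fun _ => lintegral_tsum (by fun_prop)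

theorem lintegral_affineRadon_mul {f g : (Fin n → ℝ) × ℝ → ℝ≥0∞} (hf : Measurable f)
    (hg : Measurable g) :
    ∫⁻ z, affineRadon f z * g z = ∫⁻ w, f w * affineRadon g (-w.1, w.2) := by
  calc ∫⁻ z, affineRadon f z * g z
      = ∫⁻ m, ∫⁻ b, ∫⁻ y, f (y, m ⬝ᵥ y + b) * g (m, b) := by
        rw [Measure.volume_eq_prod, lintegral_prod _ (by fun_prop)]
        simp_rw [affineRadon]
        congr! 4
        rw [lintegral_mul_const _ (by fun_prop)]
    _ = ∫⁻ m, ∫⁻ y, ∫⁻ b, f (y, m ⬝ᵥ y + b) * g (m, b) := by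
        refine lintegral_congr fun m => lintegral_lintegral_swap ?_
        fun_prop
    _ = ∫⁻ m, ∫⁻ y, ∫⁻ s, f (y, s) * g (m, -y ⬝ᵥ m + s) := by
        refine lintegral_congr fun m => lintegral_congr fun y => ?_
        rw [← lintegral_add_left_eq_self _ (-y ⬝ᵥ m)]
        simp [dotProduct_comm]
    _ = ∫⁻ m, ∫⁻ w : (Fin n → ℝ) × ℝ, f w * g (m, -w.1 ⬝ᵥ m + w.2) := by
        refine lintegral_congr fun m => ?_
        rw [Measure.volume_eq_prod, lintegral_prod _ (by fun_prop)]
    _ = ∫⁻ w, f w * affineRadon g (-w.1, w.2) := by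
        rw [lintegral_lintegral_swap (by fun_prop)]
        refine lintegral_congr fun w => lintegral_const_mul _ (by fun_prop)

theorem affineRadon_translate (f : (Fin n → ℝ) × ℝ → ℝ≥0∞) (w : (Fin n → ℝ) × ℝ) (m : Fin n → ℝ) :
    affineRadon (fun z => f (z + (-w.1, w.2))) (m, 0) = affineRadon f (m, w.1 ⬝ᵥ m + w.2) := by
  simp_rw [affineRadon]
  rw [← lintegral_add_right_eq_self _ w.1]
  congr! 4
  · simp
  · simp [dotProduct_comm]; ring

/-- The part of `h` on the line through the origin and `(1, q.1, q.2)`, integrated along that line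
against the weight `|u|ⁿ`. It turns hyperplanes through the origin of `ℝ^(n+2)` into arbitrary
non-vertical hyperplanes of `ℝ^(n+1)`. -/
def centralProj (h : (Fin (n + 1) → ℝ) × ℝ → ℝ≥0∞) (q : (Fin n → ℝ) × ℝ) : ℝ≥0∞ :=
  ∫⁻ u : ℝ, ‖u‖ₑ ^ n * h (vecCons u (u • q.1), u * q.2)

@[fun_prop]
theorem measurable_centralProj {h : (Fin (n + 1) → ℝ) × ℝ → ℝ≥0∞} (hh : Measurable h) :
    Measurable (centralProj h) := by
  unfold centralProj
  fun_prop

theorem affineRadon_vecCons_zero {h : (Fin (n + 1) → ℝ) × ℝ → ℝ≥0∞} (hh : Measurable h) (a : ℝ)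
    (m : Fin n → ℝ) : affineRadon h (vecCons a m, 0) = affineRadon (centralProj h) (m, a) := by
  calc affineRadon h (vecCons a m, 0)
      = ∫⁻ q : ℝ × (Fin n → ℝ), h (vecCons q.1 q.2, a * q.1 + m ⬝ᵥ q.2) := by
        rw [affineRadon, ← (measurePreserving_vecCons n).lintegral_comp (by fun_prop)]
        simp only [cons_dotProduct_cons, add_zero]
    _ = ∫⁻ u : ℝ, ‖u‖ₑ ^ n *
          ∫⁻ w : Fin n → ℝ, h (vecCons u (u • w), a * u + m ⬝ᵥ (u • w)) := by
        rw [Measure.volume_eq_prod, lintegral_prod_eq_lintegral_enorm_pow_mul _ (by fun_prop),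
          Module.finrank_fin_fun]
    _ = ∫⁻ u : ℝ, ∫⁻ w : Fin n → ℝ, ‖u‖ₑ ^ n * h (vecCons u (u • w), u * (m ⬝ᵥ w + a)) := by
        congr! 2 with u
        rw [lintegral_const_mul _ (by fun_prop)]
        congr! 5
        rw [dotProduct_smul, smul_eq_mul]
        ring
    _ = affineRadon (centralProj h) (m, a) := lintegral_lintegral_swap (by fun_prop)

instance isAddHaarMeasure_volume_pi_prod :
    (volume : Measure ((Fin n → ℝ) × ℝ)).IsAddHaarMeasure :=
  Measure.prod.instIsAddHaarMeasure volume volume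

theorem lintegral_enorm_pow_succ_mul {h : (Fin (n + 1) → ℝ) × ℝ → ℝ≥0∞} (hh : Measurable h) :
    ∫⁻ q : (Fin n → ℝ) × ℝ, ∫⁻ u : ℝ, ‖u‖ₑ ^ (n + 1) * h (vecCons u (u • q.1), u * q.2) =
      ∫⁻ z, h z := by
  rw [lintegral_lintegral_swap (by fun_prop),
    ← (measurePreserving_vecCons_prod n).lintegral_comp hh, Measure.volume_eq_prod ℝ,
    lintegral_prod_eq_lintegral_enorm_pow_mul _ (by fun_prop)]
  congr! 2 with u
  rw [lintegral_const_mul _ (by fun_prop), Module.finrank_prod, Module.finrank_fin_fun,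
    Module.finrank_self]
  rfl

theorem lintegral_centralProj_rpow_le {h : (Fin (n + 1) → ℝ) × ℝ → ℝ≥0∞} (hh : Measurable h)
    (h1 : ∀ z, h z ≤ 1) :
    ∫⁻ q, centralProj h q ^ critExp n ≤ 3 ^ critExp n * ∫⁻ z, h z := by
  calc _ ≤ ∫⁻ q : (Fin n → ℝ) × ℝ, 3 ^ critExp n *
          ∫⁻ u : ℝ, ‖u‖ₑ ^ (n + 1) * h (vecCons u (u • q.1), u * q.2) :=
        lintegral_mono fun q =>
          lintegral_enorm_pow_mul_rpow_critExp_le (by fun_prop) (fun u => h1 _) n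
    _ = _ := by rw [lintegral_const_mul _ (by fun_prop), lintegral_enorm_pow_succ_mul hh]

/-- The critical strong-type estimate `‖affineRadon F‖_{n+2} ≲ ‖F‖_{(n+2)/(n+1)}`, raised to the
power `n + 2`. -/
def StrongTypeBound (n : ℕ) (C : ℝ≥0∞) : Prop :=
  ∀ F : (Fin n → ℝ) × ℝ → ℝ≥0∞, Measurable F →
    ∫⁻ z, affineRadon F z ^ (n + 2) ≤ C * (∫⁻ z, F z ^ critExp n) ^ (n + 1)

/-- The estimate for the `(n + 1)`-st moment of the integrals of a function `h ≤ 1` over the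
pencil of hyperplanes through a point, which up to a reflection is an instance of `affineRadon`
itself. -/
def PencilBound (n : ℕ) (C : ℝ≥0∞) : Prop :=
  ∀ h : (Fin n → ℝ) × ℝ → ℝ≥0∞, Measurable h → (∀ z, h z ≤ 1) →
    ∀ w, affineRadon (fun z => affineRadon h z ^ (n + 1)) w ≤ C * (∫⁻ z, h z) ^ n

/-- The critical estimate with a Lorentz-type improvement: the layers `h k` of a dyadic
decomposition `∑ 2 ^ k * h k` contribute to the right-hand side in `ℓ^(n+2)`. -/
def LorentzBound (n : ℕ) (C : ℝ≥0∞) : Prop :=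
  ∀ h : ℤ → (Fin n → ℝ) × ℝ → ℝ≥0∞, (∀ k, Measurable (h k)) → (∀ k z, h k z ≤ 1) →
    ∫⁻ z, affineRadon (fun z => ∑' k, 2 ^ k * h k z) z ^ (n + 2) ≤
      C * ∑' k, (2 ^ k) ^ (n + 2) * (∫⁻ z, h k z) ^ (n + 1)

theorem StrongTypeBound.pencilBound_succ {C : ℝ≥0∞} (hC : StrongTypeBound n C) :
    PencilBound (n + 1) (C * (3 ^ critExp n) ^ (n + 1)) := by
  intro h hh h1 w
  set hw : (Fin (n + 1) → ℝ) × ℝ → ℝ≥0∞ := fun z => h (z + (-w.1, w.2)) with hw_def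
  have hw_meas : Measurable hw := by fun_prop
  calc affineRadon (fun z => affineRadon h z ^ (n + 2)) w
      = ∫⁻ m, affineRadon hw (m, 0) ^ (n + 2) := by
        simp_rw [hw_def, affineRadon_translate]
        rfl
    _ = ∫⁻ z, affineRadon (centralProj hw) z ^ (n + 2) := by
        rw [← (measurePreserving_vecCons n).lintegral_comp (by fun_prop)]
        simp_rw [affineRadon_vecCons_zero hw_meas]
        exact lintegral_prod_swap (fun z => affineRadon (centralProj hw) z ^ (n + 2))
    _ ≤ C * (∫⁻ q, centralProj hw q ^ critExp n) ^ (n + 1) := hC _ (by fun_prop)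
    _ ≤ C * (3 ^ critExp n * ∫⁻ z, hw z) ^ (n + 1) := by
        gcongr
        exact lintegral_centralProj_rpow_le hw_meas fun z => h1 _
    _ = _ := by rw [lintegral_add_right_eq_self h, mul_pow, mul_assoc]

theorem PencilBound.exists_lorentzBound {C : ℝ≥0∞} (hC : PencilBound n C) (hC_top : C ≠ ⊤) :
    ∃ C' ≠ ⊤, LorentzBound n C' := by
  obtain ⟨r, hr1, hr⟩ := exists_pow_mul_two_eq_one (n := 2 * (n + 1) * (n + 1)) (by positivity)
  refine ⟨((n + 1 : ℕ) + 1) * (1 - r)⁻¹ ^ (n + 1) * (C * ((1 - r ^ (n + 1))⁻¹ * 2)), ?_,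
    fun h hh h1 => ?_⟩
  · have : 1 - r ≠ 0 := (tsub_pos_of_lt hr1).ne'
    have : 1 - r ^ (n + 1) ≠ 0 := (tsub_pos_of_lt (pow_lt_one' hr1 n.succ_ne_zero)).ne'
    finiteness
  have bilinear (k j : ℤ) : ∫⁻ z, affineRadon (h k) z * affineRadon (h j) z ^ (n + 1) ≤
      C * ((∫⁻ z, h k z) * (∫⁻ z, h j z) ^ n) := by
    calc _ = ∫⁻ w, h k w * affineRadon (fun z => affineRadon (h j) z ^ (n + 1)) (-w.1, w.2) :=
          lintegral_affineRadon_mul (hh k) (by fun_prop)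
      _ ≤ ∫⁻ w, h k w * (C * (∫⁻ z, h j z) ^ n) := by
        gcongr
        exact hC _ (hh j) (h1 j) _
      _ = _ := by
        rw [lintegral_mul_const _ (hh k)]
        ring
  simp_rw [affineRadon_tsum fun k => (hh k).const_mul (2 ^ k), affineRadon_const_mul (hh _)]
  exact lintegral_tsum_zpow_mul_pow_le hr (fun k => measurable_affineRadon (hh k)) bilinear

theorem tsum_zpow_rpow_critExp_mul_indicator_Ici_le (n : ℕ) (x : ℝ≥0∞) :
    ∑' k : ℤ, (2 ^ k) ^ critExp n * (Set.Ici (2 ^ k)).indicator 1 x ≤ (2 * x) ^ critExp n := by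
  refine (tsum_zpow_rpow_mul_indicator_le (one_le_critExp n) _ x).trans ?_
  gcongr
  · exact (critExp_pos n).le
  · exact tsum_zpow_indicator_Ici_le x

theorem LorentzBound.strongTypeBound {C : ℝ≥0∞} (hC : LorentzBound n C) :
    StrongTypeBound n (2 ^ (n + 2) * C * 2 ^ (n + 2)) := by
  intro F hF
  let layer (k : ℤ) (z : (Fin n → ℝ) × ℝ) : ℝ≥0∞ := (Set.Ici (2 ^ k)).indicator 1 (F z)
  have layer_meas (k : ℤ) : Measurable (layer k) :=
    (measurable_one.indicator measurableSet_Ici).comp hF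
  have layer_le_one (k : ℤ) (z : (Fin n → ℝ) × ℝ) : layer k z ≤ 1 :=
    Set.indicator_le_self' (by simp) _
  have layers_le : ∑' k, (2 ^ k) ^ critExp n * ∫⁻ z, layer k z ≤
      2 ^ critExp n * ∫⁻ z, F z ^ critExp n := by
    simp_rw [← lintegral_const_mul _ (layer_meas _)]
    rw [← lintegral_tsum (by fun_prop), ← lintegral_const_mul _ (by fun_prop)]
    refine lintegral_mono fun z => ?_
    rw [← ENNReal.mul_rpow_of_nonneg _ _ (critExp_pos n).le]
    exact tsum_zpow_rpow_critExp_mul_indicator_Ici_le n (F z)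
  calc ∫⁻ z, affineRadon F z ^ (n + 2)
      ≤ ∫⁻ z, (2 * affineRadon (fun z => ∑' k, 2 ^ k * layer k z) z) ^ (n + 2) := by
        gcongr with z
        rw [← congrFun (affineRadon_const_mul (by fun_prop) 2) z]
        exact affineRadon_mono (fun z => le_two_mul_tsum_zpow_indicator_Ici (F z)) z
    _ ≤ 2 ^ (n + 2) * (C * ∑' k, (2 ^ k) ^ (n + 2) * (∫⁻ z, layer k z) ^ (n + 1)) := by
        simp_rw [mul_pow]
        rw [lintegral_const_mul _ (by fun_prop)]
        gcongr
        exact hC layer layer_meas layer_le_one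
    _ = 2 ^ (n + 2) * C * ∑' k, ((2 ^ k) ^ critExp n * ∫⁻ z, layer k z) ^ (n + 1) := by
        simp_rw [mul_pow, rpow_critExp_pow, mul_assoc]
    _ ≤ 2 ^ (n + 2) * C * (∑' k, (2 ^ k) ^ critExp n * ∫⁻ z, layer k z) ^ (n + 1) := by
        gcongr
        rw [pow_succ]
        exact tsum_pow_succ_le_of_le ENNReal.le_tsum n
    _ ≤ 2 ^ (n + 2) * C * (2 ^ critExp n * ∫⁻ z, F z ^ critExp n) ^ (n + 1) := by gcongr
    _ = _ := by rw [mul_pow, rpow_critExp_pow, mul_assoc (2 ^ (n + 2) * C)]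

theorem pencilBound_zero : PencilBound 0 1 := by
  intro h _ h1 w
  have affineRadon_le_one {f : (Fin 0 → ℝ) × ℝ → ℝ≥0∞} (hf : ∀ z, f z ≤ 1) (z) :
      affineRadon f z ≤ 1 := by
    calc affineRadon f z ≤ ∫⁻ _ : Fin 0 → ℝ, 1 := lintegral_mono fun y => hf _
      _ = 1 := by simp [volume_pi]
  simpa using affineRadon_le_one (affineRadon_le_one h1) w

theorem exists_lorentzBound (n : ℕ) : ∃ C ≠ ⊤, LorentzBound n C := by
  suffices ∃ C ≠ ⊤, PencilBound n C by
    obtain ⟨C, hC_top, hC⟩ := this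
    exact hC.exists_lorentzBound hC_top
  induction n with
  | zero => exact ⟨1, one_ne_top, pencilBound_zero⟩
  | succ n ih =>
    obtain ⟨C, hC_top, hC⟩ := ih
    obtain ⟨C', hC'_top, hC'⟩ := hC.exists_lorentzBound hC_top
    have : 0 ≤ critExp n := (critExp_pos n).le
    exact ⟨_, by finiteness, hC'.strongTypeBound.pencilBound_succ⟩

end AffineRadon

section Paraboloid

open Matrix

variable {n : ℕ}

instance isAddHaarMeasure_volume_pt : (volume : Measure (Pt n)).IsAddHaarMeasure :=
  Measure.prod.instIsAddHaarMeasure volume volume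

/-- The formal adjoint of `radonT`, with respect to the pairing `∫ f * g`. -/
def radonAdj (g : Pt n → ℝ≥0∞) (y : Pt n) : ℝ≥0∞ :=
  ∫⁻ t : Vec n, g (y.1 + t, y.2 + ‖t‖ ^ 2)

@[fun_prop]
theorem measurable_radonAdj {g : Pt n → ℝ≥0∞} (hg : Measurable g) : Measurable (radonAdj g) := by
  unfold radonAdj
  fun_prop

theorem pairT_eq_lintegral_mul_radonAdj {f g : Pt n → ℝ≥0∞} (hf : Measurable f)
    (hg : Measurable g) : pairT n g f = ∫⁻ y, f y * radonAdj g y := by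
  calc pairT n g f = ∫⁻ x : Pt n, ∫⁻ t : Vec n, g x * f (x - (t, ‖t‖ ^ 2)) := by
        simp_rw [pairT, radonT]
        congr! 2 with x
        exact (lintegral_const_mul _ (by fun_prop)).symm
    _ = ∫⁻ t : Vec n, ∫⁻ x : Pt n, g x * f (x - (t, ‖t‖ ^ 2)) :=
        lintegral_lintegral_swap (by fun_prop)
    _ = ∫⁻ t : Vec n, ∫⁻ y : Pt n, f y * g (y + (t, ‖t‖ ^ 2)) := by
        refine lintegral_congr fun t => ?_
        rw [← lintegral_add_right_eq_self _ ((t, ‖t‖ ^ 2) : Pt n)]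
        simp_rw [add_sub_cancel_right, mul_comm]
    _ = ∫⁻ y : Pt n, ∫⁻ t : Vec n, f y * g (y + (t, ‖t‖ ^ 2)) :=
        lintegral_lintegral_swap (by fun_prop)
    _ = ∫⁻ y, f y * radonAdj g y :=
        lintegral_congr fun y => lintegral_const_mul _ (by fun_prop)

/-- The shear that carries the hyperplanes of slope `-2 • y.1` to the translates by `y.1` of the
paraboloid `x.2 = ‖x.1‖ ^ 2`. -/
def parabolicShear (z : (Fin n → ℝ) × ℝ) : Pt n :=
  (WithLp.toLp 2 z.1, z.2 + ‖(WithLp.toLp 2 z.1 : Vec n)‖ ^ 2)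

theorem measurePreserving_parabolicShear : MeasurePreserving (parabolicShear (n := n)) :=
  (PiLp.volume_preserving_toLp (Fin n)).skew_product
    (g := fun v s => s + ‖(WithLp.toLp 2 v : Vec n)‖ ^ 2) (by fun_prop)
    (.of_forall fun _ => map_add_right_eq_self _ _)

/-- The parameters of the hyperplane that `parabolicShear` carries to the paraboloid with vertex
`y`. -/
def paraboloidParam (y : Pt n) : (Fin n → ℝ) × ℝ :=
  ((-2 : ℝ) • WithLp.ofLp y.1, y.2 + ‖y.1‖ ^ 2)

theorem radonAdj_eq_affineRadon {g : Pt n → ℝ≥0∞} (hg : Measurable g) (y : Pt n) :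
    radonAdj g y = affineRadon (g ∘ parabolicShear) (paraboloidParam y) := by
  have norm_sub_sq (v : Fin n → ℝ) : y.2 + ‖WithLp.toLp 2 v - y.1‖ ^ 2 =
      ((-2 : ℝ) • WithLp.ofLp y.1) ⬝ᵥ v + (y.2 + ‖y.1‖ ^ 2) + ‖(WithLp.toLp 2 v : Vec n)‖ ^ 2 := by
    rw [norm_sub_sq_real, EuclideanSpace.inner_eq_star_dotProduct, smul_dotProduct]
    simp only [star_trivial, smul_eq_mul]
    ring
  rw [radonAdj, ← lintegral_sub_right_eq_self _ y.1,
    ← (PiLp.volume_preserving_toLp (Fin n)).lintegral_comp (by fun_prop)]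
  simp_rw [add_sub_cancel, norm_sub_sq]
  rfl

theorem lintegral_comp_paraboloidParam_le {G : (Fin n → ℝ) × ℝ → ℝ≥0∞} (hG : Measurable G) :
    ∫⁻ y, G (paraboloidParam y) ≤ ∫⁻ z, G z := by
  have shear_preserving : MeasurePreserving fun y : Pt n =>
      ((WithLp.ofLp y.1, y.2 + ‖y.1‖ ^ 2) : (Fin n → ℝ) × ℝ) :=
    (PiLp.volume_preserving_ofLp (Fin n)).skew_product
      (g := fun v s => s + ‖v‖ ^ 2) (by fun_prop)
      (.of_forall fun _ => map_add_right_eq_self _ _)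
  have map_smul_le : (volume : Measure (Fin n → ℝ)).map ((-2 : ℝ) • ·) ≤ volume := by
    rw [Measure.map_addHaar_smul _ (by norm_num)]
    refine Measure.le_iff'.2 fun s => mul_le_of_le_one_left' ?_
    rw [ENNReal.ofReal_le_one, abs_inv, abs_pow]
    exact inv_le_one_of_one_le₀ (one_le_pow₀ (by norm_num))
  calc ∫⁻ y, G (paraboloidParam y) = ∫⁻ z : (Fin n → ℝ) × ℝ, G ((-2 : ℝ) • z.1, z.2) :=
        shear_preserving.lintegral_comp (f := fun z => G ((-2 : ℝ) • z.1, z.2)) (by fun_prop)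
    _ = ∫⁻ s : ℝ, ∫⁻ v, G (v, s) ∂(volume : Measure (Fin n → ℝ)).map ((-2 : ℝ) • ·) := by
        rw [Measure.volume_eq_prod, lintegral_prod_symm _ (by fun_prop)]
        refine lintegral_congr fun s => ?_
        rw [lintegral_map (f := fun v => G (v, s)) (by fun_prop) (by fun_prop)]
    _ ≤ ∫⁻ s : ℝ, ∫⁻ v, G (v, s) := by gcongr
    _ = _ := by rw [Measure.volume_eq_prod, lintegral_prod_symm _ (by fun_prop)]

theorem LorentzBound.lintegral_radonAdj_pow_le {C : ℝ≥0∞} (hC : LorentzBound n C)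
    {F : ℤ → Set (Pt n)} (hF : ∀ l, MeasurableSet (F l)) :
    ∫⁻ y, radonAdj (fun x => ∑' l, 2 ^ l * (F l).indicator 1 x) y ^ (n + 2) ≤
      C * ∑' l, ((2 ^ l) ^ critExp n * volume (F l)) ^ (n + 1) := by
  let layer (l : ℤ) (z : (Fin n → ℝ) × ℝ) : ℝ≥0∞ := (F l).indicator 1 (parabolicShear z)
  have layer_meas (l : ℤ) : Measurable (layer l) :=
    (measurable_one.indicator (hF l)).comp measurePreserving_parabolicShear.measurable
  have lintegral_layer (l : ℤ) : ∫⁻ z, layer l z = volume (F l) := by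
    rw [← lintegral_indicator_one (hF l)]
    exact measurePreserving_parabolicShear.lintegral_comp (measurable_one.indicator (hF l))
  simp_rw [radonAdj_eq_affineRadon (measurable_tsum_zpow_mul_indicator hF)]
  calc _ ≤ ∫⁻ z, affineRadon (fun z => ∑' l, 2 ^ l * layer l z) z ^ (n + 2) :=
        lintegral_comp_paraboloidParam_le
          (G := fun z => affineRadon (fun z => ∑' l, 2 ^ l * layer l z) z ^ (n + 2)) (by fun_prop)
    _ ≤ C * ∑' l, (2 ^ l) ^ (n + 2) * (∫⁻ z, layer l z) ^ (n + 1) :=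
        hC layer layer_meas fun l z => Set.indicator_le_self' (by simp) _
    _ = _ := by simp_rw [lintegral_layer, mul_pow, rpow_critExp_pow]

end Paraboloid

section Gain

theorem LpN_rpow {p : ℝ} (hp : p ≠ 0) {n : ℕ} (f : Pt n → ℝ≥0∞) :
    LpN n p f ^ p = ∫⁻ x, f x ^ p := by
  rw [LpN, one_div, ENNReal.rpow_inv_rpow hp]

theorem LorentzBound.lintegral_radonAdj_pow_le_of_forall_le {n : ℕ} {C : ℝ≥0∞}
    (hC : LorentzBound n C) {F : ℤ → Set (Pt n)} (hF : ∀ l, MeasurableSet (F l))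
    {fs : Pt n → ℝ≥0∞} (hfs : fs = fun x => ∑' l, 2 ^ l * (F l).indicator 1 x) {η : ℝ≥0∞}
    (hη : ∀ l, 2 ^ l * volume (F l) ^ (critExp n)⁻¹ ≤ η * LpN n (critExp n) fs) :
    ∫⁻ y, radonAdj fs y ^ (n + 2) ≤
      C * (((η * LpN n (critExp n) fs) ^ critExp n) ^ n * LpN n (critExp n) fs ^ critExp n) := by
  have layer_le (l : ℤ) : (2 ^ l) ^ critExp n * volume (F l) ≤
      (η * LpN n (critExp n) fs) ^ critExp n := by
    rw [← ENNReal.rpow_inv_rpow (critExp_pos n).ne' (volume (F l)),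
      ← ENNReal.mul_rpow_of_nonneg _ _ (critExp_pos n).le]
    exact ENNReal.rpow_le_rpow (hη l) (critExp_pos n).le
  calc ∫⁻ y, radonAdj fs y ^ (n + 2)
      ≤ C * ∑' l, ((2 ^ l) ^ critExp n * volume (F l)) ^ (n + 1) := by
        rw [hfs]
        exact hC.lintegral_radonAdj_pow_le hF
    _ ≤ C * (((η * LpN n (critExp n) fs) ^ critExp n) ^ n *
          ∑' l, (2 ^ l) ^ critExp n * volume (F l)) := by
        gcongr
        exact tsum_pow_succ_le_of_le layer_le n
    _ ≤ _ := by
        gcongr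
        rw [LpN_rpow (critExp_pos n).ne', hfs]
        exact tsum_zpow_rpow_mul_measure_le volume hF (one_le_critExp n)

theorem rpow_pow_mul_rpow_critExp (n : ℕ) (η A : ℝ≥0∞) :
    ((η * A) ^ critExp n) ^ n * A ^ critExp n = (η ^ ((n : ℝ) / (n + 1)) * A) ^ (n + 2) := by
  have exponent : critExp n * n = n / (n + 1) * (n + 2 : ℕ) := by
    rw [critExp]
    push_cast
    ring
  rw [ENNReal.mul_rpow_of_nonneg _ _ (critExp_pos n).le, mul_pow, mul_assoc, ← pow_succ,
    rpow_critExp_pow, ← ENNReal.rpow_mul_natCast, exponent, ENNReal.rpow_mul_natCast, mul_pow]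

theorem LorentzBound.pairT_le {n : ℕ} {C : ℝ≥0∞} (hC : LorentzBound n C)
    {F : ℤ → Set (Pt n)} (hF : ∀ l, MeasurableSet (F l)) {f fs : Pt n → ℝ≥0∞} (hf : Measurable f)
    (hfs : fs = fun x => ∑' l, 2 ^ l * (F l).indicator 1 x) {η : ℝ≥0∞}
    (hη : ∀ l, 2 ^ l * volume (F l) ^ (critExp n)⁻¹ ≤ η * LpN n (critExp n) fs) :
    pairT n fs f ≤ C ^ ((n : ℝ) + 2)⁻¹ * η ^ ((n : ℝ) / (n + 1)) *
      LpN n (critExp n) f * LpN n (critExp n) fs := by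
  set A := LpN n (critExp n) fs
  have hfs_meas : Measurable fs := hfs ▸ measurable_tsum_zpow_mul_indicator hF
  have radonAdj_bound : (∫⁻ y, radonAdj fs y ^ ((n : ℝ) + 2)) ^ (1 / ((n : ℝ) + 2)) ≤
      C ^ ((n : ℝ) + 2)⁻¹ * (η ^ ((n : ℝ) / (n + 1)) * A) := by
    have exponent : (n : ℝ) + 2 = (n + 2 : ℕ) := by push_cast; rfl
    rw [exponent, one_div, ← ENNReal.pow_rpow_inv_natCast (n := n + 2) (by omega) (_ * A),
      ← ENNReal.mul_rpow_of_nonneg _ _ (by positivity), ← rpow_pow_mul_rpow_critExp]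
    simp_rw [ENNReal.rpow_natCast]
    gcongr
    exact hC.lintegral_radonAdj_pow_le_of_forall_le hF hfs hη
  calc pairT n fs f = ∫⁻ y, f y * radonAdj fs y := pairT_eq_lintegral_mul_radonAdj hf hfs_meas
    _ ≤ LpN n (critExp n) f * (∫⁻ y, radonAdj fs y ^ ((n : ℝ) + 2)) ^ (1 / ((n : ℝ) + 2)) :=
      ENNReal.lintegral_mul_le_Lp_mul_Lq volume (holderConjugate_critExp n) hf.aemeasurable
        (measurable_radonAdj hfs_meas).aemeasurable
    _ ≤ LpN n (critExp n) f * (C ^ ((n : ℝ) + 2)⁻¹ * (η ^ ((n : ℝ) / (n + 1)) * A)) := by gcongr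
    _ = _ := by ring

end Gain

theorem stmt19_general (d : ℕ) (hd : 1 ≤ d) :
    ∃ C : ℝ, 0 < C ∧
      ∀ F : ℤ → Set (Pt (d - 1)), (∀ l, MeasurableSet (F l)) →
      ∀ f fs : Pt (d - 1) → ℝ≥0∞, Measurable f →
        (fs = fun x => ∑' l : ℤ, (2 : ℝ≥0∞) ^ l * (F l).indicator 1 x) →
      ∀ η : ℝ, 0 ≤ η →
        (∀ l : ℤ, (2 : ℝ≥0∞) ^ l * volume (F l) ^ ((d : ℝ) / (d + 1)) ≤
          ENNReal.ofReal η * LpN (d - 1) (((d : ℝ) + 1) / d) fs) →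
        pairT (d - 1) fs f ≤
          ENNReal.ofReal (C * η ^ (((d : ℝ) - 1) / d)) * LpN (d - 1) (((d : ℝ) + 1) / d) f *
            LpN (d - 1) (((d : ℝ) + 1) / d) fs := by
  generalize hn : d - 1 = n
  have d_eq : (d : ℝ) = n + 1 := by exact_mod_cast (by omega : d = n + 1)
  have exp_eq : ((d : ℝ) + 1) / d = critExp n := by rw [critExp, d_eq]; ring
  have exp_inv_eq : (d : ℝ) / (d + 1) = (critExp n)⁻¹ := by rw [← exp_eq, inv_div]
  have gain_eq : ((d : ℝ) - 1) / d = n / (n + 1) := by rw [d_eq, add_sub_cancel_right]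
  simp_rw [exp_eq, exp_inv_eq, gain_eq]
  obtain ⟨C, hC_top, hC⟩ := exists_lorentzBound n
  have K_ne_top : C ^ ((n : ℝ) + 2)⁻¹ + 1 ≠ ⊤ := by
    have : 0 ≤ ((n : ℝ) + 2)⁻¹ := by positivity
    finiteness
  refine ⟨_, ENNReal.toReal_pos (by simp) K_ne_top, fun F hF f fs hf hfs η hη0 hη => ?_⟩
  rw [ENNReal.ofReal_mul ENNReal.toReal_nonneg, ENNReal.ofReal_toReal K_ne_top,
    ← ENNReal.ofReal_rpow_of_nonneg hη0 (by positivity)]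
  refine (hC.pairT_le hF hf hfs hη).trans ?_
  gcongr
  exact le_self_add

/-- strong type inequality with gain: if
`f = Σ_k 2^k χ_{E_k}`, `f* = Σ_l 2^l χ_{F_l}` with pairwise disjoint layers and
`2^l |F_l|^{d/(d+1)} ≤ η ‖f*‖_{(d+1)/d}` for all `l`, then
`⟨Tf, f*⟩ ≤ C η^γ ‖f‖_{(d+1)/d} ‖f*‖_{(d+1)/d}`. -/
theorem stmt19 (d : ℕ) (hd : 2 ≤ d) :
    ∃ γ C : ℝ, 0 < γ ∧ 0 < C ∧
      ∀ (E F : ℤ → Set (Pt (d - 1))),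
        (∀ k, MeasurableSet (E k)) → (∀ l, MeasurableSet (F l)) →
        Pairwise (Function.onFun Disjoint E) → Pairwise (Function.onFun Disjoint F) →
      ∀ (f fs : Pt (d - 1) → ℝ≥0∞),
        (f = fun x => ∑' k : ℤ, (2 : ℝ≥0∞) ^ k * (E k).indicator 1 x) →
        (fs = fun x => ∑' l : ℤ, (2 : ℝ≥0∞) ^ l * (F l).indicator 1 x) →
        LpN (d - 1) (((d : ℝ) + 1) / d) f < ⊤ →
        LpN (d - 1) (((d : ℝ) + 1) / d) fs < ⊤ →
      ∀ (η : ℝ), 0 < η →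
        (∀ l : ℤ, (2 : ℝ≥0∞) ^ l * volume (F l) ^ ((d : ℝ) / (d + 1)) ≤
          ENNReal.ofReal η * LpN (d - 1) (((d : ℝ) + 1) / d) fs) →
        pairT (d - 1) fs f ≤
          ENNReal.ofReal (C * η ^ γ) * LpN (d - 1) (((d : ℝ) + 1) / d) f *
            LpN (d - 1) (((d : ℝ) + 1) / d) fs := by
  obtain ⟨C, hC, pairT_le⟩ := stmt19_general d (by omega)
  exact ⟨((d : ℝ) - 1) / d, C, div_pos (sub_pos.2 (by exact_mod_cast hd)) (by positivity), hC,
    fun E F hE hF _ _ f fs hf hfs _ _ η hη =>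
      pairT_le F hF f fs (hf ▸ measurable_tsum_zpow_mul_indicator hE) hfs η hη.le⟩
end
end
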